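/- arXiv:2401.02623 — 2 statements merged into one kernel-verified Lean document; each statement's English description precedes it below -/
import Mathlib

section
/- For every β with 0 < β < 4/3 there exist constants c > 0 and δ₀ > 0, and for every bounded interval I ⊂ ℝ a constant C > 0 (depending only on β and I), such that the following holds for all δ ∈ (0, δ₀). Let φ : [0,∞) × ℝ → ℝ be a smooth global solution of the Sine–Gordon equation ∂ₜ²φ − ∂ₓ²φ + sin φ = 0 such that u(t,x) := φ(t,x) − K(x) is odd in x for every t ≥ 0, such that for every t ≥ 0 the functions u(t,·), ∂ₓu(t,·) and ∂ₜu(t,·) are square integrable, and such that at time t = 0 one has (∫_ℝ [u(0,x)² + (∂ₓu(0,x))² + (∂ₜu(0,x))²] dx)^{1/2} ≤ δ. Then, with T_max := exp(c δ^{−β}), one has ∫₀^{T_max} ∫_I (1 + t)^{−1} [ (∂ₜu(t,x))² + (∂ₓu(t,x))² + u(t,x)² ] dx dt ≤ C δ². -/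
/-!
The perturbation `u` of the kink vanishes at `x = 0` by oddness, so it is studied on the
half-line `x ≥ 0`, where the linearised operator is `-∂ₓ² + 1 - 2 sech²`. It has no odd
eigenfunction, but the odd threshold resonance `tanh`, which is the obstruction to a plain
virial estimate.

*Uniform smallness.* The Bogomolny quantity `b = φₓ - 2 sin (φ / 2)` vanishes for the kink, and
`uₜ² + b²` is the density of a conserved energy. Its propagation in light cones
(`Sol.cone_energy`) and the first order equation `b` provides for `u` (`ode_bound`) bound `u` in
the energy space and in `L^∞` by `E = 100 δ` for all `t ≥ 0` (`Sol.small`).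

*Virial estimate.* Put `p = uₓ - (sech² / tanh) u`, which is zero exactly when `u` is a multiple
of the resonance. For a bump `cut A` of width `A` and the weight `ψ` of size at most `A` that
solves `ψ' + 2 (sech² / tanh) ψ = cut A`, the time derivative of
`∫ (ψ p + cut · u / 2) uₜ` is at most `-c ∫ cut · p² + C E² / A²` plus nonlinear terms
(`Sol.virial_slice`). The nonlinear terms are quartic, up to exponentially localised cubic ones;
since `cut · u²` is bounded pointwise by `E² / A + ∫ cut |u| |p|` (`Sol.sup_le`), they are absorbed
at the cost of `C E⁶` (`Sol.virial_closed`). Integration in time gives (`Sol.integral_dis_le`)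
`∫_{t₀}^{t₁} ∫ cut · p² ≤ C (A E² + (t₁ - t₀) (E² / A² + E⁶))`,
and recovering `u`, `uₓ` and `uₜ` on a fixed interval costs one more factor `A`
(`Sol.integral_loc_le`).

*Dyadic summation.* On `[2 ^ k - 1, 2 ^ (k + 1) - 1]` the choice `A ∼ (k + 1)²` and the weight
`(1 + t)⁻¹ ≤ 2⁻ᵏ` give a bound
`C ((k + 1)⁴ 2⁻ᵏ E² + (k + 1)⁻² E² + (k + 1)² E⁶)`. Summing over
`k < n` yields `C (E² + n³ E⁶)` (`Sol.dyadic_sum`), and `n ∼ δ ^ (-β)` intervals reach the time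
`exp (δ ^ (-β))`. Since `3 β < 4`, the last term is again of size `δ²`.
-/

open MeasureTheory Real Filter

/-- The static kink of the Sine-Gordon equation. -/
noncomputable def K (x : ℝ) : ℝ := 4 * Real.arctan (Real.exp x)

namespace SineGordonKink

noncomputable section

/-! ### Hyperbolic functions and the kink -/

/-- The hyperbolic secant. -/
def sech (x : ℝ) : ℝ := (cosh x)⁻¹

lemma sech_pos (x : ℝ) : 0 < sech x := inv_pos.2 (cosh_pos x)

lemma sech_le_one (x : ℝ) : sech x ≤ 1 := inv_le_one_of_one_le₀ (one_le_cosh x)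

lemma tanh_sq_add (x : ℝ) : tanh x ^ 2 + sech x ^ 2 = 1 := by
  have h := cosh_pos x
  rw [tanh_eq_sinh_div_cosh, sech]
  field_simp
  rw [cosh_sq]

lemma hasDerivAt_tanh' (x : ℝ) : HasDerivAt tanh (sech x ^ 2) x := by
  have h := cosh_pos x
  have h1 : HasDerivAt (fun y => sinh y / cosh y) _ x :=
    (hasDerivAt_sinh x).div (hasDerivAt_cosh x) h.ne'
  have h2 : tanh = fun y => sinh y / cosh y := by ext y; exact tanh_eq_sinh_div_cosh y
  rw [h2]
  convert h1 using 1
  rw [sech]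
  field_simp
  rw [cosh_sq]; ring

lemma hasDerivAt_sech (x : ℝ) : HasDerivAt sech (-(sech x * tanh x)) x := by
  have h := cosh_pos x
  have h1 : HasDerivAt (fun y => (cosh y)⁻¹) _ x := (hasDerivAt_cosh x).inv h.ne'
  refine h1.congr_deriv ?_
  simp only [sech, tanh_eq_sinh_div_cosh]
  field_simp

lemma continuous_tanh' : Continuous tanh :=
  continuous_iff_continuousAt.2 fun x => (hasDerivAt_tanh' x).continuousAt

lemma continuous_sech : Continuous sech :=
  continuous_iff_continuousAt.2 fun x => (hasDerivAt_sech x).continuousAt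

lemma tanh_pos' {x : ℝ} (hx : 0 < x) : 0 < tanh x := by
  rw [tanh_eq_sinh_div_cosh]; exact div_pos (sinh_pos_iff.2 hx) (cosh_pos x)

lemma tanh_nonneg' {x : ℝ} (hx : 0 ≤ x) : 0 ≤ tanh x := by
  rw [tanh_eq_sinh_div_cosh]; exact div_nonneg (sinh_nonneg_iff.2 hx) (cosh_pos x).le

lemma tanh_mono' : Monotone tanh :=
  monotone_of_hasDerivAt_nonneg hasDerivAt_tanh' fun x => by positivity

lemma one_sub_tanh_le {x : ℝ} (hx : 0 ≤ x) : 1 - tanh x ≤ sech x := by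
  have h := cosh_pos x
  rw [tanh_eq_sinh_div_cosh, sech]
  field_simp
  rw [cosh_sub_sinh]
  simpa using hx

lemma mul_sech_le_tanh {x : ℝ} (hx : 0 ≤ x) : x * sech x ≤ tanh x := by
  rw [tanh_eq_sinh_div_cosh, sech, ← div_eq_mul_inv]
  have h := cosh_pos x
  gcongr
  exact self_le_sinh_iff.2 hx

/-- The polynomially weighted decay of the hyperbolic secant. -/
lemma sech_weight_le {x : ℝ} (hx : 0 ≤ x) : (1 + x) * sech x ≤ 32 / (1 + x ^ 2) := by
  have h := cosh_pos x
  have h1 : 1 + x + x ^ 2 / 2 + x ^ 3 / 6 ≤ exp x := by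
    have := Real.sum_le_exp_of_nonneg hx 4
    simp [Finset.sum_range_succ, Nat.factorial] at this
    linarith
  have h2 : exp x ≤ 2 * cosh x := by
    rw [cosh_eq]; have := exp_pos (-x); linarith
  rw [sech, ← div_eq_mul_inv, div_le_div_iff₀ h (by positivity)]
  nlinarith [pow_nonneg hx 2, pow_nonneg hx 3]

lemma K_pos (x : ℝ) : 0 < K x := by
  have : 0 < arctan (exp x) := arctan_pos.2 (exp_pos x)
  unfold K; linarith

lemma K_lt (x : ℝ) : K x < 2 * π := by
  have : arctan (exp x) < π / 2 := arctan_lt_pi_div_two _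
  unfold K; linarith

lemma sin_two_arctan_exp (x : ℝ) : sin (2 * arctan (exp x)) = sech x := by
  have h := exp_pos x
  rw [sin_two_mul, sin_arctan, cos_arctan, sech, cosh_eq, exp_neg]
  have h1 : √(1 + exp x ^ 2) ^ 2 = 1 + exp x ^ 2 := sq_sqrt (by positivity)
  have h2 : 0 < √(1 + exp x ^ 2) := by positivity
  field_simp
  rw [h1]; ring

lemma cos_two_arctan_exp (x : ℝ) : cos (2 * arctan (exp x)) = - tanh x := by
  have h := exp_pos x
  rw [cos_two_mul, cos_arctan, tanh_eq, exp_neg]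
  have h1 : √(1 + exp x ^ 2) ^ 2 = 1 + exp x ^ 2 := sq_sqrt (by positivity)
  have h2 : 0 < √(1 + exp x ^ 2) := by positivity
  field_simp
  rw [h1]; field_simp; ring

lemma sin_half_K (x : ℝ) : sin (K x / 2) = sech x := by
  rw [← sin_two_arctan_exp]; congr 1; unfold K; ring

lemma cos_half_K (x : ℝ) : cos (K x / 2) = - tanh x := by
  rw [← cos_two_arctan_exp]; congr 1; unfold K; ring

lemma sin_K (x : ℝ) : sin (K x) = -(2 * sech x * tanh x) := by
  have : K x = 2 * (K x / 2) := by ring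
  rw [this, sin_two_mul, sin_half_K, cos_half_K]; ring

lemma cos_K (x : ℝ) : cos (K x) = 1 - 2 * sech x ^ 2 := by
  have : K x = 2 * (K x / 2) := by ring
  rw [this, cos_two_mul, cos_half_K]
  have := tanh_sq_add x
  linear_combination 2 * this

lemma hasDerivAt_K (x : ℝ) : HasDerivAt K (2 * sech x) x := by
  have h := exp_pos x
  have h1 : HasDerivAt (fun y => 4 * arctan (exp y)) _ x := ((hasDerivAt_exp x).arctan).const_mul 4
  refine h1.congr_deriv ?_
  simp only [sech, cosh_eq, exp_neg]
  field_simp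
  ring

lemma contDiff_K : ContDiff ℝ (⊤ : ℕ∞) K := by
  exact contDiff_const.mul (contDiff_arctan.comp contDiff_exp)

lemma continuous_K : Continuous K := contDiff_K.continuous

/-! ### Calculus lemmas -/

lemma hasDerivAt_max_sq (z : ℝ) :
    HasDerivAt (fun y : ℝ => (max y 0) ^ 2) (2 * max z 0) z := by
  rcases lt_trichotomy z 0 with h | h | h
  · have : (fun y : ℝ => (max y 0) ^ 2) =ᶠ[nhds z] fun _ => 0 := by
      filter_upwards [Iio_mem_nhds h] with y hy
      simp [max_eq_right (le_of_lt (by simpa using hy))]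
    rw [max_eq_right h.le, mul_zero]
    exact (hasDerivAt_const z (0 : ℝ)).congr_of_eventuallyEq this
  · subst h
    rw [hasDerivAt_iff_isLittleO_nhds_zero]
    simp only [zero_add, max_self, smul_eq_mul, mul_zero, sub_zero, ne_eq, OfNat.ofNat_ne_zero,
      not_false_eq_true, zero_pow]
    have h1 : (fun h : ℝ => (max h 0) ^ 2) =O[nhds 0] fun h : ℝ => h ^ 2 := by
      refine Asymptotics.IsBigO.of_bound 1 (Eventually.of_forall fun h => ?_)
      rw [norm_pow, norm_pow, one_mul]
      gcongr
      rcases le_total h 0 with hh | hh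
      · simp [max_eq_right hh]
      · simp [max_eq_left hh]
    exact h1.trans_isLittleO (by simpa using Asymptotics.isLittleO_pow_id (n := 2) one_lt_two)
  · have : (fun y : ℝ => (max y 0) ^ 2) =ᶠ[nhds z] fun y => y ^ 2 := by
      filter_upwards [Ioi_mem_nhds h] with y hy
      simp [max_eq_left (le_of_lt (by simpa using hy))]
    rw [max_eq_left h.le]
    have h1 := hasDerivAt_pow 2 z
    simp only [Nat.cast_ofNat, Nat.add_one_sub_one, pow_one] at h1
    exact h1.congr_of_eventuallyEq this

/-- The increment in time of a spatial integral, by Fubini. -/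
lemma integral_time_diff {F Ft : ℝ → ℝ → ℝ} (hF : Continuous (Function.uncurry F))
    (hFt : Continuous (Function.uncurry Ft))
    (hd : ∀ t x, HasDerivAt (fun s => F s x) (Ft t x) t) (t₀ t₁ L : ℝ) :
    (∫ x in (0 : ℝ)..L, F t₁ x) - ∫ x in (0 : ℝ)..L, F t₀ x
      = ∫ t in t₀..t₁, ∫ x in (0 : ℝ)..L, Ft t x := by
  have hc : ∀ t, Continuous (F t) := fun t => hF.comp (by fun_prop : Continuous fun x => (t, x))
  rw [← intervalIntegral.integral_sub ((hc t₁).intervalIntegrable _ _)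
    ((hc t₀).intervalIntegrable _ _)]
  rw [intervalIntegral_intervalIntegral_swap]
  · refine intervalIntegral.integral_congr fun x _ => ?_
    have hcx : Continuous fun t => Ft t x := hFt.comp (by fun_prop : Continuous fun t => (t, x))
    exact (intervalIntegral.integral_eq_sub_of_hasDerivAt (fun t _ => hd t x)
      (hcx.intervalIntegrable _ _)).symm
  · have h1 : IntegrableOn (Function.uncurry Ft) (Set.uIcc t₀ t₁ ×ˢ Set.uIcc 0 L)
        (volume.prod volume) :=
      hFt.continuousOn.integrableOn_compact (isCompact_uIcc.prod isCompact_uIcc)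
    exact (h1.mono_set (Set.prod_mono Set.uIoc_subset_uIcc Set.uIoc_subset_uIcc))

/-- Fundamental theorem of calculus as an inequality, for a lower bound of the derivative that is
only required in the interior. -/
lemma integral_le_sub_of_deriv {g g' f : ℝ → ℝ} {a b : ℝ} (hab : a ≤ b)
    (hg : ContinuousOn g (Set.Icc a b))
    (hd : ∀ x, a < x → x < b → HasDerivAt g (g' x) x) (hf : ContinuousOn f (Set.Icc a b))
    (hle : ∀ x, a < x → x < b → f x ≤ g' x) : ∫ x in a..b, f x ≤ g b - g a :=
  intervalIntegral.integral_le_sub_of_hasDeriv_right_of_le hab hg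
    (fun x hx => (hd x hx.1 hx.2).hasDerivWithinAt)
    (hf.integrableOn_compact isCompact_Icc) (fun x hx => hle x hx.1 hx.2)

lemma sub_le_integral_of_deriv {g g' f : ℝ → ℝ} {a b : ℝ} (hab : a ≤ b)
    (hg : ContinuousOn g (Set.Icc a b))
    (hd : ∀ x, a < x → x < b → HasDerivAt g (g' x) x) (hf : ContinuousOn f (Set.Icc a b))
    (hle : ∀ x, a < x → x < b → g' x ≤ f x) : g b - g a ≤ ∫ x in a..b, f x :=
  intervalIntegral.sub_le_integral_of_hasDeriv_right_of_le hab hg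
    (fun x hx => (hd x hx.1 hx.2).hasDerivWithinAt)
    (hf.integrableOn_compact isCompact_Icc) (fun x hx => hle x hx.1 hx.2)

lemma integral_mono_cont {f g : ℝ → ℝ} {a b : ℝ} (hab : a ≤ b) (hf : Continuous f)
    (hg : Continuous g) (h : ∀ x, a ≤ x → x ≤ b → f x ≤ g x) :
    ∫ x in a..b, f x ≤ ∫ x in a..b, g x :=
  intervalIntegral.integral_mono_on hab (hf.intervalIntegrable _ _) (hg.intervalIntegrable _ _)
    fun x hx => h x hx.1 hx.2

/-! ### The virial multiplier -/

/-- A `C¹` bump of width `A`, equal to one at the origin. -/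
def cut (A x : ℝ) : ℝ := (max (1 - x ^ 2 / A ^ 2) 0) ^ 2

/-- The derivative of `cut A`. -/
def cutD (A x : ℝ) : ℝ := 2 * max (1 - x ^ 2 / A ^ 2) 0 * (-(2 * x / A ^ 2))

lemma hasDerivAt_cut (A x : ℝ) : HasDerivAt (cut A) (cutD A x) x := by
  have h1 : HasDerivAt (fun y : ℝ => 1 - y ^ 2 / A ^ 2) (-(2 * x / A ^ 2)) x := by
    have := ((hasDerivAt_pow 2 x).div_const (A ^ 2)).const_sub 1
    simpa using this
  exact (hasDerivAt_max_sq _).comp x h1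

@[fun_prop]
lemma continuous_cut (A : ℝ) : Continuous (cut A) :=
  continuous_iff_continuousAt.2 fun x => (hasDerivAt_cut A x).continuousAt

@[fun_prop]
lemma continuous_cutD (A : ℝ) : Continuous (cutD A) := by
  unfold cutD; fun_prop

lemma cut_nonneg (A x : ℝ) : 0 ≤ cut A x := sq_nonneg _

lemma cut_base_le (A x : ℝ) : max (1 - x ^ 2 / A ^ 2) 0 ≤ 1 := by
  have : 0 ≤ x ^ 2 / A ^ 2 := by positivity
  exact max_le (by linarith) zero_le_one

lemma cut_le_one (A x : ℝ) : cut A x ≤ 1 :=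
  pow_le_one₀ (le_max_right _ _) (cut_base_le A x)

lemma cut_base_eq_zero {A x : ℝ} (hA : 0 < A) (hx : A ≤ x) : max (1 - x ^ 2 / A ^ 2) 0 = 0 := by
  refine max_eq_right ?_
  have : 1 ≤ x ^ 2 / A ^ 2 := by
    rw [le_div_iff₀ (by positivity), one_mul]; gcongr
  linarith

lemma cut_eq_zero {A x : ℝ} (hA : 0 < A) (hx : A ≤ x) : cut A x = 0 := by
  simp [cut, cut_base_eq_zero hA hx]

lemma cut_ge {A x c : ℝ} (hA : 0 < A) (hx : 0 ≤ x) (hc : 0 ≤ c) (hc1 : c ≤ 1) (hxA : x ≤ c * A) :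
    (1 - c ^ 2) ^ 2 ≤ cut A x := by
  have h1 : x ^ 2 / A ^ 2 ≤ c ^ 2 := by
    rw [div_le_iff₀ (by positivity), ← mul_pow]; gcongr
  have h2 : 0 ≤ 1 - c ^ 2 := by nlinarith
  unfold cut
  gcongr
  exact le_max_of_le_left (by linarith)

lemma cut_half {A x : ℝ} (hA : 0 < A) (hx : 0 ≤ x) (hxA : x ≤ A / 2) : 9 / 16 ≤ cut A x := by
  have := cut_ge (c := 1 / 2) hA hx (by norm_num) (by norm_num) (by linarith)
  norm_num at this ⊢; exact this

lemma abs_cutD_le {A x : ℝ} (hA : 0 < A) (hx : 0 ≤ x) : |cutD A x| ≤ 4 / A := by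
  rcases le_total A x with h | h
  · simp [cutD, cut_base_eq_zero hA h]; positivity
  · have h0 : 0 ≤ max (1 - x ^ 2 / A ^ 2) 0 := le_max_right _ _
    have h1 := cut_base_le A x
    rw [cutD, abs_mul, abs_neg, abs_of_nonneg (by positivity), abs_of_nonneg (by positivity)]
    calc 2 * max (1 - x ^ 2 / A ^ 2) 0 * (2 * x / A ^ 2) ≤ 2 * 1 * (2 * A / A ^ 2) := by gcongr
      _ = 4 / A := by field_simp; norm_num

lemma cutD_sq_le {A x : ℝ} (hA : 0 < A) (hx : 0 ≤ x) :
    cutD A x ^ 2 ≤ 16 / A ^ 2 * cut A x := by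
  rcases le_total A x with h | h
  · simp [cutD, cut, cut_base_eq_zero hA h]
  · have h0 : (2 * x / A ^ 2) ^ 2 ≤ (2 * A / A ^ 2) ^ 2 := by gcongr
    have h1 : (2 * A / A ^ 2) ^ 2 = 4 / A ^ 2 := by field_simp; norm_num
    rw [cutD, cut, mul_pow, neg_sq, mul_pow]
    rw [h1] at h0
    calc 2 ^ 2 * max (1 - x ^ 2 / A ^ 2) 0 ^ 2 * (2 * x / A ^ 2) ^ 2
        ≤ 2 ^ 2 * max (1 - x ^ 2 / A ^ 2) 0 ^ 2 * (4 / A ^ 2) := by gcongr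
      _ = _ := by ring

/-- The continuous extension of `tanh x / x`. -/
def tanhSlope (x : ℝ) : ℝ := ∫ y in (0 : ℝ)..1, sech (x * y) ^ 2

@[fun_prop]
lemma continuous_tanhSlope : Continuous tanhSlope := by
  unfold tanhSlope
  refine intervalIntegral.continuous_parametric_intervalIntegral_of_continuous' ?_ 0 1
  have := continuous_sech
  unfold Function.uncurry
  fun_prop

lemma mul_tanhSlope (x : ℝ) : x * tanhSlope x = tanh x := by
  unfold tanhSlope
  rw [intervalIntegral.mul_integral_comp_mul_left (f := fun z => sech z ^ 2)]
  rw [intervalIntegral.integral_eq_sub_of_hasDerivAt (fun z _ => hasDerivAt_tanh' z)]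
  · simp
  · exact (continuous_sech.pow 2).intervalIntegrable _ _

lemma tanhSlope_pos (x : ℝ) : 0 < tanhSlope x := by
  refine intervalIntegral.intervalIntegral_pos_of_pos ?_ (fun y => pow_pos (sech_pos _) 2)
    zero_lt_one
  have := continuous_sech
  exact Continuous.intervalIntegrable (by fun_prop) _ _

/-- The continuous extension to the origin of `tanh⁻³ ∫₀ˣ tanh² cut`. -/
def mulQ (A x : ℝ) : ℝ :=
  (tanhSlope x ^ 3)⁻¹ * ∫ y in (0 : ℝ)..1, y ^ 2 * tanhSlope (x * y) ^ 2 * cut A (x * y)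

/-- The virial weight: the solution of `ψ' = cut - 2 (sech² / tanh) ψ` that is regular at the
origin.  The choice makes the quadratic virial form equal to `∫ ψ' p²`, with
`p = uₓ - (sech² / tanh) u`, up to errors of size `A⁻²`. -/
def psi (A x : ℝ) : ℝ := tanh x * mulQ A x

/-- The derivative of `psi A` on the half-line. -/
def psiD (A x : ℝ) : ℝ := cut A x - 2 * sech x ^ 2 * mulQ A x

@[fun_prop]
lemma continuous_mulQ (A : ℝ) : Continuous (mulQ A) := by
  unfold mulQ
  refine Continuous.mul (Continuous.inv₀ (by fun_prop) fun x => (pow_pos (tanhSlope_pos x) 3).ne') ?_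
  refine intervalIntegral.continuous_parametric_intervalIntegral_of_continuous' ?_ 0 1
  unfold Function.uncurry
  fun_prop

@[fun_prop]
lemma continuous_psi (A : ℝ) : Continuous (psi A) :=
  continuous_tanh'.mul (continuous_mulQ A)

@[fun_prop]
lemma continuous_psiD (A : ℝ) : Continuous (psiD A) := by
  have := continuous_sech
  unfold psiD; fun_prop

lemma mulQ_eq (A x : ℝ) : tanh x ^ 3 * mulQ A x = ∫ y in (0 : ℝ)..x, tanh y ^ 2 * cut A y := by
  have h := tanhSlope_pos x
  have h1 : ∫ y in (0 : ℝ)..x, tanh y ^ 2 * cut A y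
      = x * ∫ y in (0 : ℝ)..1, tanh (x * y) ^ 2 * cut A (x * y) := by
    rw [intervalIntegral.mul_integral_comp_mul_left (f := fun z => tanh z ^ 2 * cut A z)]
    simp
  have h2 : ∫ y in (0 : ℝ)..1, tanh (x * y) ^ 2 * cut A (x * y)
      = x ^ 2 * ∫ y in (0 : ℝ)..1, y ^ 2 * tanhSlope (x * y) ^ 2 * cut A (x * y) := by
    rw [← intervalIntegral.integral_const_mul]
    refine intervalIntegral.integral_congr fun y _ => ?_
    rw [← mul_tanhSlope (x * y)]; ring
  rw [h1, h2, mulQ, ← mul_tanhSlope x]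
  field_simp

lemma mulQ_nonneg (A x : ℝ) : 0 ≤ mulQ A x := by
  refine mul_nonneg (inv_nonneg.2 (pow_pos (tanhSlope_pos x) 3).le) ?_
  refine intervalIntegral.integral_nonneg zero_le_one fun y _ => ?_
  have := cut_nonneg A (x * y)
  positivity

lemma psi_nonneg {x : ℝ} (A : ℝ) (hx : 0 ≤ x) : 0 ≤ psi A x :=
  mul_nonneg (tanh_nonneg' hx) (mulQ_nonneg A x)

lemma psi_zero (A : ℝ) : psi A 0 = 0 := by simp [psi]

lemma hasDerivAt_psi (A : ℝ) {x : ℝ} (hx : 0 < x) : HasDerivAt (psi A) (psiD A x) x := by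
  have ht := tanh_pos' hx
  have hc : Continuous fun y => tanh y ^ 2 * cut A y := by
    have := continuous_tanh'; fun_prop
  have h1 : HasDerivAt (fun z => ∫ y in (0 : ℝ)..z, tanh y ^ 2 * cut A y)
      (tanh x ^ 2 * cut A x) x :=
    intervalIntegral.integral_hasDerivAt_right (hc.intervalIntegrable _ _)
      (hc.stronglyMeasurableAtFilter _ _) hc.continuousAt
  have h2 : HasDerivAt (fun z => tanh z ^ 2) (2 * tanh x * sech x ^ 2) x := by
    simpa using (hasDerivAt_tanh' x).fun_pow 2
  have h3 := h1.div h2 (by positivity)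
  have h4 : psi A =ᶠ[nhds x] fun z => (∫ y in (0 : ℝ)..z, tanh y ^ 2 * cut A y) / tanh z ^ 2 := by
    filter_upwards [Ioi_mem_nhds hx] with z hz
    have := tanh_pos' hz
    rw [← mulQ_eq, psi]
    field_simp
  refine (h3.congr_of_eventuallyEq h4).congr_deriv ?_
  rw [← mulQ_eq, psiD]
  field_simp

lemma le_of_forall_pos {f g : ℝ → ℝ} (hf : Continuous f) (hg : Continuous g)
    (h : ∀ x, 0 < x → f x ≤ g x) {x : ℝ} (hx : 0 ≤ x) : f x ≤ g x := by
  have h1 : closure (Set.Ioi (0 : ℝ)) ⊆ {x | f x ≤ g x} :=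
    (isClosed_le hf hg).closure_subset_iff.2 fun x hx => h x hx
  rw [closure_Ioi] at h1
  exact h1 hx

lemma psi_le_integral (A : ℝ) {x : ℝ} (hx : 0 < x) : psi A x ≤ ∫ y in (0 : ℝ)..x, cut A y := by
  have ht := tanh_pos' hx
  have hc := continuous_tanh'
  have h1 : tanh x ^ 2 * psi A x ≤ tanh x ^ 2 * ∫ y in (0 : ℝ)..x, cut A y := by
    rw [← intervalIntegral.integral_const_mul]
    calc tanh x ^ 2 * psi A x = tanh x ^ 3 * mulQ A x := by rw [psi]; ring
      _ = ∫ y in (0 : ℝ)..x, tanh y ^ 2 * cut A y := mulQ_eq A x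
      _ ≤ _ := by
        refine integral_mono_cont hx.le (by fun_prop) (by fun_prop) fun y hy hyx => ?_
        have := tanh_nonneg' hy
        have := tanh_mono' hyx
        have := cut_nonneg A y
        gcongr
  exact le_of_mul_le_mul_left h1 (by positivity)

lemma psi_le_self (A : ℝ) {x : ℝ} (hx : 0 ≤ x) : psi A x ≤ x := by
  rcases hx.eq_or_lt with rfl | hx
  · simp [psi_zero]
  refine (psi_le_integral A hx).trans ?_
  calc ∫ y in (0 : ℝ)..x, cut A y ≤ ∫ y in (0 : ℝ)..x, (1 : ℝ) :=
        integral_mono_cont hx.le (by fun_prop) (by fun_prop) fun y _ _ => cut_le_one A y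
    _ = x := by simp

lemma psi_le {A x : ℝ} (hA : 0 < A) (hx : 0 ≤ x) : psi A x ≤ A := by
  rcases le_total x A with h | h
  · exact (psi_le_self A hx).trans h
  refine (psi_le_integral A (hA.trans_le h)).trans ?_
  have hi : ∀ a b, IntervalIntegrable (cut A) volume a b :=
    fun a b => (continuous_cut A).intervalIntegrable a b
  rw [← intervalIntegral.integral_add_adjacent_intervals (hi 0 A) (hi A x)]
  have h1 : ∫ y in (0 : ℝ)..A, cut A y ≤ A := by
    calc ∫ y in (0 : ℝ)..A, cut A y ≤ ∫ y in (0 : ℝ)..A, (1 : ℝ) :=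
        integral_mono_cont hA.le (by fun_prop) (by fun_prop) fun y _ _ => cut_le_one A y
      _ = A := by simp
  have h2 : ∫ y in A..x, cut A y ≤ 0 := by
    calc ∫ y in A..x, cut A y ≤ ∫ y in A..x, (0 : ℝ) :=
        integral_mono_cont h (by fun_prop) (by fun_prop) fun y hy _ => (cut_eq_zero hA hy).le
      _ = 0 := by simp
  linarith

lemma sech_sq_mulQ_le_sech (A : ℝ) {x : ℝ} (hx : 0 ≤ x) : sech x ^ 2 * mulQ A x ≤ sech x := by
  have hs := continuous_sech
  refine le_of_forall_pos (f := fun x => sech x ^ 2 * mulQ A x) (by fun_prop) hs ?_ hx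
  intro x hx
  have ht := tanh_pos' hx
  have hs := sech_pos x
  have h1 := psi_le_self A hx.le
  have h2 := mul_sech_le_tanh hx.le
  refine le_of_mul_le_mul_left ?_ ht
  calc tanh x * (sech x ^ 2 * mulQ A x) = sech x ^ 2 * psi A x := by rw [psi]; ring
    _ ≤ sech x ^ 2 * x := by gcongr
    _ = sech x * (x * sech x) := by ring
    _ ≤ sech x * tanh x := by gcongr
    _ = _ := by ring

/-- Comparison of `∫₀ˣ tanh² = x - tanh x` with `tanh³ / (3 sech²)`. -/
lemma self_sub_tanh_le {x : ℝ} (hx : 0 ≤ x) : x - tanh x ≤ sinh x ^ 2 * tanh x / 3 := by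
  have hm : MonotoneOn (fun y => sinh y ^ 2 * tanh y / 3 - (y - tanh y)) (Set.Ici 0) := by
    have hd : ∀ y, HasDerivAt (fun y => sinh y ^ 2 * tanh y / 3 - (y - tanh y))
        ((2 * sinh y * cosh y * tanh y + sinh y ^ 2 * sech y ^ 2) / 3 - (1 - sech y ^ 2)) y := by
      intro y
      have h1 : HasDerivAt (fun z => sinh z ^ 2) (2 * sinh y * cosh y) y := by
        simpa using (hasDerivAt_sinh y).fun_pow 2
      exact ((h1.mul (hasDerivAt_tanh' y)).div_const 3).sub
        ((hasDerivAt_id y).sub (hasDerivAt_tanh' y))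
    refine monotoneOn_of_deriv_nonneg (convex_Ici 0)
      (fun y _ => (hd y).continuousAt.continuousWithinAt)
      (fun y _ => (hd y).differentiableAt.differentiableWithinAt) fun y hy => ?_
    rw [(hd y).deriv]
    have hc := cosh_pos y
    have h2 : cosh y * tanh y = sinh y := by
      rw [tanh_eq_sinh_div_cosh]; field_simp
    have h3 : sinh y * sech y = tanh y := by
      rw [tanh_eq_sinh_div_cosh, sech]; rfl
    have h4 := tanh_sq_add y
    have h5 : tanh y ^ 2 ≤ sinh y ^ 2 := by
      rw [← h3, mul_pow]
      have := sech_le_one y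
      have := (sech_pos y).le
      exact mul_le_of_le_one_right (sq_nonneg _) (pow_le_one₀ this (by assumption))
    have h6 : 2 * sinh y * cosh y * tanh y = 2 * sinh y ^ 2 := by
      rw [mul_assoc (2 * sinh y), h2]; ring
    rw [h6, ← mul_pow, h3]
    linarith
  have := hm (Set.mem_Ici.2 le_rfl) (Set.mem_Ici.2 hx) hx
  simp at this
  linarith

lemma sech_sq_mulQ_le (A : ℝ) {x : ℝ} (hx : 0 ≤ x) : sech x ^ 2 * mulQ A x ≤ 1 / 3 := by
  have hs := continuous_sech
  refine le_of_forall_pos (f := fun x => sech x ^ 2 * mulQ A x) (g := fun _ => 1 / 3)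
    (by fun_prop) (by fun_prop) ?_ hx
  intro x hx
  have ht := tanh_pos' hx
  have hsp := sech_pos x
  have hc := continuous_tanh'
  have h1 : tanh x ^ 3 * mulQ A x ≤ x - tanh x := by
    rw [mulQ_eq]
    calc ∫ y in (0 : ℝ)..x, tanh y ^ 2 * cut A y ≤ ∫ y in (0 : ℝ)..x, (1 - sech y ^ 2) := by
          refine integral_mono_cont hx.le (by fun_prop) (by fun_prop) fun y _ _ => ?_
          have := tanh_sq_add y
          have := cut_le_one A y
          nlinarith [sq_nonneg (tanh y)]
      _ = x - tanh x := by
        rw [intervalIntegral.integral_eq_sub_of_hasDerivAt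
          (fun z _ => (hasDerivAt_id z).sub (hasDerivAt_tanh' z))]
        · simp
        · exact Continuous.intervalIntegrable (by fun_prop) _ _
  have h2 := self_sub_tanh_le hx.le
  have h3 : sinh x * sech x = tanh x := by
    rw [tanh_eq_sinh_div_cosh, sech]; rfl
  refine le_of_mul_le_mul_left ?_ (pow_pos ht 3)
  calc tanh x ^ 3 * (sech x ^ 2 * mulQ A x) = sech x ^ 2 * (tanh x ^ 3 * mulQ A x) := by ring
    _ ≤ sech x ^ 2 * (sinh x ^ 2 * tanh x / 3) := by gcongr; exact h1.trans h2
    _ = (sinh x * sech x) ^ 2 * tanh x / 3 := by ring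
    _ = _ := by rw [h3]; ring

/-- Positivity of the derivative of the virial weight up to `A⁻²`. -/
lemma psiD_ge {A x : ℝ} (hA : 0 < A) (hx : 0 ≤ x) : cut A x / 4 - 2000 / A ^ 2 ≤ psiD A x := by
  have h1 := sech_sq_mulQ_le A hx
  have h2 := sech_sq_mulQ_le_sech A hx
  have h3 := cut_nonneg A x
  have h4 : 0 ≤ 2000 / A ^ 2 := by positivity
  rw [psiD]
  rcases le_total x (1 / 5 * A) with h | h
  · have := cut_ge (c := 1 / 5) hA hx (by norm_num) (by norm_num) h
    nlinarith
  · have h5 := sech_weight_le hx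
    have h6 : 32 / (1 + x ^ 2) ≤ 800 / A ^ 2 := by
      rw [div_le_div_iff₀ (by positivity) (by positivity)]
      nlinarith [mul_self_le_mul_self (by positivity) h]
    have h7 : sech x ≤ (1 + x) * sech x := by nlinarith [sech_pos x]
    have h8 : 2000 / A ^ 2 = 2.5 * (800 / A ^ 2) := by ring
    have h9 : 0 ≤ 800 / A ^ 2 := by positivity
    nlinarith

lemma abs_psiD_le (A : ℝ) {x : ℝ} (hx : 0 ≤ x) :
    |psiD A x| ≤ cut A x + 2 * sech x := by
  have h2 := sech_sq_mulQ_le_sech A hx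
  have h3 := cut_nonneg A x
  have h4 := mulQ_nonneg A x
  have h5 : 0 ≤ sech x ^ 2 * mulQ A x := by positivity
  have := sech_pos x
  rw [psiD, abs_le]
  constructor <;> nlinarith

/-! ### Perturbations of the kink on the half-line -/

/-- A `C²` perturbation `u` of the kink, together with its first and second partial derivatives,
that solves the perturbed Sine-Gordon equation for nonnegative times and vanishes at `x = 0`. -/
structure Sol (u ut ux utt uxx utx : ℝ → ℝ → ℝ) : Prop where
  c_u : Continuous (Function.uncurry u)
  c_ut : Continuous (Function.uncurry ut)
  c_ux : Continuous (Function.uncurry ux)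
  c_utt : Continuous (Function.uncurry utt)
  c_uxx : Continuous (Function.uncurry uxx)
  c_utx : Continuous (Function.uncurry utx)
  hut : ∀ t x, HasDerivAt (fun s => u s x) (ut t x) t
  hux : ∀ t x, HasDerivAt (u t) (ux t x) x
  hutt : ∀ t x, HasDerivAt (fun s => ut s x) (utt t x) t
  huxx : ∀ t x, HasDerivAt (ux t) (uxx t x) x
  huxt : ∀ t x, HasDerivAt (fun s => ux s x) (utx t x) t
  hutx : ∀ t x, HasDerivAt (ut t) (utx t x) x
  eqn : ∀ t, 0 ≤ t → ∀ x, utt t x = uxx t x - (sin (K x + u t x) - sin (K x))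
  zero : ∀ t, 0 ≤ t → u t 0 = 0
  zero_t : ∀ t, 0 ≤ t → ut t 0 = 0

variable {u ut ux utt uxx utx : ℝ → ℝ → ℝ}

lemma cont_slice {f : ℝ → ℝ → ℝ} (hf : Continuous (Function.uncurry f)) (t : ℝ) :
    Continuous (f t) := hf.comp (by fun_prop : Continuous fun x => (t, x))

/-- The Bogomolny quantity `φₓ - 2 sin (φ / 2)` of `φ = K + u`, which vanishes for the kink. -/
def bog (u ux : ℝ → ℝ → ℝ) (t x : ℝ) : ℝ := ux t x + 2 * sech x - 2 * sin ((K x + u t x) / 2)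

lemma Sol.continuous_bog (h : Sol u ut ux utt uxx utx) :
    Continuous (Function.uncurry (bog u ux)) := by
  have h1 := h.c_u
  have h2 := h.c_ux
  have h3 := continuous_sech
  have h4 := continuous_K
  unfold Function.uncurry at *
  unfold bog
  fun_prop

/-- Finite speed of propagation for the Bogomolny energy density `uₜ² + bog²`, whose flux is
`2 uₜ bog`.  The weight `((L - t)² - x²)₊²` decreases along the cone. -/
lemma Sol.cone_energy (h : Sol u ut ux utt uxx utx) {t L : ℝ} (ht : 0 ≤ t) (htL : t ≤ L) :
    ∫ x in (0 : ℝ)..L, (max ((L - t) ^ 2 - x ^ 2) 0) ^ 2 * (ut t x ^ 2 + bog u ux t x ^ 2)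
      ≤ ∫ x in (0 : ℝ)..L, (max (L ^ 2 - x ^ 2) 0) ^ 2 * (ut 0 x ^ 2 + bog u ux 0 x ^ 2) := by
  have hL : 0 ≤ L := ht.trans htL
  have c1 := h.c_u
  have c2 := h.c_ut
  have c3 := h.c_ux
  have c4 := h.c_utt
  have c5 := h.c_utx
  have c6 := h.continuous_bog
  have c7 := continuous_K
  have c8 := continuous_sech
  let F : ℝ → ℝ → ℝ := fun s x =>
    (max ((L - s) ^ 2 - x ^ 2) 0) ^ 2 * (ut s x ^ 2 + bog u ux s x ^ 2)
  let Ft : ℝ → ℝ → ℝ := fun s x =>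
    (2 * max ((L - s) ^ 2 - x ^ 2) 0 * (-(2 * (L - s)))) * (ut s x ^ 2 + bog u ux s x ^ 2)
    + (max ((L - s) ^ 2 - x ^ 2) 0) ^ 2 * (2 * ut s x * utt s x
      + 2 * bog u ux s x * (utx s x - 2 * (cos ((K x + u s x) / 2) * (ut s x / 2))))
  have hF : Continuous (Function.uncurry F) := by
    unfold Function.uncurry at *; simp only [F]; fun_prop
  have hFt : Continuous (Function.uncurry Ft) := by
    unfold Function.uncurry at *; simp only [Ft]; fun_prop
  have hd : ∀ s x, HasDerivAt (fun s => F s x) (Ft s x) s := by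
    intro s x
    have d1 : HasDerivAt (fun s : ℝ => (L - s) ^ 2 - x ^ 2) (-(2 * (L - s))) s := by
      have := (((hasDerivAt_id s).const_sub L).fun_pow 2).sub_const (x ^ 2)
      simpa using this
    have d2 := (hasDerivAt_max_sq _).comp s d1
    have d3 : HasDerivAt (fun s => bog u ux s x)
        (utx s x - 2 * (cos ((K x + u s x) / 2) * (ut s x / 2))) s :=
      ((h.huxt s x).add_const _).sub
        ((((h.hut s x).const_add (K x)).div_const 2).sin.const_mul 2)
    have d4 := ((h.hutt s x).fun_pow 2).add (d3.fun_pow 2)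
    have d5 := d2.mul d4
    refine d5.congr_deriv ?_
    simp only [Ft, Function.comp, Pi.add_apply]
    push_cast
    ring
  have key := integral_time_diff hF hFt hd 0 t L
  have hneg : ∫ s in (0 : ℝ)..t, ∫ x in (0 : ℝ)..L, Ft s x ≤ 0 := by
    suffices hs : ∀ s, 0 ≤ s → s ≤ t → ∫ x in (0 : ℝ)..L, Ft s x ≤ 0 by
      have h1 : 0 ≤ ∫ s in (0 : ℝ)..t, -∫ x in (0 : ℝ)..L, Ft s x :=
        intervalIntegral.integral_nonneg ht fun s hs' => by linarith [hs s hs'.1 hs'.2]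
      rw [intervalIntegral.integral_neg] at h1
      linarith
    intro s hs hst
    let G : ℝ → ℝ := fun x => (max ((L - s) ^ 2 - x ^ 2) 0) ^ 2 * (2 * ut s x * bog u ux s x)
    let bx : ℝ → ℝ := fun x => uxx s x + 2 * (-(sech x * tanh x))
      - 2 * (cos ((K x + u s x) / 2) * ((2 * sech x + ux s x) / 2))
    let G' : ℝ → ℝ := fun x =>
      (2 * max ((L - s) ^ 2 - x ^ 2) 0 * (-(2 * x))) * (2 * ut s x * bog u ux s x)
      + (max ((L - s) ^ 2 - x ^ 2) 0) ^ 2 * (2 * utx s x * bog u ux s x + 2 * ut s x * bx x)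
    have hG : ∀ x, HasDerivAt G (G' x) x := by
      intro x
      have d1 : HasDerivAt (fun x : ℝ => (L - s) ^ 2 - x ^ 2) (-(2 * x)) x := by
        have := ((hasDerivAt_id x).fun_pow 2).const_sub ((L - s) ^ 2)
        simpa using this
      have d2 := (hasDerivAt_max_sq _).comp x d1
      have d3 : HasDerivAt (fun x => bog u ux s x) (bx x) x :=
        ((h.huxx s x).add ((hasDerivAt_sech x).const_mul 2)).sub
          ((((hasDerivAt_K x).add (h.hux s x)).div_const 2).sin.const_mul 2)
      exact d2.mul (((h.hutx s x).const_mul 2).mul d3)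
    have hle : ∀ x, 0 < x → x < L → Ft s x ≤ G' x := by
      intro x hx hxL
      have hk : (ut s x * utt s x
          + bog u ux s x * (utx s x - 2 * (cos ((K x + u s x) / 2) * (ut s x / 2))))
          = utx s x * bog u ux s x + ut s x * bx x := by
        have e1 : sin (K x + u s x) = 2 * sin ((K x + u s x) / 2) * cos ((K x + u s x) / 2) := by
          rw [← sin_two_mul]; congr 1; ring
        rw [h.eqn s hs x, e1, sin_K]
        simp only [bx, bog]
        ring
      have hw : (2 * max ((L - s) ^ 2 - x ^ 2) 0 * (-(2 * (L - s))))
            * (ut s x ^ 2 + bog u ux s x ^ 2)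
          ≤ (2 * max ((L - s) ^ 2 - x ^ 2) 0 * (-(2 * x))) * (2 * ut s x * bog u ux s x) := by
        rcases le_total ((L - s) ^ 2 - x ^ 2) 0 with hc | hc
        · simp [max_eq_right hc]
        · rw [max_eq_left hc]
          have hxs : x ≤ L - s := by
            by_contra hcon
            push Not at hcon
            nlinarith
          have e2 : x * (2 * ut s x * bog u ux s x)
              ≤ (L - s) * (ut s x ^ 2 + bog u ux s x ^ 2) := by
            have e3 : x * (2 * ut s x * bog u ux s x) ≤ x * (ut s x ^ 2 + bog u ux s x ^ 2) :=
              mul_le_mul_of_nonneg_left (two_mul_le_add_sq _ _) hx.le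
            have e4 : x * (ut s x ^ 2 + bog u ux s x ^ 2)
                ≤ (L - s) * (ut s x ^ 2 + bog u ux s x ^ 2) :=
              mul_le_mul_of_nonneg_right hxs (by positivity)
            linarith
          nlinarith
      simp only [Ft, G']
      have e5 : (max ((L - s) ^ 2 - x ^ 2) 0) ^ 2 * (2 * ut s x * utt s x
          + 2 * bog u ux s x * (utx s x - 2 * (cos ((K x + u s x) / 2) * (ut s x / 2))))
          = (max ((L - s) ^ 2 - x ^ 2) 0) ^ 2
            * (2 * utx s x * bog u ux s x + 2 * ut s x * bx x) := by
        linear_combination 2 * (max ((L - s) ^ 2 - x ^ 2) 0) ^ 2 * hk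
      linarith
    have := integral_le_sub_of_deriv hL (fun x _ => (hG x).continuousAt.continuousWithinAt)
      (fun x _ _ => hG x) (cont_slice hFt s).continuousOn hle
    have g0 : G 0 = 0 := by simp [G, h.zero_t s hs]
    have gL : G L = 0 := by
      have : max ((L - s) ^ 2 - L ^ 2) 0 = 0 := max_eq_right (by nlinarith)
      simp [G, this]
    linarith
  rw [sub_eq_iff_eq_add] at key
  simp only [F, sub_zero] at key
  linarith

lemma abs_bog_le (u ux : ℝ → ℝ → ℝ) (t x : ℝ) :
    |bog u ux t x| ≤ |ux t x| + |u t x| := by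
  have h1 : |sin ((K x + u t x) / 2) - sin (K x / 2)| ≤ |(K x + u t x) / 2 - K x / 2| :=
    abs_sin_sub_sin_le _ _
  have h2 : |(K x + u t x) / 2 - K x / 2| = |u t x| / 2 := by
    rw [← sub_div, add_sub_cancel_left, abs_div, abs_two]
  have h3 : bog u ux t x = ux t x - 2 * (sin ((K x + u t x) / 2) - sin (K x / 2)) := by
    rw [bog, sin_half_K]; ring
  rw [h3]
  calc _ ≤ |ux t x| + |2 * (sin ((K x + u t x) / 2) - sin (K x / 2))| := abs_sub _ _
    _ ≤ _ := by rw [abs_mul, abs_two]; linarith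

/-! ### Energy bounds that are uniform in time -/

lemma sq_bog_le (u ux : ℝ → ℝ → ℝ) (t x : ℝ) :
    bog u ux t x ^ 2 ≤ 2 * u t x ^ 2 + 2 * ux t x ^ 2 := by
  have h := abs_bog_le u ux t x
  have h1 : bog u ux t x ^ 2 ≤ (|ux t x| + |u t x|) ^ 2 := by
    rw [← sq_abs]; exact pow_le_pow_left₀ (abs_nonneg _) h 2
  nlinarith [sq_abs (ux t x), sq_abs (u t x), sq_nonneg (|ux t x| - |u t x|)]

lemma sq_ux_le (u ux : ℝ → ℝ → ℝ) (t x : ℝ) :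
    ux t x ^ 2 ≤ 2 * u t x ^ 2 + 2 * bog u ux t x ^ 2 := by
  have h1 : |sin ((K x + u t x) / 2) - sin (K x / 2)| ≤ |(K x + u t x) / 2 - K x / 2| :=
    abs_sin_sub_sin_le _ _
  have h2 : |(K x + u t x) / 2 - K x / 2| = |u t x| / 2 := by
    rw [← sub_div, add_sub_cancel_left, abs_div, abs_two]
  rw [h2] at h1
  have h3 : ux t x = bog u ux t x + 2 * (sin ((K x + u t x) / 2) - sin (K x / 2)) := by
    rw [bog, sin_half_K]; ring
  have h4 : (sin ((K x + u t x) / 2) - sin (K x / 2)) ^ 2 ≤ (|u t x| / 2) ^ 2 := by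
    rw [← sq_abs (sin _ - _)]; exact pow_le_pow_left₀ (abs_nonneg _) h1 2
  rw [div_pow, sq_abs] at h4
  rw [h3]
  nlinarith [sq_nonneg (bog u ux t x - 2 * (sin ((K x + u t x) / 2) - sin (K x / 2)))]

lemma Sol.energy_le (h : Sol u ut ux utt uxx utx) {δ : ℝ}
    (hE : ∀ L, 0 ≤ L → ∫ x in (0 : ℝ)..L, (u 0 x ^ 2 + ux 0 x ^ 2 + ut 0 x ^ 2) ≤ δ ^ 2)
    {t R : ℝ} (ht : 0 ≤ t) (hR : 0 ≤ R) :
    ∫ x in (0 : ℝ)..R, (ut t x ^ 2 + bog u ux t x ^ 2) ≤ 8 * δ ^ 2 := by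
  obtain ⟨L, hLdef⟩ : ∃ L, L = 4 * (t + R + 1) := ⟨_, rfl⟩
  have hL : 0 < L := by rw [hLdef]; positivity
  have htL : t ≤ L / 4 := by rw [hLdef]; linarith
  have hRL : R ≤ L / 4 := by rw [hLdef]; linarith
  have c1 := fun s => cont_slice h.c_u s
  have c2 := fun s => cont_slice h.c_ut s
  have c3 := fun s => cont_slice h.c_ux s
  have c4 := fun s => cont_slice h.continuous_bog s
  have hcone := h.cone_energy ht (by linarith : t ≤ L)
  have s1 : L ^ 4 / 4 * ∫ x in (0 : ℝ)..R, (ut t x ^ 2 + bog u ux t x ^ 2)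
      ≤ ∫ x in (0 : ℝ)..R,
        (max ((L - t) ^ 2 - x ^ 2) 0) ^ 2 * (ut t x ^ 2 + bog u ux t x ^ 2) := by
    rw [← intervalIntegral.integral_const_mul]
    refine integral_mono_cont hR (by fun_prop) (by fun_prop) fun x hx hxR => ?_
    refine mul_le_mul_of_nonneg_right ?_ (by positivity)
    have e1 : L ^ 2 / 2 ≤ max ((L - t) ^ 2 - x ^ 2) 0 := by
      refine le_max_of_le_left ?_
      have a1 : (3 * L / 4) ^ 2 ≤ (L - t) ^ 2 := pow_le_pow_left₀ (by linarith) (by linarith) 2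
      have a2 : x ^ 2 ≤ (L / 4) ^ 2 := pow_le_pow_left₀ hx (by linarith) 2
      nlinarith
    calc L ^ 4 / 4 = (L ^ 2 / 2) ^ 2 := by ring
      _ ≤ _ := pow_le_pow_left₀ (by positivity) e1 2
  have s2 : ∫ x in (0 : ℝ)..R,
        (max ((L - t) ^ 2 - x ^ 2) 0) ^ 2 * (ut t x ^ 2 + bog u ux t x ^ 2)
      ≤ ∫ x in (0 : ℝ)..L,
        (max ((L - t) ^ 2 - x ^ 2) 0) ^ 2 * (ut t x ^ 2 + bog u ux t x ^ 2) := by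
    refine intervalIntegral.integral_mono_interval le_rfl hR (by linarith) ?_ ?_
    · exact Eventually.of_forall fun x => by positivity
    · exact Continuous.intervalIntegrable (by fun_prop) _ _
  have s3 : ∫ x in (0 : ℝ)..L, (max (L ^ 2 - x ^ 2) 0) ^ 2 * (ut 0 x ^ 2 + bog u ux 0 x ^ 2)
      ≤ ∫ x in (0 : ℝ)..L, (2 * L ^ 4) * (u 0 x ^ 2 + ux 0 x ^ 2 + ut 0 x ^ 2) := by
    refine integral_mono_cont hL.le (by fun_prop) (by fun_prop) fun x hx hxR => ?_
    have e1 : max (L ^ 2 - x ^ 2) 0 ≤ L ^ 2 := max_le (by nlinarith) (by positivity)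
    have e2 : (max (L ^ 2 - x ^ 2) 0) ^ 2 ≤ L ^ 4 := by
      calc _ ≤ (L ^ 2) ^ 2 := pow_le_pow_left₀ (le_max_right _ _) e1 2
        _ = _ := by ring
    calc _ ≤ L ^ 4 * (ut 0 x ^ 2 + bog u ux 0 x ^ 2) :=
          mul_le_mul_of_nonneg_right e2 (by positivity)
      _ ≤ L ^ 4 * (2 * (u 0 x ^ 2 + ux 0 x ^ 2 + ut 0 x ^ 2)) :=
          mul_le_mul_of_nonneg_left (by nlinarith [sq_bog_le u ux 0 x]) (by positivity)
      _ = _ := by ring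
  rw [intervalIntegral.integral_const_mul] at s3
  have s4 := hE L hL.le
  have s5 : L ^ 4 * ∫ x in (0 : ℝ)..R, (ut t x ^ 2 + bog u ux t x ^ 2) ≤ L ^ 4 * (8 * δ ^ 2) := by
    have := mul_le_mul_of_nonneg_left s4 (by positivity : 0 ≤ 2 * L ^ 4)
    linarith
  exact le_of_mul_le_mul_left s5 (by positivity)

lemma mul_sin_ge {y : ℝ} (hy : |y| ≤ 1) : y ^ 2 / 2 ≤ y * sin y := by
  have h := sin_bound hy
  have h1 : |y * sin y - (y ^ 2 - y ^ 4 / 6)| ≤ |y| * (|y| ^ 5 / 100) := by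
    have : y * sin y - (y ^ 2 - y ^ 4 / 6) = y * (sin y - (y - y ^ 3 / 6)) := by ring
    rw [this, abs_mul]
    exact mul_le_mul_of_nonneg_left h (abs_nonneg _)
  have h2 := (abs_le.1 h1).1
  have h3 : |y| ^ 4 ≤ |y| ^ 2 := pow_le_pow_of_le_one (abs_nonneg _) hy (by norm_num)
  have h4 : |y| * |y| ^ 5 ≤ 1 * |y| ^ 2 := mul_le_mul hy
    (pow_le_pow_of_le_one (abs_nonneg _) hy (by norm_num)) (by positivity) (by norm_num)
  have h5 : |y| ^ 4 = y ^ 4 := by rw [← abs_pow, abs_of_nonneg (by positivity)]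
  rw [sq_abs] at h3 h4
  nlinarith

lemma exp_five_lt : exp 5 < 150 := by
  have h : exp 5 = exp 1 ^ 5 := by rw [← exp_nat_mul]; norm_num
  rw [h]
  calc exp 1 ^ 5 < 2.7183 ^ 5 :=
        pow_lt_pow_left₀ (exp_one_lt_d9.trans (by norm_num)) (exp_pos _).le (by norm_num)
    _ < 150 := by norm_num

/-- The Bogomolny equation `vₓ = 2 sin ((K + v) / 2) - 2 sech + ρ` with `v(0) = 0` controls small
`v` by the source `ρ`: the linear part `-tanh · v` is damping away from the origin, and the
integrating factor `exp (-3 K / 4)` absorbs the bounded region. -/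
lemma ode_bound {v vx ρ : ℝ → ℝ} {X : ℝ} (hX : 0 ≤ X) (hv : ∀ x, HasDerivAt v (vx x) x)
    (hρ : Continuous ρ) (h0 : v 0 = 0)
    (he : ∀ x, vx x = ρ x - 2 * sech x + 2 * sin ((K x + v x) / 2))
    (hs : ∀ x, 0 < x → x < X → |v x| ≤ 1) :
    v X ^ 2 + 1 / 2 * ∫ x in (0 : ℝ)..X, v x ^ 2 ≤ 300 * ∫ x in (0 : ℝ)..X, ρ x ^ 2 := by
  have cv : Continuous v := continuous_iff_continuousAt.2 fun x => (hv x).continuousAt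
  have c4 := continuous_K
  let g : ℝ → ℝ := fun x => v x ^ 2 * exp (-(3 / 4 * K x))
  let g' : ℝ → ℝ := fun x => (2 * v x * vx x - 3 / 2 * sech x * v x ^ 2) * exp (-(3 / 4 * K x))
  have hg : ∀ x, HasDerivAt g (g' x) x := by
    intro x
    have d1 := ((hv x).fun_pow 2).mul (((hasDerivAt_K x).const_mul (3 / 4)).fun_neg.exp)
    refine d1.congr_deriv ?_
    simp only [g']
    push_cast
    ring
  have ek : ∀ x, exp (-5) ≤ exp (-(3 / 4 * K x)) ∧ exp (-(3 / 4 * K x)) ≤ 1 := by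
    intro x
    constructor
    · rw [exp_le_exp]; have := K_lt x; have := pi_lt_d2; linarith
    · rw [exp_le_one_iff]; have := K_pos x; linarith
  let f : ℝ → ℝ := fun x => 2 * ρ x ^ 2 - exp (-5) / 2 * v x ^ 2
  have cf : Continuous f := by simp only [f]; fun_prop
  have hle : ∀ x, 0 < x → x < X → g' x ≤ f x := by
    intro x hx hxX
    have hvx := hs x hx hxX
    have e1 : 2 * sin ((K x + v x) / 2) - 2 * sech x
        = 2 * sech x * (cos (v x / 2) - 1) - 2 * tanh x * sin (v x / 2) := by
      rw [add_div, sin_add, sin_half_K, cos_half_K]; ring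
    have hy : |v x / 2| ≤ 1 := by rw [abs_div, abs_two]; linarith
    have e2 := mul_sin_ge hy
    have e3 := one_sub_sq_div_two_le_cos (x := v x / 2)
    have e4 := cos_le_one (v x / 2)
    have t1 := one_sub_tanh_le hx.le
    have hsp := sech_pos x
    have a1 : 2 * v x * vx x - 3 / 2 * sech x * v x ^ 2 ≤ 2 * ρ x ^ 2 - 1 / 2 * v x ^ 2 := by
      have b0 : vx x = ρ x + 2 * sech x * (cos (v x / 2) - 1) - 2 * tanh x * sin (v x / 2) := by
        rw [he x]; linarith
      have b1 : v x * (cos (v x / 2) - 1) ≤ v x ^ 2 / 8 := by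
        have : |v x * (cos (v x / 2) - 1)| ≤ 1 * (v x ^ 2 / 8) := by
          rw [abs_mul]
          refine mul_le_mul hvx ?_ (abs_nonneg _) (by norm_num)
          rw [abs_le]; constructor <;> nlinarith
        linarith [le_abs_self (v x * (cos (v x / 2) - 1))]
      have b2 : v x ^ 2 / 4 ≤ v x * sin (v x / 2) := by nlinarith
      have b3 : sech x * (v x * (cos (v x / 2) - 1)) ≤ sech x * (v x ^ 2 / 8) :=
        mul_le_mul_of_nonneg_left b1 hsp.le
      have b4 : tanh x * (v x ^ 2 / 4) ≤ tanh x * (v x * sin (v x / 2)) :=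
        mul_le_mul_of_nonneg_left b2 (tanh_nonneg' hx.le)
      have b5 : (1 - sech x) * v x ^ 2 ≤ tanh x * v x ^ 2 :=
        mul_le_mul_of_nonneg_right (by linarith) (sq_nonneg _)
      rw [b0]
      nlinarith [sq_nonneg (v x - 2 * ρ x)]
    obtain ⟨k1, k2⟩ := ek x
    have kp := exp_pos (-(3 / 4 * K x))
    simp only [g', f]
    calc _ ≤ (2 * ρ x ^ 2 - 1 / 2 * v x ^ 2) * exp (-(3 / 4 * K x)) :=
          mul_le_mul_of_nonneg_right a1 kp.le
      _ ≤ _ := by nlinarith [sq_nonneg (ρ x), sq_nonneg (v x)]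
  have key := sub_le_integral_of_deriv hX (fun x _ => (hg x).continuousAt.continuousWithinAt)
      (fun x _ _ => hg x) cf.continuousOn hle
  have i1 : ∫ x in (0 : ℝ)..X, f x
      = 2 * (∫ x in (0 : ℝ)..X, ρ x ^ 2) - exp (-5) / 2 * ∫ x in (0 : ℝ)..X, v x ^ 2 := by
    simp only [f]
    rw [intervalIntegral.integral_sub (Continuous.intervalIntegrable (by fun_prop) _ _)
      (Continuous.intervalIntegrable (by fun_prop) _ _), intervalIntegral.integral_const_mul,
      intervalIntegral.integral_const_mul]
  have g0 : g 0 = 0 := by simp [g, h0]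
  have gX : exp (-5) * v X ^ 2 ≤ g X := by
    simp only [g]; rw [mul_comm]; exact mul_le_mul_of_nonneg_left (ek X).1 (sq_nonneg _)
  have hI : 0 ≤ ∫ x in (0 : ℝ)..X, ρ x ^ 2 :=
    intervalIntegral.integral_nonneg hX fun x _ => sq_nonneg _
  have e5 : exp 5 * exp (-5) = 1 := by rw [← exp_add]; norm_num
  have fin : exp 5 * (exp (-5) * (v X ^ 2 + 1 / 2 * ∫ x in (0 : ℝ)..X, v x ^ 2))
      ≤ exp 5 * (2 * ∫ x in (0 : ℝ)..X, ρ x ^ 2) :=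
    mul_le_mul_of_nonneg_left (by linarith) (exp_pos _).le
  rw [← mul_assoc, e5, one_mul] at fin
  nlinarith [exp_five_lt]

/-- Uniform-in-time smallness of a perturbation in the energy space on the half-line. -/
structure Small (u ut ux : ℝ → ℝ → ℝ) (E : ℝ) : Prop where
  pos : 0 < E
  le_one : E ≤ 1
  sup : ∀ t, 0 ≤ t → ∀ x, 0 ≤ x → |u t x| ≤ E
  int_u : ∀ t, 0 ≤ t → ∀ R, 0 ≤ R → ∫ x in (0 : ℝ)..R, u t x ^ 2 ≤ E ^ 2
  int_ux : ∀ t, 0 ≤ t → ∀ R, 0 ≤ R → ∫ x in (0 : ℝ)..R, ux t x ^ 2 ≤ E ^ 2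
  int_ut : ∀ t, 0 ≤ t → ∀ R, 0 ≤ R → ∫ x in (0 : ℝ)..R, ut t x ^ 2 ≤ E ^ 2

/-- Small initial energy implies smallness for all nonnegative times. -/
lemma Sol.small (h : Sol u ut ux utt uxx utx) {δ : ℝ} (hδ : 0 < δ) (hδ1 : δ ≤ 1 / 100)
    (hE : ∀ L, 0 ≤ L → ∫ x in (0 : ℝ)..L, (u 0 x ^ 2 + ux 0 x ^ 2 + ut 0 x ^ 2) ≤ δ ^ 2) :
    Small u ut ux (100 * δ) := by
  have cu := fun s => cont_slice h.c_u s
  have c2 := fun s => cont_slice h.c_ut s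
  have c3 := fun s => cont_slice h.c_ux s
  have cb := fun s => cont_slice h.continuous_bog s
  have int_add : ∀ t R : ℝ, ∫ x in (0 : ℝ)..R, (ut t x ^ 2 + bog u ux t x ^ 2)
      = (∫ x in (0 : ℝ)..R, ut t x ^ 2) + ∫ x in (0 : ℝ)..R, bog u ux t x ^ 2 := fun t R =>
    intervalIntegral.integral_add (Continuous.intervalIntegrable (by fun_prop) _ _)
      (Continuous.intervalIntegrable (by fun_prop) _ _)
  have nn : ∀ (f : ℝ → ℝ) (R : ℝ), 0 ≤ R → 0 ≤ ∫ x in (0 : ℝ)..R, f x ^ 2 := fun f R hR =>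
    intervalIntegral.integral_nonneg hR fun x _ => sq_nonneg _
  have hb : ∀ t, 0 ≤ t → ∀ R, 0 ≤ R → ∫ x in (0 : ℝ)..R, bog u ux t x ^ 2 ≤ 8 * δ ^ 2 := by
    intro t ht R hR
    have := h.energy_le hE ht hR
    rw [int_add] at this
    linarith [nn (ut t) R hR]
  have hb' : ∀ t, 0 ≤ t → ∀ R, 0 ≤ R → ∫ x in (0 : ℝ)..R, ut t x ^ 2 ≤ 8 * δ ^ 2 := by
    intro t ht R hR
    have := h.energy_le hE ht hR
    rw [int_add] at this
    linarith [nn (bog u ux t) R hR]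
  have ode : ∀ t, 0 ≤ t → ∀ X, 0 ≤ X → (∀ x, 0 < x → x < X → |u t x| ≤ 1) →
      u t X ^ 2 + 1 / 2 * ∫ x in (0 : ℝ)..X, u t x ^ 2 ≤ 2400 * δ ^ 2 := by
    intro t ht X hX hs
    have := ode_bound (v := u t) (vx := ux t) (ρ := bog u ux t) hX (h.hux t) (cb t) (h.zero t ht)
      (fun x => by rw [bog]; ring) hs
    linarith [hb t ht X hX]
  have hδ2 : δ ^ 2 ≤ (1 / 100) ^ 2 := pow_le_pow_left₀ hδ.le hδ1 2
  have hsup : ∀ t, 0 ≤ t → ∀ x, 0 ≤ x → |u t x| ≤ 1 := by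
    intro t ht X hX
    by_contra hc
    push Not at hc
    let S : Set ℝ := Set.Icc 0 X ∩ {x | 1 ≤ |u t x|}
    have hSc : IsCompact S :=
      isCompact_Icc.inter_right (isClosed_le continuous_const (cu t).abs)
    obtain ⟨x₀, hx₀, hmin⟩ := hSc.exists_isLeast ⟨X, ⟨hX, le_rfl⟩, hc.le⟩
    have hlt : ∀ x, 0 < x → x < x₀ → |u t x| ≤ 1 := by
      intro x hx hxx
      by_contra hcon
      push Not at hcon
      exact absurd (hmin ⟨⟨hx.le, hxx.le.trans hx₀.1.2⟩, hcon.le⟩) (not_le.2 hxx)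
    have h1 := ode t ht x₀ hx₀.1.1 hlt
    have h2 : 1 ≤ |u t x₀| := hx₀.2
    have h3 : 1 ≤ u t x₀ ^ 2 := by rw [← sq_abs]; nlinarith
    linarith [nn (u t) x₀ hx₀.1.1]
  have ode' : ∀ t, 0 ≤ t → ∀ X, 0 ≤ X →
      u t X ^ 2 + 1 / 2 * ∫ x in (0 : ℝ)..X, u t x ^ 2 ≤ 2400 * δ ^ 2 := fun t ht X hX =>
    ode t ht X hX fun x hx _ => hsup t ht x hx.le
  refine ⟨by positivity, by linarith, ?_, ?_, ?_, ?_⟩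
  · intro t ht x hx
    refine abs_le_of_sq_le_sq ?_ (by positivity)
    nlinarith [ode' t ht x hx, nn (u t) x hx]
  · intro t ht x hx
    nlinarith [ode' t ht x hx, sq_nonneg (u t x)]
  · intro t ht R hR
    have h1 : ∫ x in (0 : ℝ)..R, ux t x ^ 2
        ≤ ∫ x in (0 : ℝ)..R, (2 * u t x ^ 2 + 2 * bog u ux t x ^ 2) :=
      integral_mono_cont hR (by fun_prop) (by fun_prop) fun x _ _ => sq_ux_le u ux t x
    rw [intervalIntegral.integral_add (Continuous.intervalIntegrable (by fun_prop) _ _)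
      (Continuous.intervalIntegrable (by fun_prop) _ _), intervalIntegral.integral_const_mul,
      intervalIntegral.integral_const_mul] at h1
    nlinarith [ode' t ht R hR, sq_nonneg (u t R), hb t ht R hR]
  · intro t ht R hR
    nlinarith [hb' t ht R hR]

/-! ### The transformed variable `p = uₓ - (sech² / tanh) u` -/

/-- The continuous extension to the origin of `u / tanh`, for `u` vanishing at the origin. -/
def quot (ux : ℝ → ℝ → ℝ) (t x : ℝ) : ℝ := (tanhSlope x)⁻¹ * ∫ y in (0 : ℝ)..1, ux t (x * y)

/-- The continuous extension to the origin of `uₓ - (sech² / tanh) u = tanh · (u / tanh)ₓ`.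
The function `tanh` is the odd threshold resonance of the linearised operator
`-∂ₓ² + 1 - 2 sech²`, and `p` vanishes exactly on its multiples. -/
def pvar (ux : ℝ → ℝ → ℝ) (t x : ℝ) : ℝ := ux t x - sech x ^ 2 * quot ux t x

/-- The spatial derivative of `pvar` on the open half-line. -/
def pvarX (u ux uxx : ℝ → ℝ → ℝ) (t x : ℝ) : ℝ :=
  uxx t x + 2 * sech x ^ 2 * u t x - sech x ^ 2 / tanh x * pvar ux t x

lemma Sol.continuous_quot (h : Sol u ut ux utt uxx utx) :
    Continuous (Function.uncurry (quot ux)) := by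
  have h1 : Continuous fun q : ℝ × ℝ => ∫ y in (0 : ℝ)..1, ux q.1 (q.2 * y) := by
    refine intervalIntegral.continuous_parametric_intervalIntegral_of_continuous' ?_ 0 1
    have := h.c_ux
    unfold Function.uncurry at *
    fun_prop
  have h2 : Continuous fun q : ℝ × ℝ => (tanhSlope q.2)⁻¹ :=
    Continuous.inv₀ (by fun_prop) fun q => (tanhSlope_pos q.2).ne'
  exact h2.mul h1

lemma Sol.continuous_pvar (h : Sol u ut ux utt uxx utx) :
    Continuous (Function.uncurry (pvar ux)) := by
  have h1 := h.continuous_quot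
  have h2 := h.c_ux
  have h3 := continuous_sech
  unfold Function.uncurry at *
  unfold pvar
  fun_prop

lemma Sol.tanh_mul_quot (h : Sol u ut ux utt uxx utx) {t : ℝ} (ht : 0 ≤ t) (x : ℝ) :
    tanh x * quot ux t x = u t x := by
  have h1 : x * ∫ y in (0 : ℝ)..1, ux t (x * y) = u t x := by
    rw [intervalIntegral.mul_integral_comp_mul_left (f := fun z => ux t z),
      intervalIntegral.integral_eq_sub_of_hasDerivAt (fun z _ => h.hux t z)]
    · simp [h.zero t ht]
    · exact (cont_slice h.c_ux t).intervalIntegrable _ _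
  have h2 := tanhSlope_pos x
  rw [quot, ← mul_tanhSlope, ← h1]
  field_simp

lemma Sol.hasDerivAt_quot (h : Sol u ut ux utt uxx utx) {t x : ℝ} (ht : 0 ≤ t) (hx : 0 < x) :
    HasDerivAt (quot ux t) (pvar ux t x / tanh x) x := by
  have hth := tanh_pos' hx
  have h1 := (h.hux t x).div (hasDerivAt_tanh' x) hth.ne'
  have h4 : quot ux t =ᶠ[nhds x] fun z => u t z / tanh z := by
    filter_upwards [Ioi_mem_nhds hx] with z hz
    have := tanh_pos' hz
    rw [← h.tanh_mul_quot ht z]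
    field_simp
  refine (h1.congr_of_eventuallyEq h4).congr_deriv ?_
  rw [pvar, ← h.tanh_mul_quot ht x]
  field_simp

lemma Sol.hasDerivAt_pvar (h : Sol u ut ux utt uxx utx) {t x : ℝ} (ht : 0 ≤ t) (hx : 0 < x) :
    HasDerivAt (pvar ux t) (pvarX u ux uxx t x) x := by
  have h1 := (h.huxx t x).sub (((hasDerivAt_sech x).fun_pow 2).mul (h.hasDerivAt_quot ht hx))
  refine h1.congr_deriv ?_
  rw [pvarX, ← h.tanh_mul_quot ht x]
  push_cast
  ring

/-- The nonlinearity `sin (K + u) - sin K - cos K · u`. -/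
def nl (u : ℝ → ℝ → ℝ) (t x : ℝ) : ℝ :=
  cos (K x) * (sin (u t x) - u t x) + sin (K x) * (cos (u t x) - 1)

lemma Sol.utt_eq (h : Sol u ut ux utt uxx utx) {t : ℝ} (ht : 0 ≤ t) (x : ℝ) :
    utt t x = pvarX u ux uxx t x + sech x ^ 2 / tanh x * pvar ux t x - u t x - nl u t x := by
  rw [h.eqn t ht x, pvarX, nl, sin_add]
  have := cos_K x
  linear_combination (-u t x) * this

/-- Exact identity behind the comparison of `∫ uₓ²` and `∫ p²`. -/
lemma Sol.int_pvar (h : Sol u ut ux utt uxx utx) {t L : ℝ} (ht : 0 ≤ t) (hL : 0 ≤ L) :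
    ∫ x in (0 : ℝ)..L, (ux t x ^ 2 - pvar ux t x ^ 2 - 2 * sech x ^ 2 * u t x ^ 2)
      = sech L ^ 2 * quot ux t L * u t L := by
  have c1 := cont_slice h.c_u t
  have c2 := cont_slice h.c_ux t
  have c3 := cont_slice h.continuous_pvar t
  have c4 := cont_slice h.continuous_quot t
  have c5 := continuous_sech
  let g : ℝ → ℝ := fun x => sech x ^ 2 * quot ux t x * u t x
  have hd : ∀ x, 0 < x → x < L → HasDerivAt g
      (ux t x ^ 2 - pvar ux t x ^ 2 - 2 * sech x ^ 2 * u t x ^ 2) x := by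
    intro x hx _
    have hth := tanh_pos' hx
    have d := (((hasDerivAt_sech x).fun_pow 2).mul (h.hasDerivAt_quot ht hx)).mul (h.hux t x)
    refine d.congr_deriv ?_
    simp only [pvar, Pi.mul_apply]
    rw [← h.tanh_mul_quot ht x]
    field_simp
    push_cast
    ring
  have g0 : g 0 = 0 := by simp [g, h.zero t ht]
  have cg : ContinuousOn g (Set.Icc 0 L) := by
    apply Continuous.continuousOn; simp only [g]; fun_prop
  have cf : ContinuousOn (fun x => ux t x ^ 2 - pvar ux t x ^ 2 - 2 * sech x ^ 2 * u t x ^ 2)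
      (Set.Icc 0 L) := by
    apply Continuous.continuousOn; fun_prop
  have a1 := integral_le_sub_of_deriv hL cg hd cf fun x _ _ => le_rfl
  have a2 := sub_le_integral_of_deriv hL cg hd cf fun x _ _ => le_rfl
  rw [g0, sub_zero] at a1 a2
  exact le_antisymm a1 a2

lemma Sol.int_pvar_expand (h : Sol u ut ux utt uxx utx) {t L : ℝ} (ht : 0 ≤ t) (hL : 0 ≤ L) :
    (∫ x in (0 : ℝ)..L, ux t x ^ 2) = (∫ x in (0 : ℝ)..L, pvar ux t x ^ 2)
      + (∫ x in (0 : ℝ)..L, 2 * sech x ^ 2 * u t x ^ 2)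
      + sech L ^ 2 * quot ux t L * u t L := by
  have c1 := cont_slice h.c_u t
  have c2 := cont_slice h.c_ux t
  have c3 := cont_slice h.continuous_pvar t
  have c5 := continuous_sech
  have key := h.int_pvar ht hL
  rw [intervalIntegral.integral_sub (Continuous.intervalIntegrable (by fun_prop) _ _)
    (Continuous.intervalIntegrable (by fun_prop) _ _),
    intervalIntegral.integral_sub (Continuous.intervalIntegrable (by fun_prop) _ _)
    (Continuous.intervalIntegrable (by fun_prop) _ _)] at key
  linarith

lemma Sol.quot_mul_nonneg (h : Sol u ut ux utt uxx utx) {t x : ℝ} (ht : 0 ≤ t) (hx : 0 ≤ x) :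
    0 ≤ quot ux t x * u t x := by
  rw [← h.tanh_mul_quot ht x]
  have := tanh_nonneg' hx
  have e : quot ux t x * (tanh x * quot ux t x) = tanh x * quot ux t x ^ 2 := by ring
  rw [e]; positivity

lemma Sol.int_pvar_le (h : Sol u ut ux utt uxx utx) {E : ℝ} (hs : Small u ut ux E)
    {t L : ℝ} (ht : 0 ≤ t) (hL : 0 ≤ L) : ∫ x in (0 : ℝ)..L, pvar ux t x ^ 2 ≤ E ^ 2 := by
  have key := h.int_pvar_expand ht hL
  have h1 : 0 ≤ ∫ x in (0 : ℝ)..L, 2 * sech x ^ 2 * u t x ^ 2 :=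
    intervalIntegral.integral_nonneg hL fun x _ => by positivity
  have h2 : 0 ≤ sech L ^ 2 * quot ux t L * u t L := by
    rw [mul_assoc]; exact mul_nonneg (by positivity) (h.quot_mul_nonneg ht hL)
  linarith [hs.int_ux t ht L hL]

lemma Sol.int_ux_le (h : Sol u ut ux utt uxx utx) {t Y : ℝ} (ht : 0 ≤ t) (hY : 1 ≤ Y) :
    (∫ x in (0 : ℝ)..Y, ux t x ^ 2) ≤ (∫ x in (0 : ℝ)..Y, pvar ux t x ^ 2)
      + 2 * (∫ x in (0 : ℝ)..Y, u t x ^ 2) + u t Y ^ 2 := by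
  have hY0 : 0 < Y := by linarith
  have c1 := cont_slice h.c_u t
  have c5 := continuous_sech
  have key := h.int_pvar_expand ht hY0.le
  have h1 : ∫ x in (0 : ℝ)..Y, 2 * sech x ^ 2 * u t x ^ 2 ≤ ∫ x in (0 : ℝ)..Y, 2 * u t x ^ 2 := by
    refine integral_mono_cont hY0.le (by fun_prop) (by fun_prop) fun x _ _ => ?_
    have := sech_le_one x
    have := sech_pos x
    refine mul_le_mul_of_nonneg_right ?_ (sq_nonneg _)
    nlinarith
  rw [intervalIntegral.integral_const_mul] at h1
  have h2 : sech Y ^ 2 * quot ux t Y * u t Y ≤ u t Y ^ 2 := by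
    have e := h.tanh_mul_quot ht Y
    have e1 := mul_sech_le_tanh hY0.le
    have e2 := sech_le_one Y
    have e3 := sech_pos Y
    have e4 : sech Y ^ 2 ≤ tanh Y := by nlinarith
    have e5 := mul_le_mul_of_nonneg_right e4 (h.quot_mul_nonneg ht hY0.le)
    calc _ = sech Y ^ 2 * (quot ux t Y * u t Y) := by ring
      _ ≤ tanh Y * (quot ux t Y * u t Y) := e5
      _ = u t Y ^ 2 := by rw [← e]; ring
  linarith

/-- The dissipation controlled by the virial argument. -/
def dis (ux : ℝ → ℝ → ℝ) (A t : ℝ) : ℝ := ∫ x in (0 : ℝ)..A, cut A x * pvar ux t x ^ 2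

lemma dis_nonneg (ux : ℝ → ℝ → ℝ) {A : ℝ} (hA : 0 < A) (t : ℝ) : 0 ≤ dis ux A t :=
  intervalIntegral.integral_nonneg hA.le fun x _ => mul_nonneg (cut_nonneg A x) (sq_nonneg _)

/-- The bound `4 E² / A + 2 ∫ cut |u| |p|` on `cut · u²`. -/
def supBd (u ux : ℝ → ℝ → ℝ) (E A t : ℝ) : ℝ :=
  4 * E ^ 2 / A + 2 * ∫ x in (0 : ℝ)..A, cut A x * (|u t x| * |pvar ux t x|)

lemma supBd_nonneg (u ux : ℝ → ℝ → ℝ) (E : ℝ) {A : ℝ} (hA : 0 < A) (t : ℝ) :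
    0 ≤ supBd u ux E A t := by
  have : 0 ≤ ∫ x in (0 : ℝ)..A, cut A x * (|u t x| * |pvar ux t x|) :=
    intervalIntegral.integral_nonneg hA.le fun x _ => mul_nonneg (cut_nonneg A x) (by positivity)
  unfold supBd
  positivity

lemma Sol.sup_le (h : Sol u ut ux utt uxx utx) {E A : ℝ} (hs : Small u ut ux E) (hA : 0 < A)
    {t x : ℝ} (ht : 0 ≤ t) (hx : 0 ≤ x) : cut A x * u t x ^ 2 ≤ supBd u ux E A t := by
  rcases le_or_gt A x with hxA | hxA
  · rw [cut_eq_zero hA hxA, zero_mul]; exact supBd_nonneg u ux E hA t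
  rcases hx.eq_or_lt with rfl | hx
  · rw [h.zero t ht]; simpa using supBd_nonneg u ux E hA t
  have c1 := cont_slice h.c_u t
  have c3 := cont_slice h.continuous_pvar t
  have c4 := cont_slice h.continuous_quot t
  have hth := tanh_pos' hx
  let D : ℝ → ℝ := fun y => |cutD A y| * u t y ^ 2 + 2 * (cut A y * (|u t y| * |pvar ux t y|))
  have cD : Continuous D := by simp only [D]; fun_prop
  have hD : ∀ y, 0 ≤ D y := fun y => by
    have := cut_nonneg A y
    simp only [D]; positivity
  let g : ℝ → ℝ := fun y => cut A y * quot ux t y ^ 2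
  have cg : Continuous g := by simp only [g]; fun_prop
  let g' : ℝ → ℝ := fun y => cutD A y * quot ux t y ^ 2
    + cut A y * (2 * quot ux t y * (pvar ux t y / tanh y))
  have hd : ∀ y, x < y → y < A → HasDerivAt g (g' y) y := by
    intro y hy _
    have d := (hasDerivAt_cut A y).mul ((h.hasDerivAt_quot ht (hx.trans hy)).fun_pow 2)
    refine d.congr_deriv ?_
    simp only [g']; push_cast; ring
  have hle : ∀ y, x < y → y < A → -((tanh x ^ 2)⁻¹ * D y) ≤ g' y := by
    intro y hy _
    have hy0 : 0 < y := hx.trans hy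
    have hty := tanh_pos' hy0
    have hm : tanh x ^ 2 ≤ tanh y ^ 2 := pow_le_pow_left₀ hth.le (tanh_mono' hy.le) 2
    have hinv : (tanh y ^ 2)⁻¹ ≤ (tanh x ^ 2)⁻¹ := inv_anti₀ (by positivity) hm
    have e1 : g' y = (tanh y ^ 2)⁻¹
        * (cutD A y * u t y ^ 2 + 2 * (cut A y * (u t y * pvar ux t y))) := by
      simp only [g']
      rw [← h.tanh_mul_quot ht y]
      field_simp
    have e2 : |cutD A y * u t y ^ 2 + 2 * (cut A y * (u t y * pvar ux t y))| ≤ D y := by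
      refine (abs_add_le _ _).trans ?_
      simp only [D]
      rw [abs_mul, abs_of_nonneg (sq_nonneg (u t y)), abs_mul, abs_mul, abs_two, abs_mul,
        abs_of_nonneg (cut_nonneg A y)]
    have e3 := (abs_le.1 e2).1
    rw [e1]
    have e4 := mul_le_mul_of_nonneg_left e3 (by positivity : 0 ≤ (tanh y ^ 2)⁻¹)
    have e5 := mul_le_mul_of_nonneg_right hinv (hD y)
    linarith
  have key := integral_le_sub_of_deriv hxA.le cg.continuousOn hd
    (f := fun y => -((tanh x ^ 2)⁻¹ * D y)) (Continuous.continuousOn (by fun_prop)) hle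
  rw [intervalIntegral.integral_neg, intervalIntegral.integral_const_mul] at key
  have gA : g A = 0 := by simp [g, cut_eq_zero hA le_rfl]
  have k1 : cut A x * u t x ^ 2 ≤ ∫ y in x..A, D y := by
    have e : cut A x * u t x ^ 2 = tanh x ^ 2 * g x := by
      simp only [g]; rw [← h.tanh_mul_quot ht x]; ring
    have k2 : g x ≤ (tanh x ^ 2)⁻¹ * ∫ y in x..A, D y := by linarith
    rw [e]
    calc _ ≤ tanh x ^ 2 * ((tanh x ^ 2)⁻¹ * ∫ y in x..A, D y) :=
          mul_le_mul_of_nonneg_left k2 (by positivity)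
      _ = _ := by field_simp
  have k3 : ∫ y in x..A, D y ≤ ∫ y in (0 : ℝ)..A, D y :=
    intervalIntegral.integral_mono_interval hx.le hxA.le le_rfl
      (Eventually.of_forall fun y => hD y) (cD.intervalIntegrable _ _)
  have k4 : ∫ y in (0 : ℝ)..A, D y = (∫ y in (0 : ℝ)..A, |cutD A y| * u t y ^ 2)
      + 2 * ∫ y in (0 : ℝ)..A, cut A y * (|u t y| * |pvar ux t y|) := by
    simp only [D]
    rw [intervalIntegral.integral_add (Continuous.intervalIntegrable (by fun_prop) _ _)
      (Continuous.intervalIntegrable (by fun_prop) _ _), intervalIntegral.integral_const_mul]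
  have k5 : ∫ y in (0 : ℝ)..A, |cutD A y| * u t y ^ 2 ≤ 4 * E ^ 2 / A := by
    have : ∫ y in (0 : ℝ)..A, |cutD A y| * u t y ^ 2 ≤ ∫ y in (0 : ℝ)..A, 4 / A * u t y ^ 2 :=
      integral_mono_cont hA.le (by fun_prop) (by fun_prop) fun y hy _ =>
        mul_le_mul_of_nonneg_right (abs_cutD_le hA hy) (sq_nonneg _)
    rw [intervalIntegral.integral_const_mul] at this
    calc _ ≤ _ := this
      _ ≤ 4 / A * E ^ 2 := mul_le_mul_of_nonneg_left (hs.int_u t ht A hA.le) (by positivity)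
      _ = _ := by ring
  unfold supBd
  linarith

/-- Cauchy-Schwarz for the cross term in `supBd`. -/
lemma Sol.supBd_sq_le (h : Sol u ut ux utt uxx utx) {E A : ℝ} (hs : Small u ut ux E) (hA : 0 < A)
    {t : ℝ} (ht : 0 ≤ t) :
    supBd u ux E A t ^ 2 ≤ 32 * E ^ 4 / A ^ 2 + 8 * E ^ 2 * dis ux A t := by
  have c1 := cont_slice h.c_u t
  have c3 := cont_slice h.continuous_pvar t
  obtain ⟨X, hX⟩ : ∃ X, X = ∫ x in (0 : ℝ)..A, cut A x * (|u t x| * |pvar ux t x|) := ⟨_, rfl⟩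
  have hq : ∀ s : ℝ, 0 ≤ dis ux A t * (s * s) + (-(2 * X)) * s + E ^ 2 := by
    intro s
    have h1 : ∫ x in (0 : ℝ)..A, (2 * s) * (cut A x * (|u t x| * |pvar ux t x|))
        ≤ ∫ x in (0 : ℝ)..A, ((s * s) * (cut A x * pvar ux t x ^ 2) + u t x ^ 2) := by
      refine integral_mono_cont hA.le (by fun_prop) (by fun_prop) fun x _ _ => ?_
      have e0 := cut_nonneg A x
      have e1 := cut_le_one A x
      have e2 : 0 ≤ cut A x * (s * |pvar ux t x| - |u t x|) ^ 2 :=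
        mul_nonneg e0 (sq_nonneg _)
      have e3 : cut A x * u t x ^ 2 ≤ 1 * u t x ^ 2 :=
        mul_le_mul_of_nonneg_right e1 (sq_nonneg _)
      have e4 : cut A x * (s * |pvar ux t x| - |u t x|) ^ 2
          = s * s * (cut A x * pvar ux t x ^ 2) - 2 * s * (cut A x * (|u t x| * |pvar ux t x|))
            + cut A x * u t x ^ 2 := by
        rw [← sq_abs (pvar ux t x), ← sq_abs (u t x)]; ring
      linarith
    rw [intervalIntegral.integral_add (Continuous.intervalIntegrable (by fun_prop) _ _)
      (Continuous.intervalIntegrable (by fun_prop) _ _), intervalIntegral.integral_const_mul,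
      intervalIntegral.integral_const_mul, ← hX] at h1
    have := hs.int_u t ht A hA.le
    unfold dis
    linarith
  have hdisc := discrim_le_zero hq
  unfold discrim at hdisc
  have hX2 : X ^ 2 ≤ E ^ 2 * dis ux A t := by nlinarith
  have e : supBd u ux E A t = 4 * E ^ 2 / A + 2 * X := by rw [hX, supBd]
  rw [e]
  have e2 : (4 * E ^ 2 / A) ^ 2 = 16 * E ^ 4 / A ^ 2 := by field_simp; ring
  have e3 : 32 * E ^ 4 / A ^ 2 = 2 * (16 * E ^ 4 / A ^ 2) := by ring
  rw [e3, ← e2]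
  nlinarith [sq_nonneg (4 * E ^ 2 / A - 2 * X)]

/-! ### The virial identity -/

/-- The primitive in `u` of the nonlinearity `nl`, at fixed `x`. -/
def pot (u : ℝ → ℝ → ℝ) (t x : ℝ) : ℝ :=
  cos (K x) * (1 - cos (u t x) - u t x ^ 2 / 2) + sin (K x) * (sin (u t x) - u t x)

/-- The derivative in `x` of `pot` at fixed value of `u`. -/
def potX (u : ℝ → ℝ → ℝ) (t x : ℝ) : ℝ :=
  2 * sech x * (-(sin (K x)) * (1 - cos (u t x) - u t x ^ 2 / 2)
    + cos (K x) * (sin (u t x) - u t x))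

lemma Sol.hasDerivAt_pot (h : Sol u ut ux utt uxx utx) (t x : ℝ) :
    HasDerivAt (pot u t) (potX u t x + nl u t x * ux t x) x := by
  have d0 := h.hux t x
  have d1 := ((hasDerivAt_K x).cos.mul
    ((d0.cos.const_sub 1).sub ((d0.fun_pow 2).div_const 2))).add
    ((hasDerivAt_K x).sin.mul (d0.sin.sub d0))
  refine d1.congr_deriv ?_
  simp only [potX, nl, Pi.sub_apply]
  push_cast
  ring

lemma abs_sin_sub_le {z : ℝ} (hz : |z| ≤ 1) : |sin z - z| ≤ |z| ^ 3 / 5 := by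
  have h := sin_bound hz
  have h1 : |z| ^ 5 ≤ |z| ^ 3 := pow_le_pow_of_le_one (abs_nonneg _) hz (by norm_num)
  have h2 : |z ^ 3 / 6| = |z| ^ 3 / 6 := by rw [abs_div, abs_pow]; norm_num
  have h3 : sin z - z = (sin z - (z - z ^ 3 / 6)) - z ^ 3 / 6 := by ring
  rw [h3]
  refine (abs_sub _ _).trans ?_
  rw [h2]
  have := pow_nonneg (abs_nonneg z) 3
  linarith

lemma abs_one_sub_cos_sub_le {z : ℝ} (hz : |z| ≤ 1) : |1 - cos z - z ^ 2 / 2| ≤ |z| ^ 4 / 10 := by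
  have h := cos_bound hz
  have h3 : 1 - cos z - z ^ 2 / 2 = -(cos z - (1 - z ^ 2 / 2)) := by ring
  rw [h3, abs_neg]
  have := pow_nonneg (abs_nonneg z) 4
  linarith

lemma abs_cos_sub_one_le (z : ℝ) : |cos z - 1| ≤ |z| ^ 2 / 2 := by
  have h1 := one_sub_sq_div_two_le_cos (x := z)
  have h2 := cos_le_one z
  rw [sq_abs, abs_le]
  constructor <;> linarith [sq_nonneg z]

lemma abs_sin_K_le (x : ℝ) : |sin (K x)| ≤ 2 * sech x := by
  have h := sech_pos x
  have h1 := tanh_sq_add x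
  have h2 : |tanh x| ≤ 1 := abs_le_one_iff_mul_self_le_one.2 (by nlinarith)
  rw [sin_K, abs_neg, abs_mul, abs_mul, abs_two, abs_of_pos h]
  nlinarith

lemma abs_pot_le {t x : ℝ} (hz : |u t x| ≤ 1) :
    |pot u t x| ≤ |u t x| ^ 4 / 10 + 2 / 5 * (sech x * |u t x| ^ 3) := by
  have h1 := abs_one_sub_cos_sub_le hz
  have h2 := abs_sin_sub_le hz
  have h3 := abs_sin_K_le x
  have h4 := abs_cos_le_one (K x)
  have h5 := sech_pos x
  unfold pot
  refine (abs_add_le _ _).trans ?_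
  rw [abs_mul, abs_mul]
  have a1 := mul_le_mul h4 h1 (abs_nonneg _) (by norm_num)
  have a2 := mul_le_mul h3 h2 (abs_nonneg _) (by positivity)
  linarith

lemma abs_nl_le {t x : ℝ} (hz : |u t x| ≤ 1) :
    |nl u t x| ≤ |u t x| ^ 3 / 5 + sech x * |u t x| ^ 2 := by
  have h1 := abs_cos_sub_one_le (u t x)
  have h2 := abs_sin_sub_le hz
  have h3 := abs_sin_K_le x
  have h4 := abs_cos_le_one (K x)
  have h5 := sech_pos x
  unfold nl
  refine (abs_add_le _ _).trans ?_
  rw [abs_mul, abs_mul]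
  have a1 := mul_le_mul h4 h2 (abs_nonneg _) (by norm_num)
  have a2 := mul_le_mul h3 h1 (abs_nonneg _) (by positivity)
  linarith

lemma abs_potX_le {t x : ℝ} (hz : |u t x| ≤ 1) :
    |potX u t x| ≤ sech x * |u t x| ^ 3 := by
  have h1 := abs_one_sub_cos_sub_le hz
  have h2 := abs_sin_sub_le hz
  have h3 : |-(sin (K x))| ≤ 1 := by rw [abs_neg]; exact abs_sin_le_one _
  have h4 := abs_cos_le_one (K x)
  have h5 := sech_pos x
  have h6 : |u t x| ^ 4 ≤ |u t x| ^ 3 := pow_le_pow_of_le_one (abs_nonneg _) hz (by norm_num)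
  have h7 := pow_nonneg (abs_nonneg (u t x)) 3
  unfold potX
  rw [abs_mul, abs_of_pos (by positivity : 0 < 2 * sech x)]
  have a0 := abs_add_le (-(sin (K x)) * (1 - cos (u t x) - u t x ^ 2 / 2))
    (cos (K x) * (sin (u t x) - u t x))
  rw [abs_mul, abs_mul] at a0
  have a1 := mul_le_mul h4 h2 (abs_nonneg _) (by norm_num)
  have a2 := mul_le_mul h3 h1 (abs_nonneg _) (by norm_num)
  nlinarith

/-- The nonlinear terms of the virial identity are quartic where `cut` lives, and cubic only with
an exponentially localised coefficient. -/
lemma virial_nl_le {A t x : ℝ} (hx : 0 ≤ x) (hz : |u t x| ≤ 1) :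
    |psiD A x * pot u t x + psi A x * potX u t x + sech x ^ 2 * mulQ A x * (u t x * nl u t x)
      - 1 / 2 * cut A x * (u t x * nl u t x)|
      ≤ cut A x * u t x ^ 4 + 4 * ((1 + x) * sech x * |u t x| ^ 3) := by
  have hs := sech_pos x
  have hs1 := sech_le_one x
  have m0 := cut_nonneg A x
  have m1 := cut_le_one A x
  have z0 := abs_nonneg (u t x)
  have e4 : u t x ^ 4 = |u t x| ^ 4 := by rw [← abs_pow, abs_of_nonneg (by positivity)]
  have h43 : |u t x| ^ 4 ≤ |u t x| ^ 3 := pow_le_pow_of_le_one z0 hz (by norm_num)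
  have z3 : 0 ≤ |u t x| ^ 3 := by positivity
  have z4 : 0 ≤ |u t x| ^ 4 := by positivity
  have sz : 0 ≤ sech x * |u t x| ^ 3 := by positivity
  have b1 : |psiD A x * pot u t x| ≤ cut A x * |u t x| ^ 4 / 10
      + 7 / 5 * (sech x * |u t x| ^ 3) := by
    rw [abs_mul]
    have := mul_le_mul (abs_psiD_le A hx) (abs_pot_le hz) (abs_nonneg _) (by positivity)
    refine this.trans ?_
    have c1 : cut A x * (sech x * |u t x| ^ 3) ≤ 1 * (sech x * |u t x| ^ 3) :=
      mul_le_mul_of_nonneg_right m1 sz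
    have c2 : sech x * |u t x| ^ 4 ≤ sech x * |u t x| ^ 3 := mul_le_mul_of_nonneg_left h43 hs.le
    have c3 : sech x * (sech x * |u t x| ^ 3) ≤ 1 * (sech x * |u t x| ^ 3) :=
      mul_le_mul_of_nonneg_right hs1 sz
    nlinarith
  have b2 : |psi A x * potX u t x| ≤ x * (sech x * |u t x| ^ 3) := by
    rw [abs_mul, abs_of_nonneg (psi_nonneg A hx)]
    exact mul_le_mul (psi_le_self A hx) (abs_potX_le hz) (abs_nonneg _) hx
  have bn : |u t x * nl u t x| ≤ |u t x| ^ 4 / 5 + sech x * |u t x| ^ 3 := by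
    rw [abs_mul]
    have := mul_le_mul_of_nonneg_left (abs_nl_le hz) z0
    refine this.trans (le_of_eq (by ring))
  have b3 : |sech x ^ 2 * mulQ A x * (u t x * nl u t x)| ≤ 6 / 5 * (sech x * |u t x| ^ 3) := by
    have q0 : 0 ≤ sech x ^ 2 * mulQ A x := mul_nonneg (by positivity) (mulQ_nonneg A x)
    rw [abs_mul, abs_of_nonneg q0]
    have := mul_le_mul (sech_sq_mulQ_le_sech A hx) bn (abs_nonneg _) hs.le
    refine this.trans ?_
    have c2 : sech x * |u t x| ^ 4 ≤ sech x * |u t x| ^ 3 := mul_le_mul_of_nonneg_left h43 hs.le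
    have c3 : sech x * (sech x * |u t x| ^ 3) ≤ 1 * (sech x * |u t x| ^ 3) :=
      mul_le_mul_of_nonneg_right hs1 sz
    nlinarith
  have b4 : |1 / 2 * cut A x * (u t x * nl u t x)| ≤ cut A x * |u t x| ^ 4 / 10
      + 1 / 2 * (sech x * |u t x| ^ 3) := by
    rw [abs_mul, abs_of_nonneg (by positivity)]
    have := mul_le_mul_of_nonneg_left bn (by positivity : 0 ≤ 1 / 2 * cut A x)
    refine this.trans ?_
    have c1 : cut A x * (sech x * |u t x| ^ 3) ≤ 1 * (sech x * |u t x| ^ 3) :=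
      mul_le_mul_of_nonneg_right m1 sz
    nlinarith
  rw [e4]
  refine (abs_sub _ _).trans ?_
  have t1 := abs_add_le (psiD A x * pot u t x + psi A x * potX u t x)
    (sech x ^ 2 * mulQ A x * (u t x * nl u t x))
  have t2 := abs_add_le (psiD A x * pot u t x) (psi A x * potX u t x)
  have mz : 0 ≤ cut A x * |u t x| ^ 4 := by positivity
  have xz : 0 ≤ x * (sech x * |u t x| ^ 3) := by positivity
  nlinarith

/-- The virial density `(ψ p + cut · u / 2) uₜ`, with `ψ p` expanded so that it involves only `u`
and `uₓ`. -/
def vir (u ut ux : ℝ → ℝ → ℝ) (A t x : ℝ) : ℝ :=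
  (psi A x * ux t x + (1 / 2 * cut A x - sech x ^ 2 * mulQ A x) * u t x) * ut t x

/-- The time derivative of `vir`. -/
def virT (u ut ux utt utx : ℝ → ℝ → ℝ) (A t x : ℝ) : ℝ :=
  (psi A x * utx t x + (1 / 2 * cut A x - sech x ^ 2 * mulQ A x) * ut t x) * ut t x
    + (psi A x * ux t x + (1 / 2 * cut A x - sech x ^ 2 * mulQ A x) * u t x) * utt t x

/-- The flux of the virial density. -/
def virG (u ut ux : ℝ → ℝ → ℝ) (A t x : ℝ) : ℝ :=
  1 / 2 * psi A x * ut t x ^ 2 + 1 / 2 * psi A x * pvar ux t x ^ 2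
    + 1 / 2 * cut A x * (u t x * pvar ux t x) - 1 / 2 * psi A x * u t x ^ 2 - psi A x * pot u t x

/-- The bulk term of the virial identity. -/
def virB (u ux : ℝ → ℝ → ℝ) (A t x : ℝ) : ℝ :=
  psiD A x * pvar ux t x ^ 2 + 1 / 2 * cutD A x * (u t x * pvar ux t x)
    - (psiD A x * pot u t x + psi A x * potX u t x + sech x ^ 2 * mulQ A x * (u t x * nl u t x)
      - 1 / 2 * cut A x * (u t x * nl u t x))

/-- The local virial identity `∂ₓ virG = ∂ₜ vir + virB`. -/
lemma Sol.hasDerivAt_virG (h : Sol u ut ux utt uxx utx) (A : ℝ) {t x : ℝ} (ht : 0 ≤ t)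
    (hx : 0 < x) :
    HasDerivAt (virG u ut ux A t) (virT u ut ux utt utx A t x + virB u ux A t x) x := by
  have hth := tanh_pos' hx
  have dψ := hasDerivAt_psi A hx
  have dp := h.hasDerivAt_pvar ht hx
  have dm := hasDerivAt_cut A x
  have du := h.hux t x
  have d := (((((dψ.const_mul (1 / 2)).mul ((h.hutx t x).fun_pow 2)).add
    ((dψ.const_mul (1 / 2)).mul (dp.fun_pow 2))).add
    ((dm.const_mul (1 / 2)).mul (du.mul dp))).sub
    ((dψ.const_mul (1 / 2)).mul (du.fun_pow 2))).sub (dψ.mul (h.hasDerivAt_pot t x))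
  refine d.congr_deriv ?_
  simp only [virT, virB, Pi.mul_apply]
  rw [h.utt_eq ht x]
  have e1 : ux t x = pvar ux t x + sech x ^ 2 * quot ux t x := by rw [pvar]; ring
  have e2 := h.tanh_mul_quot ht x
  have e3 : ux t x = pvar ux t x + sech x ^ 2 / tanh x * u t x := by
    rw [e1, ← e2]; simp only [pvar]; field_simp
  generalize pvarX u ux uxx t x = px at *
  rw [e3]
  simp only [psiD, psi]
  generalize pvar ux t x = p
  generalize nl u t x = n
  generalize pot u t x = N
  generalize potX u t x = NX
  push_cast
  field_simp
  ring

/-! ### The virial inequality -/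

lemma virB_ge {A t x : ℝ} (hA : 0 < A) (hx : 0 ≤ x) (hz : |u t x| ≤ 1) :
    cut A x * pvar ux t x ^ 2 / 8 - 2000 / A ^ 2 * pvar ux t x ^ 2 - 8 / A ^ 2 * u t x ^ 2
      - (cut A x * u t x ^ 4 + 4 * ((1 + x) * sech x * |u t x| ^ 3)) ≤ virB u ux A t x := by
  have h1 := (abs_le.1 (virial_nl_le (A := A) hx hz)).2
  have h2 := mul_le_mul_of_nonneg_right (psiD_ge hA hx) (sq_nonneg (pvar ux t x))
  have h3 : -(cut A x * pvar ux t x ^ 2 / 8 + 8 / A ^ 2 * u t x ^ 2)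
      ≤ 1 / 2 * cutD A x * (u t x * pvar ux t x) := by
    have e1 := mul_le_mul_of_nonneg_right (cutD_sq_le hA hx) (sq_nonneg (pvar ux t x))
    have e2 : 0 ≤ (A / 8 * (cutD A x * pvar ux t x) + 2 / A * (2 * u t x)) ^ 2 := sq_nonneg _
    have e3 : (A / 8 * (cutD A x * pvar ux t x) + 2 / A * (2 * u t x)) ^ 2
        = A ^ 2 / 64 * (cutD A x ^ 2 * pvar ux t x ^ 2) + cutD A x * (u t x * pvar ux t x)
          + 16 / A ^ 2 * u t x ^ 2 := by field_simp; ring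
    have e4 : A ^ 2 / 64 * (cutD A x ^ 2 * pvar ux t x ^ 2)
        ≤ A ^ 2 / 64 * (16 / A ^ 2 * cut A x * pvar ux t x ^ 2) :=
      mul_le_mul_of_nonneg_left e1 (by positivity)
    have e5 : A ^ 2 / 64 * (16 / A ^ 2 * cut A x * pvar ux t x ^ 2)
        = cut A x * pvar ux t x ^ 2 / 4 := by field_simp; ring
    have e6 : 16 / A ^ 2 * u t x ^ 2 = 2 * (8 / A ^ 2 * u t x ^ 2) := by ring
    linarith
  unfold virB
  linarith

lemma abs_virG_le {A t x : ℝ} (hA : 1 ≤ A) (hx : 0 ≤ x) (hz : |u t x| ≤ 1) :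
    |virG u ut ux A t x| ≤ A * (ut t x ^ 2 + pvar ux t x ^ 2 + 2 * u t x ^ 2) := by
  have p0 := psi_nonneg A hx
  have p1 := psi_le (by linarith : 0 < A) hx
  have m0 := cut_nonneg A x
  have m1 := cut_le_one A x
  have n1 : |pot u t x| ≤ u t x ^ 2 := by
    refine (abs_pot_le hz).trans ?_
    have hs1 := sech_le_one x
    have hs0 := sech_pos x
    have z4 : |u t x| ^ 4 ≤ |u t x| ^ 2 := pow_le_pow_of_le_one (abs_nonneg _) hz (by norm_num)
    have z3 : |u t x| ^ 3 ≤ |u t x| ^ 2 := pow_le_pow_of_le_one (abs_nonneg _) hz (by norm_num)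
    have z5 : sech x * |u t x| ^ 3 ≤ 1 * |u t x| ^ 2 :=
      mul_le_mul hs1 z3 (by positivity) (by norm_num)
    rw [sq_abs] at z4 z5
    nlinarith
  obtain ⟨n2, n3⟩ := abs_le.1 n1
  have q1 : |cut A x * (u t x * pvar ux t x)| ≤ A * ((u t x ^ 2 + pvar ux t x ^ 2) / 2) := by
    rw [abs_mul, abs_of_nonneg m0]
    refine mul_le_mul (by linarith) ?_ (abs_nonneg _) (by linarith)
    rw [abs_le]
    constructor <;> nlinarith [sq_nonneg (u t x + pvar ux t x), sq_nonneg (u t x - pvar ux t x)]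
  obtain ⟨q2, q3⟩ := abs_le.1 q1
  have a1 : psi A x * ut t x ^ 2 ≤ A * ut t x ^ 2 := mul_le_mul_of_nonneg_right p1 (sq_nonneg _)
  have a2 : psi A x * pvar ux t x ^ 2 ≤ A * pvar ux t x ^ 2 :=
    mul_le_mul_of_nonneg_right p1 (sq_nonneg _)
  have a3 : psi A x * u t x ^ 2 ≤ A * u t x ^ 2 := mul_le_mul_of_nonneg_right p1 (sq_nonneg _)
  have a4 : |psi A x * pot u t x| ≤ A * u t x ^ 2 := by
    rw [abs_mul, abs_of_nonneg p0]
    exact mul_le_mul p1 n1 (abs_nonneg _) (by linarith)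
  obtain ⟨a5, a6⟩ := abs_le.1 a4
  have b1 : 0 ≤ psi A x * ut t x ^ 2 := by positivity
  have b2 : 0 ≤ psi A x * pvar ux t x ^ 2 := by positivity
  have b3 : 0 ≤ psi A x * u t x ^ 2 := by positivity
  have b4 : 0 ≤ A * ut t x ^ 2 := by positivity
  have b5 : 0 ≤ A * pvar ux t x ^ 2 := by positivity
  have b6 : 0 ≤ A * u t x ^ 2 := by positivity
  unfold virG
  rw [abs_le]
  constructor <;> linarith

lemma Sol.hasDerivAt_vir (h : Sol u ut ux utt uxx utx) (A t x : ℝ) :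
    HasDerivAt (fun s => vir u ut ux A s x) (virT u ut ux utt utx A t x) t :=
  (((h.huxt t x).const_mul (psi A x)).add
    ((h.hut t x).const_mul (1 / 2 * cut A x - sech x ^ 2 * mulQ A x))).mul (h.hutt t x)

lemma Sol.continuous_vir (h : Sol u ut ux utt uxx utx) (A : ℝ) :
    Continuous (Function.uncurry (vir u ut ux A)) := by
  have c1 := h.c_u
  have c2 := h.c_ut
  have c3 := h.c_ux
  have c6 := continuous_sech
  unfold Function.uncurry at *
  unfold vir
  fun_prop

lemma Sol.continuous_virT (h : Sol u ut ux utt uxx utx) (A : ℝ) :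
    Continuous (Function.uncurry (virT u ut ux utt utx A)) := by
  have c1 := h.c_u
  have c2 := h.c_ut
  have c3 := h.c_ux
  have c4 := h.c_utt
  have c5 := h.c_utx
  have c6 := continuous_sech
  unfold Function.uncurry at *
  unfold virT
  fun_prop

lemma Sol.continuous_pot (h : Sol u ut ux utt uxx utx) (t : ℝ) : Continuous (pot u t) :=
  continuous_iff_continuousAt.2 fun x => (h.hasDerivAt_pot t x).continuousAt

/-- The space integral of the virial identity, with the nonlinear terms still on the right. -/
lemma Sol.virial_slice (h : Sol u ut ux utt uxx utx) {E A : ℝ} (hs : Small u ut ux E)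
    (hA : 1 ≤ A) {t : ℝ} (ht : 0 ≤ t) :
    (∫ x in (0 : ℝ)..(2 * A ^ 3), cut (2 * A ^ 3) x * virT u ut ux utt utx A t x)
      + dis ux A t / 16
      ≤ 2016 * E ^ 2 / A ^ 2 + (∫ x in (0 : ℝ)..(2 * A ^ 3), cut A x * u t x ^ 4)
        + 4 * ∫ x in (0 : ℝ)..(2 * A ^ 3), (1 + x) * sech x * |u t x| ^ 3 := by
  have hA0 : 0 < A := by linarith
  obtain ⟨L, hLdef⟩ : ∃ L, L = 2 * A ^ 3 := ⟨_, rfl⟩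
  have hL : 0 < L := by rw [hLdef]; positivity
  have hA3 : A ≤ A ^ 3 := le_self_pow₀ hA (by norm_num)
  have hAL : A ≤ L / 2 := by rw [hLdef]; linarith
  rw [← hLdef]
  have c1 := cont_slice h.c_u t
  have c2 := cont_slice h.c_ut t
  have c3 := cont_slice h.c_ux t
  have c4 := cont_slice h.continuous_pvar t
  have c5 := cont_slice (h.continuous_virT A) t
  have c6 := continuous_sech
  have c7 := h.continuous_pot t
  let g : ℝ → ℝ := fun x => cut L x * virG u ut ux A t x
  let g' : ℝ → ℝ := fun x => cutD L x * virG u ut ux A t x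
    + cut L x * (virT u ut ux utt utx A t x + virB u ux A t x)
  let R : ℝ → ℝ := fun x =>
    (4 * A / L) * (ut t x ^ 2 + pvar ux t x ^ 2 + 2 * u t x ^ 2) + 2000 / A ^ 2 * pvar ux t x ^ 2
      + 8 / A ^ 2 * u t x ^ 2
  let f : ℝ → ℝ := fun x => cut L x * virT u ut ux utt utx A t x
    + 1 / 16 * (cut A x * pvar ux t x ^ 2) - R x - cut A x * u t x ^ 4
    - 4 * ((1 + x) * sech x * |u t x| ^ 3)
  have hz : ∀ x, 0 ≤ x → |u t x| ≤ 1 := fun x hx => (hs.sup t ht x hx).trans hs.le_one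
  have cg : Continuous g := by simp only [g, virG]; fun_prop
  have cR : Continuous R := by simp only [R]; fun_prop
  have cf : Continuous f := by simp only [f]; fun_prop
  have hle : ∀ x, 0 < x → x < L → f x ≤ g' x := by
    intro x hx _
    have e1 : -(4 * A / L * (ut t x ^ 2 + pvar ux t x ^ 2 + 2 * u t x ^ 2))
        ≤ cutD L x * virG u ut ux A t x := by
      have e2 : |cutD L x * virG u ut ux A t x|
          ≤ 4 / L * (A * (ut t x ^ 2 + pvar ux t x ^ 2 + 2 * u t x ^ 2)) := by
        rw [abs_mul]
        exact mul_le_mul (abs_cutD_le hL hx.le) (abs_virG_le hA hx.le (hz x hx.le))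
          (abs_nonneg _) (by positivity)
      have e3 : 4 / L * (A * (ut t x ^ 2 + pvar ux t x ^ 2 + 2 * u t x ^ 2))
          = 4 * A / L * (ut t x ^ 2 + pvar ux t x ^ 2 + 2 * u t x ^ 2) := by ring
      rw [e3] at e2
      exact (abs_le.1 e2).1
    have w0 := cut_nonneg L x
    have w1 := cut_le_one L x
    have m0 := cut_nonneg A x
    have sp := sech_pos x
    have e4 := mul_le_mul_of_nonneg_left (virB_ge (ux := ux) hA0 hx.le (hz x hx.le)) w0
    -- the outer cutoff is bounded below on the support of the inner one
    have e5 : 1 / 16 * (cut A x * pvar ux t x ^ 2)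
        ≤ cut L x * (cut A x * pvar ux t x ^ 2 / 8) := by
      rcases le_total A x with hxA | hxA
      · simp [cut_eq_zero hA0 hxA]
      · have := cut_half hL hx.le (hxA.trans hAL)
        have h2 : 0 ≤ cut A x * pvar ux t x ^ 2 := by positivity
        nlinarith
    have e6 : cut L x * (2000 / A ^ 2 * pvar ux t x ^ 2) ≤ 1 * (2000 / A ^ 2 * pvar ux t x ^ 2) :=
      mul_le_mul_of_nonneg_right w1 (by positivity)
    have e7 : cut L x * (8 / A ^ 2 * u t x ^ 2) ≤ 1 * (8 / A ^ 2 * u t x ^ 2) :=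
      mul_le_mul_of_nonneg_right w1 (by positivity)
    have e8 : cut L x * (cut A x * u t x ^ 4 + 4 * ((1 + x) * sech x * |u t x| ^ 3))
        ≤ 1 * (cut A x * u t x ^ 4 + 4 * ((1 + x) * sech x * |u t x| ^ 3)) :=
      mul_le_mul_of_nonneg_right w1 (by positivity)
    simp only [f, g', R]
    linarith
  have key := integral_le_sub_of_deriv hL.le cg.continuousOn
    (fun x hx _ => (hasDerivAt_cut L x).mul (h.hasDerivAt_virG A ht hx)) cf.continuousOn hle
  have gL : g L = 0 := by simp [g, cut_eq_zero hL le_rfl]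
  have g0 : g 0 = 0 := by simp [g, virG, psi_zero, h.zero t ht]
  rw [gL, g0, sub_zero] at key
  have i1 : ∫ x in (0 : ℝ)..L, f x
      = (∫ x in (0 : ℝ)..L, cut L x * virT u ut ux utt utx A t x)
        + 1 / 16 * (∫ x in (0 : ℝ)..L, cut A x * pvar ux t x ^ 2) - (∫ x in (0 : ℝ)..L, R x)
        - (∫ x in (0 : ℝ)..L, cut A x * u t x ^ 4)
        - 4 * ∫ x in (0 : ℝ)..L, (1 + x) * sech x * |u t x| ^ 3 := by
    simp only [f]
    rw [intervalIntegral.integral_sub, intervalIntegral.integral_sub,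
      intervalIntegral.integral_sub, intervalIntegral.integral_add,
      intervalIntegral.integral_const_mul, intervalIntegral.integral_const_mul]
    all_goals exact Continuous.intervalIntegrable (by fun_prop) _ _
  have i2 : dis ux A t ≤ ∫ x in (0 : ℝ)..L, cut A x * pvar ux t x ^ 2 :=
    intervalIntegral.integral_mono_interval le_rfl hA0.le (by linarith)
      (Eventually.of_forall fun x => mul_nonneg (cut_nonneg A x) (sq_nonneg _))
      (Continuous.intervalIntegrable (by fun_prop) _ _)
  have i3 : ∫ x in (0 : ℝ)..L, R x ≤ 2016 * E ^ 2 / A ^ 2 := by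
    have e1 : ∫ x in (0 : ℝ)..L, R x = (4 * A / L) * ((∫ x in (0 : ℝ)..L, ut t x ^ 2)
        + (∫ x in (0 : ℝ)..L, pvar ux t x ^ 2) + 2 * ∫ x in (0 : ℝ)..L, u t x ^ 2)
        + 2000 / A ^ 2 * (∫ x in (0 : ℝ)..L, pvar ux t x ^ 2)
        + 8 / A ^ 2 * ∫ x in (0 : ℝ)..L, u t x ^ 2 := by
      simp only [R]
      rw [intervalIntegral.integral_add, intervalIntegral.integral_add,
        intervalIntegral.integral_const_mul, intervalIntegral.integral_const_mul,
        intervalIntegral.integral_const_mul, intervalIntegral.integral_add,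
        intervalIntegral.integral_add, intervalIntegral.integral_const_mul]
      all_goals exact Continuous.intervalIntegrable (by fun_prop) _ _
    have b1 := hs.int_ut t ht L hL.le
    have b2 := h.int_pvar_le hs ht hL.le
    have b3 := hs.int_u t ht L hL.le
    rw [e1]
    calc _ ≤ (4 * A / L) * (E ^ 2 + E ^ 2 + 2 * E ^ 2) + 2000 / A ^ 2 * E ^ 2
          + 8 / A ^ 2 * E ^ 2 := by gcongr
      _ = _ := by rw [hLdef]; field_simp; ring
  linarith

lemma integral_weight_le {L : ℝ} (hL : 0 ≤ L) : ∫ x in (0 : ℝ)..L, (1 + x) * sech x ≤ 64 := by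
  have c := continuous_sech
  have c1 : Continuous fun x : ℝ => 32 * (1 / (1 + x ^ 2)) :=
    continuous_const.mul (continuous_const.div (by fun_prop) fun x => by positivity)
  calc ∫ x in (0 : ℝ)..L, (1 + x) * sech x ≤ ∫ x in (0 : ℝ)..L, 32 * (1 / (1 + x ^ 2)) := by
        refine integral_mono_cont hL (by fun_prop) c1 fun x hx _ => ?_
        rw [mul_one_div]; exact sech_weight_le hx
    _ = 32 * arctan L := by
        rw [intervalIntegral.integral_const_mul, integral_one_div_one_add_sq]; simp
    _ ≤ 64 := by
        have := arctan_lt_pi_div_two L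
        have := pi_lt_four
        linarith

lemma cube_le_young {a κ : ℝ} (ha : 0 ≤ a) (hκ : 0 < κ) : a ^ 3 ≤ κ * a ^ 4 + 1 / κ ^ 3 := by
  rcases le_total 1 (κ * a) with h | h
  · have h1 : a ^ 3 * 1 ≤ a ^ 3 * (κ * a) := mul_le_mul_of_nonneg_left h (by positivity)
    have h2 : 0 < 1 / κ ^ 3 := by positivity
    nlinarith
  · have h1 : (κ * a) ^ 3 ≤ 1 := pow_le_one₀ (by positivity) h
    have h2 : a ^ 3 ≤ 1 / κ ^ 3 := by
      rw [le_div_iff₀ (by positivity)]; rw [mul_pow] at h1; linarith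
    have : 0 ≤ κ * a ^ 4 := by positivity
    linarith

/-- The nonlinear terms are absorbed into the dissipation, up to `E² / A² + E⁶`. -/
lemma Sol.virial_closed (h : Sol u ut ux utt uxx utx) {E A : ℝ} (hs : Small u ut ux E)
    (hA : 1 ≤ A) {t : ℝ} (ht : 0 ≤ t) :
    (∫ x in (0 : ℝ)..(2 * A ^ 3), cut (2 * A ^ 3) x * virT u ut ux utt utx A t x)
      + dis ux A t / 64 ≤ 2 ^ 63 * (E ^ 2 / A ^ 2 + E ^ 6) := by
  have hA0 : 0 < A := by linarith
  have hE := hs.pos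
  have key := h.virial_slice hs hA ht
  obtain ⟨L, hLdef⟩ : ∃ L, L = 2 * A ^ 3 := ⟨_, rfl⟩
  have hL : 0 < L := by rw [hLdef]; positivity
  rw [← hLdef] at key ⊢
  have c1 := cont_slice h.c_u t
  have c6 := continuous_sech
  obtain ⟨S, hS⟩ : ∃ S, S = supBd u ux E A t := ⟨_, rfl⟩
  have hS0 : 0 ≤ S := by rw [hS]; exact supBd_nonneg u ux E hA0 t
  have hSq : S ^ 2 ≤ 32 * E ^ 4 / A ^ 2 + 8 * E ^ 2 * dis ux A t := by
    rw [hS]; exact h.supBd_sq_le hs hA0 ht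
  have hsup : ∀ x, 0 ≤ x → cut A x * u t x ^ 2 ≤ S := fun x hx => by
    rw [hS]; exact h.sup_le hs hA0 ht hx
  -- `S² / E²` is admissible, being bounded by `E² / A²` and the dissipation
  have hSq' : S ^ 2 / E ^ 2 ≤ 32 * E ^ 2 / A ^ 2 + 8 * dis ux A t := by
    rw [div_le_iff₀ (by positivity)]
    refine hSq.trans (le_of_eq ?_)
    field_simp
  have n1 : ∫ x in (0 : ℝ)..L, cut A x * u t x ^ 4
      ≤ E ^ 2 / A ^ 2 + dis ux A t / 128 + 256 * E ^ 6 := by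
    have e1 : ∫ x in (0 : ℝ)..L, cut A x * u t x ^ 4 ≤ ∫ x in (0 : ℝ)..L, S * u t x ^ 2 := by
      refine integral_mono_cont hL.le (by fun_prop) (by fun_prop) fun x hx _ => ?_
      calc cut A x * u t x ^ 4 = (cut A x * u t x ^ 2) * u t x ^ 2 := by ring
        _ ≤ _ := mul_le_mul_of_nonneg_right (hsup x hx) (sq_nonneg _)
    rw [intervalIntegral.integral_const_mul] at e1
    have e2 : S * ∫ x in (0 : ℝ)..L, u t x ^ 2 ≤ S * E ^ 2 :=
      mul_le_mul_of_nonneg_left (hs.int_u t ht L hL.le) hS0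
    have e3 : S * E ^ 2 ≤ 1 / 1024 * (S ^ 2 / E ^ 2) + 256 * E ^ 6 := by
      have : 0 ≤ (1 / 32 * (S / E) - 16 * E ^ 3) ^ 2 := sq_nonneg _
      have e4 : (1 / 32 * (S / E) - 16 * E ^ 3) ^ 2
          = 1 / 1024 * (S ^ 2 / E ^ 2) - S * E ^ 2 + 256 * E ^ 6 := by field_simp; ring
      linarith
    have e5 : 32 * E ^ 2 / A ^ 2 = 32 * (E ^ 2 / A ^ 2) := by ring
    have e6 : 0 ≤ E ^ 2 / A ^ 2 := by positivity
    linarith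
  have n2 : ∫ x in (0 : ℝ)..L, (1 + x) * sech x * |u t x| ^ 3
      ≤ 64 * (1 / 2 ^ 16 * (S ^ 2 / E ^ 2) + 2 ^ 54 * E ^ 6) + 128 / A ^ 2 * E ^ 2 := by
    let c : ℝ := 1 / 2 ^ 16 * (S ^ 2 / E ^ 2) + 2 ^ 54 * E ^ 6
    have hc : 0 ≤ c := by simp only [c]; positivity
    have e1 : ∫ x in (0 : ℝ)..L, (1 + x) * sech x * |u t x| ^ 3
        ≤ ∫ x in (0 : ℝ)..L, (c * ((1 + x) * sech x) + 128 / A ^ 2 * u t x ^ 2) := by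
      refine integral_mono_cont hL.le (by fun_prop) (by fun_prop) fun x hx _ => ?_
      have sp := sech_pos x
      have hz := (hs.sup t ht x hx).trans hs.le_one
      rcases le_total x (A / 2) with hxA | hxA
      · have m1 := cut_half hA0 hx hxA
        have m2 := hsup x hx
        have m3 : 9 / 16 * u t x ^ 2 ≤ S :=
          (mul_le_mul_of_nonneg_right m1 (sq_nonneg _)).trans m2
        have m4 : (9 / 16 * u t x ^ 2) ^ 2 ≤ S ^ 2 := pow_le_pow_left₀ (by positivity) m3 2
        have m5 : |u t x| ^ 4 ≤ 4 * S ^ 2 := by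
          have : |u t x| ^ 4 = (u t x ^ 2) ^ 2 := by rw [← sq_abs (u t x)]; ring
          rw [this]; nlinarith [sq_nonneg (u t x ^ 2)]
        have m6 := cube_le_young (abs_nonneg (u t x)) (by positivity : 0 < 1 / (2 ^ 18 * E ^ 2))
        have m7 : |u t x| ^ 3 ≤ c := by
          have m8 : 1 / (2 ^ 18 * E ^ 2) * |u t x| ^ 4 ≤ 1 / (2 ^ 18 * E ^ 2) * (4 * S ^ 2) :=
            mul_le_mul_of_nonneg_left m5 (by positivity)
          have m9 : 1 / (2 ^ 18 * E ^ 2) * (4 * S ^ 2) = 1 / 2 ^ 16 * (S ^ 2 / E ^ 2) := by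
            field_simp; norm_num
          have m10 : 1 / (1 / (2 ^ 18 * E ^ 2)) ^ 3 = 2 ^ 54 * E ^ 6 := by
            field_simp
          simp only [c]
          linarith
        have m11 := mul_le_mul_of_nonneg_left m7 (by positivity : 0 ≤ (1 + x) * sech x)
        have m12 : 0 ≤ 128 / A ^ 2 * u t x ^ 2 := by positivity
        linarith
      · have m1 := sech_weight_le hx
        have m2 : 32 / (1 + x ^ 2) ≤ 128 / A ^ 2 := by
          rw [div_le_div_iff₀ (by positivity) (by positivity)]
          have : (A / 2) ^ 2 ≤ x ^ 2 := pow_le_pow_left₀ (by positivity) hxA 2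
          nlinarith
        have m3 : |u t x| ^ 3 ≤ u t x ^ 2 := by
          rw [← sq_abs]; exact pow_le_pow_of_le_one (abs_nonneg _) hz (by norm_num)
        have m4 : (1 + x) * sech x * |u t x| ^ 3 ≤ 128 / A ^ 2 * u t x ^ 2 :=
          mul_le_mul (m1.trans m2) m3 (by positivity) (by positivity)
        have m5 : 0 ≤ c * ((1 + x) * sech x) := by positivity
        linarith
    rw [intervalIntegral.integral_add (Continuous.intervalIntegrable (by fun_prop) _ _)
      (Continuous.intervalIntegrable (by fun_prop) _ _), intervalIntegral.integral_const_mul,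
      intervalIntegral.integral_const_mul] at e1
    have e2 := mul_le_mul_of_nonneg_left (integral_weight_le hL.le) hc
    have e3 := mul_le_mul_of_nonneg_left (hs.int_u t ht L hL.le)
      (by positivity : 0 ≤ 128 / A ^ 2)
    simp only [c] at e1 e2
    linarith
  have r1 : 2016 * E ^ 2 / A ^ 2 = 2016 * (E ^ 2 / A ^ 2) := by ring
  have r2 : 128 / A ^ 2 * E ^ 2 = 128 * (E ^ 2 / A ^ 2) := by ring
  have r3 : 32 * E ^ 2 / A ^ 2 = 32 * (E ^ 2 / A ^ 2) := by ring
  rw [r1] at key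
  rw [r2] at n2
  rw [r3] at hSq'
  have p1 : 0 ≤ E ^ 2 / A ^ 2 := by positivity
  have p2 : 0 ≤ E ^ 6 := by positivity
  have p3 := dis_nonneg ux hA0 t
  linarith

lemma Sol.abs_int_vir_le (h : Sol u ut ux utt uxx utx) {E A L : ℝ} (hs : Small u ut ux E)
    (hA : 1 ≤ A) (hL : 0 ≤ L) {t : ℝ} (ht : 0 ≤ t) :
    |∫ x in (0 : ℝ)..L, cut L x * vir u ut ux A t x| ≤ 3 * A * E ^ 2 := by
  have hA0 : 0 < A := by linarith
  have c1 := cont_slice h.c_u t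
  have c2 := cont_slice h.c_ut t
  have c3 := cont_slice h.c_ux t
  have c5 := cont_slice (h.continuous_vir A) t
  refine (intervalIntegral.abs_integral_le_integral_abs hL).trans ?_
  have e1 : ∫ x in (0 : ℝ)..L, |cut L x * vir u ut ux A t x|
      ≤ ∫ x in (0 : ℝ)..L, A * (u t x ^ 2 + ux t x ^ 2 + ut t x ^ 2) := by
    refine integral_mono_cont hL (by fun_prop) (by fun_prop) fun x hx _ => ?_
    have p0 := psi_nonneg A hx
    have p1 := psi_le hA0 hx
    have m0 := cut_nonneg A x
    have m1 := cut_le_one A x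
    have q0 : 0 ≤ sech x ^ 2 * mulQ A x := mul_nonneg (by positivity) (mulQ_nonneg A x)
    have q1 := sech_sq_mulQ_le A hx
    rw [abs_mul, abs_of_nonneg (cut_nonneg L x)]
    have hv : |vir u ut ux A t x| ≤ A * (u t x ^ 2 + ux t x ^ 2 + ut t x ^ 2) := by
      have a1 : |psi A x * (ux t x * ut t x)| ≤ A * ((ux t x ^ 2 + ut t x ^ 2) / 2) := by
        rw [abs_mul, abs_of_nonneg p0]
        refine mul_le_mul p1 ?_ (abs_nonneg _) hA0.le
        rw [abs_le]
        constructor <;> nlinarith [sq_nonneg (ux t x + ut t x), sq_nonneg (ux t x - ut t x)]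
      have a2 : |(1 / 2 * cut A x - sech x ^ 2 * mulQ A x) * (u t x * ut t x)|
          ≤ A * ((u t x ^ 2 + ut t x ^ 2) / 2) := by
        rw [abs_mul]
        refine mul_le_mul ?_ ?_ (abs_nonneg _) hA0.le
        · rw [abs_le]; constructor <;> linarith
        · rw [abs_le]
          constructor <;> nlinarith [sq_nonneg (u t x + ut t x), sq_nonneg (u t x - ut t x)]
      have a3 : vir u ut ux A t x = psi A x * (ux t x * ut t x)
          + (1 / 2 * cut A x - sech x ^ 2 * mulQ A x) * (u t x * ut t x) := by rw [vir]; ring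
      rw [a3]
      refine (abs_add_le _ _).trans ?_
      have b5 : 0 ≤ A * ux t x ^ 2 := by positivity
      have b6 : 0 ≤ A * u t x ^ 2 := by positivity
      linarith
    calc _ ≤ 1 * |vir u ut ux A t x| :=
          mul_le_mul_of_nonneg_right (cut_le_one L x) (abs_nonneg _)
      _ ≤ _ := by rw [one_mul]; exact hv
  refine e1.trans ?_
  rw [intervalIntegral.integral_const_mul, intervalIntegral.integral_add
    (Continuous.intervalIntegrable (by fun_prop) _ _)
    (Continuous.intervalIntegrable (by fun_prop) _ _), intervalIntegral.integral_add
    (Continuous.intervalIntegrable (by fun_prop) _ _)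
    (Continuous.intervalIntegrable (by fun_prop) _ _)]
  have := hs.int_u t ht L hL
  have := hs.int_ux t ht L hL
  have := hs.int_ut t ht L hL
  nlinarith

lemma Sol.continuous_dis (h : Sol u ut ux utt uxx utx) (A : ℝ) : Continuous (dis ux A) := by
  unfold dis
  refine intervalIntegral.continuous_parametric_intervalIntegral_of_continuous' ?_ 0 A
  have := h.continuous_pvar
  unfold Function.uncurry at *
  fun_prop

/-- The virial estimate at scale `A`, integrated in time. -/
lemma Sol.integral_dis_le (h : Sol u ut ux utt uxx utx) {E A : ℝ} (hs : Small u ut ux E)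
    (hA : 1 ≤ A) {t₀ t₁ : ℝ} (ht₀ : 0 ≤ t₀) (ht : t₀ ≤ t₁) :
    ∫ t in t₀..t₁, dis ux A t ≤ 2 ^ 70 * (A * E ^ 2 + (t₁ - t₀) * (E ^ 2 / A ^ 2 + E ^ 6)) := by
  have hA0 : 0 < A := by linarith
  obtain ⟨L, hLdef⟩ : ∃ L, L = 2 * A ^ 3 := ⟨_, rfl⟩
  have hL : 0 < L := by rw [hLdef]; positivity
  have cv := h.continuous_vir A
  have cvT := h.continuous_virT A
  have cF : Continuous (Function.uncurry fun t x => cut L x * vir u ut ux A t x) := by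
    unfold Function.uncurry at *; fun_prop
  have cFt : Continuous (Function.uncurry fun t x => cut L x * virT u ut ux utt utx A t x) := by
    unfold Function.uncurry at *; fun_prop
  have key := integral_time_diff cF cFt
    (fun t x => (h.hasDerivAt_vir A t x).const_mul (cut L x)) t₀ t₁ L
  have cI : Continuous fun t => ∫ x in (0 : ℝ)..L, cut L x * virT u ut ux utt utx A t x :=
    intervalIntegral.continuous_parametric_intervalIntegral_of_continuous' cFt 0 L
  have cd := h.continuous_dis A
  have e1 : ∫ t in t₀..t₁, ((∫ x in (0 : ℝ)..L, cut L x * virT u ut ux utt utx A t x)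
      + 1 / 64 * dis ux A t) ≤ ∫ t in t₀..t₁, 2 ^ 63 * (E ^ 2 / A ^ 2 + E ^ 6) := by
    refine integral_mono_cont ht (by fun_prop) (by fun_prop) fun t h1 _ => ?_
    have := h.virial_closed hs hA (ht₀.trans h1)
    rw [← hLdef] at this
    linarith
  rw [intervalIntegral.integral_add (Continuous.intervalIntegrable (by fun_prop) _ _)
    (Continuous.intervalIntegrable (by fun_prop) _ _), ← key,
    intervalIntegral.integral_const_mul, intervalIntegral.integral_const, smul_eq_mul] at e1
  have b1 := (abs_le.1 (h.abs_int_vir_le hs hA hL.le (ht₀.trans ht))).1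
  have b2 := (abs_le.1 (h.abs_int_vir_le hs hA hL.le ht₀)).2
  have p1 : 0 ≤ A * E ^ 2 := by positivity
  have p2 : 0 ≤ (t₁ - t₀) * (E ^ 2 / A ^ 2 + E ^ 6) :=
    mul_nonneg (by linarith) (by positivity)
  linarith

/-! ### Local energy on a fixed interval -/

/-- A pointwise bound for `u²` on bounded intervals, in terms of the dissipation. -/
def locBd (ux : ℝ → ℝ → ℝ) (E A t : ℝ) : ℝ := 12 * E ^ 2 / A + 2 * A * dis ux A t

lemma Sol.sq_le_locBd (h : Sol u ut ux utt uxx utx) {E A : ℝ} (hs : Small u ut ux E) (hA : 0 < A)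
    {t x : ℝ} (ht : 0 ≤ t) (hx : 0 ≤ x) (hxA : x ≤ A / 2) : u t x ^ 2 ≤ locBd ux E A t := by
  have h1 := h.sup_le hs hA ht hx
  have h2 := h.supBd_sq_le hs hA ht
  have h3 := cut_half hA hx hxA
  have hd := dis_nonneg ux hA t
  have h4 : supBd u ux E A t ≤ 6 * E ^ 2 / A + A * dis ux A t := by
    refine le_of_sq_le_sq ?_ (by positivity)
    have e1 : (6 * E ^ 2 / A + A * dis ux A t) ^ 2
        = 32 * E ^ 4 / A ^ 2 + 8 * E ^ 2 * dis ux A t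
          + (4 * E ^ 4 / A ^ 2 + 4 * E ^ 2 * dis ux A t + A ^ 2 * dis ux A t ^ 2) := by
      field_simp; ring
    have e2 : 0 ≤ 4 * E ^ 4 / A ^ 2 + 4 * E ^ 2 * dis ux A t + A ^ 2 * dis ux A t ^ 2 := by
      positivity
    linarith
  have h5 : locBd ux E A t = 2 * (6 * E ^ 2 / A + A * dis ux A t) := by unfold locBd; ring
  rw [h5]
  nlinarith [sq_nonneg (u t x)]

lemma Sol.int_u_loc (h : Sol u ut ux utt uxx utx) {E A Y : ℝ} (hs : Small u ut ux E) (hY : 1 ≤ Y)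
    (hA : 2 * Y ≤ A) {t : ℝ} (ht : 0 ≤ t) :
    ∫ x in (0 : ℝ)..Y, u t x ^ 2 ≤ Y * locBd ux E A t := by
  have c1 := cont_slice h.c_u t
  calc ∫ x in (0 : ℝ)..Y, u t x ^ 2 ≤ ∫ x in (0 : ℝ)..Y, locBd ux E A t :=
        integral_mono_cont (by linarith) (by fun_prop) (by fun_prop) fun x hx hxY =>
          h.sq_le_locBd hs (by linarith) ht hx (by linarith)
    _ = _ := by simp

lemma Sol.int_ux_loc (h : Sol u ut ux utt uxx utx) {E A Y : ℝ} (hs : Small u ut ux E) (hY : 1 ≤ Y)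
    (hA : 2 * Y ≤ A) {t : ℝ} (ht : 0 ≤ t) :
    ∫ x in (0 : ℝ)..Y, ux t x ^ 2 ≤ 4 * Y * locBd ux E A t := by
  have hA0 : 0 < A := by linarith
  have c1 := cont_slice h.c_u t
  have c4 := cont_slice h.continuous_pvar t
  have e1 := h.int_ux_le ht hY
  have e2 := h.int_u_loc hs hY hA ht
  have e3 := h.sq_le_locBd hs hA0 ht (by linarith : 0 ≤ Y) (by linarith)
  have e4 : ∫ x in (0 : ℝ)..Y, pvar ux t x ^ 2 ≤ 2 * dis ux A t := by
    calc ∫ x in (0 : ℝ)..Y, pvar ux t x ^ 2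
        ≤ ∫ x in (0 : ℝ)..Y, 2 * (cut A x * pvar ux t x ^ 2) := by
          refine integral_mono_cont (by linarith) (by fun_prop) (by fun_prop) fun x hx hxY => ?_
          have := cut_half hA0 hx (by linarith)
          nlinarith [sq_nonneg (pvar ux t x)]
      _ ≤ ∫ x in (0 : ℝ)..A, 2 * (cut A x * pvar ux t x ^ 2) :=
          intervalIntegral.integral_mono_interval le_rfl (by linarith) (by linarith)
            (Eventually.of_forall fun x => mul_nonneg (by norm_num)
              (mul_nonneg (cut_nonneg A x) (sq_nonneg _)))
            (Continuous.intervalIntegrable (by fun_prop) _ _)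
      _ = _ := by rw [intervalIntegral.integral_const_mul]; rfl
  have hd := dis_nonneg ux hA0 t
  have e5 : 2 * dis ux A t ≤ locBd ux E A t := by
    have : 0 ≤ 12 * E ^ 2 / A := by positivity
    unfold locBd; nlinarith
  have e6 : locBd ux E A t ≤ Y * locBd ux E A t := by
    have : 0 ≤ locBd ux E A t := by unfold locBd; positivity
    nlinarith
  linarith

/-- Virial identity with multiplier `cut · u`, exchanging `uₜ²` for `uₓ²` and `u²`. -/
lemma Sol.int_ut_slice (h : Sol u ut ux utt uxx utx) {Y : ℝ} (hY : 2 ≤ Y) {t : ℝ} (ht : 0 ≤ t) :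
    ∫ x in (0 : ℝ)..Y, cut Y x * ut t x ^ 2
      ≤ (∫ x in (0 : ℝ)..Y, cut Y x * (ut t x * ut t x + u t x * utt t x))
        + (2 * (∫ x in (0 : ℝ)..Y, ux t x ^ 2) + 2 * ∫ x in (0 : ℝ)..Y, u t x ^ 2) := by
  have hY0 : 0 < Y := by linarith
  have c1 := cont_slice h.c_u t
  have c2 := cont_slice h.c_ut t
  have c3 := cont_slice h.c_ux t
  have c4 := cont_slice h.c_utt t
  let g : ℝ → ℝ := fun x => cut Y x * (u t x * ux t x)
  let f : ℝ → ℝ := fun x => cut Y x * ut t x ^ 2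
    - cut Y x * (ut t x * ut t x + u t x * utt t x) - (2 * ux t x ^ 2 + 2 * u t x ^ 2)
  have cg : Continuous g := by simp only [g]; fun_prop
  have cf : Continuous f := by simp only [f]; fun_prop
  have hle : ∀ x, 0 < x → x < Y →
      -(cutD Y x * (u t x * ux t x) + cut Y x * (ux t x * ux t x + u t x * uxx t x)) ≥ f x := by
    intro x hx _
    have w0 := cut_nonneg Y x
    have w1 := cut_le_one Y x
    have e1 : |u t x * (sin (K x + u t x) - sin (K x))| ≤ u t x ^ 2 := by
      rw [abs_mul, ← sq_abs, sq]
      refine mul_le_mul_of_nonneg_left ?_ (abs_nonneg _)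
      have := abs_sin_sub_sin_le (K x + u t x) (K x)
      simpa using this
    have e2 : |cutD Y x * (u t x * ux t x)| ≤ 2 * ((u t x ^ 2 + ux t x ^ 2) / 2) := by
      rw [abs_mul]
      refine mul_le_mul ((abs_cutD_le hY0 hx.le).trans ?_) ?_ (abs_nonneg _) (by norm_num)
      · rw [div_le_iff₀ hY0]; linarith
      · rw [abs_le]
        constructor <;> nlinarith [sq_nonneg (u t x + ux t x), sq_nonneg (u t x - ux t x)]
    have e3 : |cut Y x * (u t x * (sin (K x + u t x) - sin (K x)))| ≤ 1 * u t x ^ 2 := by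
      rw [abs_mul, abs_of_nonneg w0]
      exact mul_le_mul w1 e1 (abs_nonneg _) (by norm_num)
    have e4 : cut Y x * (ux t x ^ 2) ≤ 1 * ux t x ^ 2 := mul_le_mul_of_nonneg_right w1 (sq_nonneg _)
    have e5 := (abs_le.1 e2).2
    have e6 := (abs_le.1 e3).2
    simp only [f]
    rw [h.eqn t ht x]
    nlinarith
  have key := integral_le_sub_of_deriv (g := fun x => -g x) hY0.le cg.neg.continuousOn
    (fun x _ _ => ((hasDerivAt_cut Y x).mul ((h.hux t x).mul (h.huxx t x))).fun_neg)
    cf.continuousOn hle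
  have g0 : g 0 = 0 := by simp [g, h.zero t ht]
  have gY : g Y = 0 := by simp [g, cut_eq_zero hY0 le_rfl]
  rw [g0, gY] at key
  have i1 : ∫ x in (0 : ℝ)..Y, f x = (∫ x in (0 : ℝ)..Y, cut Y x * ut t x ^ 2)
      - (∫ x in (0 : ℝ)..Y, cut Y x * (ut t x * ut t x + u t x * utt t x))
      - (2 * (∫ x in (0 : ℝ)..Y, ux t x ^ 2) + 2 * ∫ x in (0 : ℝ)..Y, u t x ^ 2) := by
    simp only [f]
    rw [intervalIntegral.integral_sub, intervalIntegral.integral_sub,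
      intervalIntegral.integral_add, intervalIntegral.integral_const_mul,
      intervalIntegral.integral_const_mul]
    all_goals exact Continuous.intervalIntegrable (by fun_prop) _ _
  linarith

lemma Sol.abs_int_uut_le (h : Sol u ut ux utt uxx utx) {E Y : ℝ} (hs : Small u ut ux E)
    (hY : 0 ≤ Y) {t : ℝ} (ht : 0 ≤ t) :
    |∫ x in (0 : ℝ)..Y, cut Y x * (u t x * ut t x)| ≤ E ^ 2 := by
  have c1 := cont_slice h.c_u t
  have c2 := cont_slice h.c_ut t
  refine (intervalIntegral.abs_integral_le_integral_abs hY).trans ?_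
  have e1 : ∫ x in (0 : ℝ)..Y, |cut Y x * (u t x * ut t x)|
      ≤ ∫ x in (0 : ℝ)..Y, 1 / 2 * (u t x ^ 2 + ut t x ^ 2) := by
    refine integral_mono_cont hY (by fun_prop) (by fun_prop) fun x hx _ => ?_
    rw [abs_mul, abs_of_nonneg (cut_nonneg Y x)]
    have : |u t x * ut t x| ≤ 1 / 2 * (u t x ^ 2 + ut t x ^ 2) := by
      rw [abs_le]
      constructor <;> nlinarith [sq_nonneg (u t x + ut t x), sq_nonneg (u t x - ut t x)]
    calc _ ≤ 1 * |u t x * ut t x| :=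
          mul_le_mul_of_nonneg_right (cut_le_one Y x) (abs_nonneg _)
      _ ≤ _ := by rw [one_mul]; exact this
  refine e1.trans ?_
  rw [intervalIntegral.integral_const_mul, intervalIntegral.integral_add
    (Continuous.intervalIntegrable (by fun_prop) _ _)
    (Continuous.intervalIntegrable (by fun_prop) _ _)]
  have := hs.int_u t ht Y hY
  have := hs.int_ut t ht Y hY
  linarith

/-- The local energy on `[0, Y]`. -/
def loc (u ut ux : ℝ → ℝ → ℝ) (Y t : ℝ) : ℝ :=
  ∫ x in (0 : ℝ)..Y, (ut t x ^ 2 + ux t x ^ 2 + u t x ^ 2)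

lemma Sol.continuous_loc (h : Sol u ut ux utt uxx utx) (Y : ℝ) : Continuous (loc u ut ux Y) := by
  unfold loc
  refine intervalIntegral.continuous_parametric_intervalIntegral_of_continuous' ?_ 0 Y
  have c1 := h.c_u
  have c2 := h.c_ut
  have c3 := h.c_ux
  unfold Function.uncurry at *
  fun_prop

/-- The time integral of the local energy on `[0, Y]`, from the virial estimate at any scale
`A ≥ 4 Y`. -/
lemma Sol.integral_loc_le (h : Sol u ut ux utt uxx utx) {E A Y : ℝ} (hs : Small u ut ux E)
    (hY : 1 ≤ Y) (hA : 4 * Y ≤ A) {t₀ t₁ : ℝ} (ht₀ : 0 ≤ t₀) (ht : t₀ ≤ t₁) :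
    ∫ t in t₀..t₁, loc u ut ux Y t
      ≤ 2 ^ 80 * Y * (A ^ 2 * E ^ 2 + (t₁ - t₀) * (E ^ 2 / A + A * E ^ 6)) := by
  have hA0 : 0 < A := by linarith
  obtain ⟨Z, hZ⟩ : ∃ Z, Z = 2 * Y := ⟨_, rfl⟩
  have hZ0 : 0 < Z := by linarith
  have c1 := h.c_u
  have c2 := h.c_ut
  have c3 := h.c_ux
  have c4 := h.c_utt
  have cd := h.continuous_dis A
  have cM : Continuous (locBd ux E A) := by unfold locBd; fun_prop
  have cF : Continuous (Function.uncurry fun t x => cut Z x * (u t x * ut t x)) := by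
    unfold Function.uncurry at *; fun_prop
  have cFt : Continuous (Function.uncurry fun t x =>
      cut Z x * (ut t x * ut t x + u t x * utt t x)) := by
    unfold Function.uncurry at *; fun_prop
  have key := integral_time_diff cF cFt
    (fun t x => ((h.hut t x).mul (h.hutt t x)).const_mul (cut Z x)) t₀ t₁ Z
  have cI : Continuous fun t => ∫ x in (0 : ℝ)..Z, cut Z x * (ut t x * ut t x + u t x * utt t x) :=
    intervalIntegral.continuous_parametric_intervalIntegral_of_continuous' cFt 0 Z
  have cl := h.continuous_loc Y
  have e1 : ∫ t in t₀..t₁, loc u ut ux Y t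
      ≤ ∫ t in t₀..t₁, (2 * (∫ x in (0 : ℝ)..Z, cut Z x * (ut t x * ut t x + u t x * utt t x))
        + 100 * Y * locBd ux E A t) := by
    refine integral_mono_cont ht cl (by fun_prop) fun t h1 _ => ?_
    have ht' := ht₀.trans h1
    have s1 := cont_slice h.c_u t
    have s2 := cont_slice h.c_ut t
    have s3 := cont_slice h.c_ux t
    have b1 := h.int_ut_slice (by linarith : 2 ≤ Z) ht'
    have b2 := h.int_ux_loc hs (by linarith : 1 ≤ Z) (by linarith : 2 * Z ≤ A) ht'
    have b3 := h.int_u_loc hs (by linarith : 1 ≤ Z) (by linarith : 2 * Z ≤ A) ht'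
    have b4 := h.int_ux_loc hs hY (by linarith : 2 * Y ≤ A) ht'
    have b5 := h.int_u_loc hs hY (by linarith : 2 * Y ≤ A) ht'
    have b6 : ∫ x in (0 : ℝ)..Y, ut t x ^ 2 ≤ 2 * ∫ x in (0 : ℝ)..Z, cut Z x * ut t x ^ 2 := by
      rw [← intervalIntegral.integral_const_mul]
      calc ∫ x in (0 : ℝ)..Y, ut t x ^ 2 ≤ ∫ x in (0 : ℝ)..Y, 2 * (cut Z x * ut t x ^ 2) := by
            refine integral_mono_cont (by linarith) (by fun_prop) (by fun_prop) fun x hx hxY => ?_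
            have := cut_half hZ0 hx (by linarith)
            nlinarith [sq_nonneg (ut t x)]
        _ ≤ _ :=
          intervalIntegral.integral_mono_interval le_rfl (by linarith) (by linarith)
            (Eventually.of_forall fun x => mul_nonneg (by norm_num)
              (mul_nonneg (cut_nonneg Z x) (sq_nonneg _)))
            (Continuous.intervalIntegrable (by fun_prop) _ _)
    have b7 : loc u ut ux Y t = (∫ x in (0 : ℝ)..Y, ut t x ^ 2) + (∫ x in (0 : ℝ)..Y, ux t x ^ 2)
        + ∫ x in (0 : ℝ)..Y, u t x ^ 2 := by
      unfold loc
      rw [intervalIntegral.integral_add, intervalIntegral.integral_add]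
      all_goals exact Continuous.intervalIntegrable (by fun_prop) _ _
    have hd := dis_nonneg ux hA0 t
    have b8 : 0 ≤ Y * locBd ux E A t :=
      mul_nonneg (by linarith) (by unfold locBd; positivity)
    have b9 : Z * locBd ux E A t = 2 * (Y * locBd ux E A t) := by rw [hZ]; ring
    have b10 : 4 * Z * locBd ux E A t = 8 * (Y * locBd ux E A t) := by rw [hZ]; ring
    rw [b9] at b3
    rw [b10] at b2
    rw [b7]
    linarith
  rw [intervalIntegral.integral_add (Continuous.intervalIntegrable (by fun_prop) _ _)
    (Continuous.intervalIntegrable (by fun_prop) _ _), intervalIntegral.integral_const_mul,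
    intervalIntegral.integral_const_mul, ← key] at e1
  have i1 : ∫ t in t₀..t₁, locBd ux E A t
      = (t₁ - t₀) * (12 * E ^ 2 / A) + 2 * A * ∫ t in t₀..t₁, dis ux A t := by
    unfold locBd
    rw [intervalIntegral.integral_add (Continuous.intervalIntegrable (by fun_prop) _ _)
      (Continuous.intervalIntegrable (by fun_prop) _ _), intervalIntegral.integral_const_mul,
      intervalIntegral.integral_const, smul_eq_mul]
  have i2 := h.integral_dis_le hs (by linarith : 1 ≤ A) ht₀ ht
  have i3 : 2 * A * ∫ t in t₀..t₁, dis ux A t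
      ≤ 2 ^ 71 * (A ^ 2 * E ^ 2 + (t₁ - t₀) * (E ^ 2 / A + A * E ^ 6)) := by
    refine (mul_le_mul_of_nonneg_left i2 (by positivity)).trans (le_of_eq ?_)
    field_simp
  have b1 := (abs_le.1 (h.abs_int_uut_le hs hZ0.le (ht₀.trans ht))).2
  have b2 := (abs_le.1 (h.abs_int_uut_le hs hZ0.le ht₀)).1
  have hτ : 0 ≤ t₁ - t₀ := by linarith
  have q1 : (t₁ - t₀) * (12 * E ^ 2 / A)
      ≤ 12 * (A ^ 2 * E ^ 2 + (t₁ - t₀) * (E ^ 2 / A + A * E ^ 6)) := by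
    have r1 : 0 ≤ A ^ 2 * E ^ 2 := by positivity
    have hE := hs.pos
    have r2 : 0 ≤ (t₁ - t₀) * (A * E ^ 6) := by positivity
    have r3 : (t₁ - t₀) * (12 * E ^ 2 / A) = 12 * ((t₁ - t₀) * (E ^ 2 / A)) := by ring
    nlinarith
  have q2 : E ^ 2 ≤ Y * (A ^ 2 * E ^ 2 + (t₁ - t₀) * (E ^ 2 / A + A * E ^ 6)) := by
    have hE := hs.pos
    have r1 : 1 * E ^ 2 ≤ A ^ 2 * E ^ 2 :=
      mul_le_mul_of_nonneg_right (one_le_pow₀ (by linarith)) (sq_nonneg _)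
    have r2 : 0 ≤ (t₁ - t₀) * (E ^ 2 / A + A * E ^ 6) := by positivity
    nlinarith
  obtain ⟨B, hB⟩ : ∃ B, B = A ^ 2 * E ^ 2 + (t₁ - t₀) * (E ^ 2 / A + A * E ^ 6) := ⟨_, rfl⟩
  rw [← hB] at i3 q1 q2 ⊢
  have q3 : 100 * Y * ∫ t in t₀..t₁, locBd ux E A t ≤ 100 * Y * ((12 + 2 ^ 71) * B) :=
    mul_le_mul_of_nonneg_left (by rw [i1]; linarith) (by positivity)
  have q4 : 0 ≤ Y * B := (sq_nonneg E).trans q2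
  nlinarith

/-! ### Summation over dyadic time intervals -/

variable {E Y : ℝ}

lemma loc_nonneg (u ut ux : ℝ → ℝ → ℝ) (hY : 0 ≤ Y) (t : ℝ) : 0 ≤ loc u ut ux Y t :=
  intervalIntegral.integral_nonneg hY fun x _ => by positivity

/-- On the dyadic interval `[2 ^ n - 1, 2 ^ (n + 1) - 1]` the localized bound is used with
the scale `A = 4 Y (n + 1) ^ 2`. -/
lemma Sol.dyadic_step (h : Sol u ut ux utt uxx utx) (hs : Small u ut ux E) (hY : 1 ≤ Y)
    (n : ℕ) :
    ∫ t in ((2:ℝ) ^ n - 1)..(2 ^ (n + 1) - 1), (1 + t)⁻¹ * loc u ut ux Y t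
      ≤ 2 ^ 84 * Y ^ 3 * ((((n:ℝ) + 1) ^ 4 / 2 ^ n + 1 / ((n:ℝ) + 1) ^ 2) * E ^ 2
          + ((n:ℝ) + 1) ^ 2 * E ^ 6) := by
  have hp : (1:ℝ) ≤ 2 ^ n := one_le_pow₀ (by norm_num)
  have hp' : (2:ℝ) ^ (n + 1) = 2 * 2 ^ n := by ring
  have hn : (0:ℝ) ≤ n := Nat.cast_nonneg n
  have hn1 : (1:ℝ) ≤ ((n:ℝ) + 1) ^ 2 := by nlinarith
  have hA : 4 * Y ≤ 4 * Y * ((n:ℝ) + 1) ^ 2 := by nlinarith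
  have hle : (2:ℝ) ^ n - 1 ≤ 2 ^ (n + 1) - 1 := by linarith
  have key := h.integral_loc_le hs hY hA (by linarith : (0:ℝ) ≤ 2 ^ n - 1) hle
  have c := h.continuous_loc Y
  have hm : ∫ t in ((2:ℝ) ^ n - 1)..(2 ^ (n + 1) - 1), (1 + t)⁻¹ * loc u ut ux Y t
      ≤ ∫ t in ((2:ℝ) ^ n - 1)..(2 ^ (n + 1) - 1), ((2:ℝ) ^ n)⁻¹ * loc u ut ux Y t := by
    refine intervalIntegral.integral_mono_on hle ?_
      (Continuous.intervalIntegrable (by fun_prop) _ _) ?_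
    · refine ContinuousOn.intervalIntegrable ?_
      rw [Set.uIcc_of_le hle]
      refine ContinuousOn.mul (ContinuousOn.inv₀ (by fun_prop) ?_) c.continuousOn
      intro t ht
      have := ht.1
      have : 0 < 1 + t := by linarith
      exact this.ne'
    · intro t ht
      refine mul_le_mul_of_nonneg_right ?_ (loc_nonneg _ _ _ (by linarith) t)
      exact inv_anti₀ (by linarith) (by linarith [ht.1])
  refine hm.trans ?_
  rw [intervalIntegral.integral_const_mul]
  refine (mul_le_mul_of_nonneg_left key (by positivity)).trans ?_
  have hE := hs.pos
  have e : (2:ℝ) ^ (n + 1) - 1 - (2 ^ n - 1) = 2 ^ n := by rw [hp']; ring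
  rw [e]
  have hY0 : 0 < Y := by linarith
  generalize hN : (n:ℝ) + 1 = N at *
  generalize (2:ℝ) ^ n = P at *
  have hN0 : 0 < N := by linarith
  have hP0 : 0 < P := by linarith
  have e2 : P⁻¹ * (2 ^ 80 * Y * ((4 * Y * N ^ 2) ^ 2 * E ^ 2
        + P * (E ^ 2 / (4 * Y * N ^ 2) + 4 * Y * N ^ 2 * E ^ 6)))
      = 2 ^ 84 * Y ^ 3 * (N ^ 4 / P * E ^ 2) + 2 ^ 78 * (1 / N ^ 2 * E ^ 2)
        + 2 ^ 82 * Y ^ 2 * (N ^ 2 * E ^ 6) := by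
    field_simp
    ring
  rw [e2]
  have hY2 : 1 ≤ Y ^ 2 := by nlinarith
  have hY3 : Y ^ 2 ≤ Y ^ 3 := by nlinarith
  have s1 : 2 ^ 78 * (1 / N ^ 2 * E ^ 2) ≤ 2 ^ 84 * Y ^ 3 * (1 / N ^ 2 * E ^ 2) :=
    mul_le_mul_of_nonneg_right (by linarith) (by positivity)
  have s2 : 2 ^ 82 * Y ^ 2 * (N ^ 2 * E ^ 6) ≤ 2 ^ 84 * Y ^ 3 * (N ^ 2 * E ^ 6) :=
    mul_le_mul_of_nonneg_right (by linarith) (by positivity)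
  linarith

/-- The sum of the dyadic bounds. The subtracted terms are explicit primitives of the two
convergent series `∑ (k + 1) ^ 4 / 2 ^ k` and `∑ 1 / (k + 1) ^ 2`. -/
lemma Sol.dyadic_sum_aux (h : Sol u ut ux utt uxx utx) (hs : Small u ut ux E) (hY : 1 ≤ Y)
    (n : ℕ) :
    ∫ t in (0:ℝ)..(2 ^ n - 1), (1 + t)⁻¹ * loc u ut ux Y t
      ≤ 2 ^ 84 * Y ^ 3 * ((300 - (2 * ((n:ℝ) + 1) ^ 4 + 8 * ((n:ℝ) + 1) ^ 3
          + 36 * ((n:ℝ) + 1) ^ 2 + 104 * ((n:ℝ) + 1) + 150) / 2 ^ n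
          + (2 - 2 / ((n:ℝ) + 1))) * E ^ 2 + (n:ℝ) ^ 3 * E ^ 6) := by
  induction n with
  | zero => norm_num
  | succ n ih =>
    have hp : (1:ℝ) ≤ 2 ^ n := one_le_pow₀ (by norm_num)
    have hn : (0:ℝ) ≤ n := Nat.cast_nonneg n
    have hp' : (2:ℝ) ^ (n + 1) = 2 * 2 ^ n := by ring
    have c := h.continuous_loc Y
    have hint : ∀ a b : ℝ, 0 ≤ a → a ≤ b →
        IntervalIntegrable (fun t => (1 + t)⁻¹ * loc u ut ux Y t) volume a b := by
      intro a b ha hab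
      refine ContinuousOn.intervalIntegrable ?_
      rw [Set.uIcc_of_le hab]
      refine ContinuousOn.mul (ContinuousOn.inv₀ (by fun_prop) ?_) c.continuousOn
      intro t ht
      have := ht.1
      have : 0 < 1 + t := by linarith
      exact this.ne'
    rw [← intervalIntegral.integral_add_adjacent_intervals
      (hint 0 (2 ^ n - 1) le_rfl (by linarith))
      (hint (2 ^ n - 1) (2 ^ (n + 1) - 1) (by linarith) (by linarith))]
    refine (add_le_add ih (h.dyadic_step hs hY n)).trans ?_
    rw [← mul_add]
    have hY0 : 0 < Y := by linarith
    refine mul_le_mul_of_nonneg_left ?_ (by positivity)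
    have hE := hs.pos
    push_cast
    rw [hp']
    generalize (2:ℝ) ^ n = P at *
    have hP0 : 0 < P := by linarith
    have a1 : (300 - (2 * ((n:ℝ) + 1) ^ 4 + 8 * ((n:ℝ) + 1) ^ 3
          + 36 * ((n:ℝ) + 1) ^ 2 + 104 * ((n:ℝ) + 1) + 150) / P) + ((n:ℝ) + 1) ^ 4 / P
        = 300 - (2 * ((n:ℝ) + 1 + 1) ^ 4 + 8 * ((n:ℝ) + 1 + 1) ^ 3
          + 36 * ((n:ℝ) + 1 + 1) ^ 2 + 104 * ((n:ℝ) + 1 + 1) + 150) / (2 * P) := by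
      field_simp
      ring
    have a2 : (2 - 2 / ((n:ℝ) + 1)) + 1 / ((n:ℝ) + 1) ^ 2 ≤ 2 - 2 / ((n:ℝ) + 1 + 1) := by
      have : 2 / ((n:ℝ) + 1) - 2 / ((n:ℝ) + 1 + 1) - 1 / ((n:ℝ) + 1) ^ 2
          = n / (((n:ℝ) + 1) ^ 2 * ((n:ℝ) + 1 + 1)) := by
        field_simp
        ring
      have h0 : 0 ≤ n / (((n:ℝ) + 1) ^ 2 * ((n:ℝ) + 1 + 1)) := by positivity
      linarith
    have a3 : (n:ℝ) ^ 3 + ((n:ℝ) + 1) ^ 2 ≤ ((n:ℝ) + 1) ^ 3 := by nlinarith [sq_nonneg (n:ℝ)]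
    have b3 := mul_le_mul_of_nonneg_right a3 (by positivity : 0 ≤ E ^ 6)
    have b2 := mul_le_mul_of_nonneg_right a2 (by positivity : 0 ≤ E ^ 2)
    rw [← a1]
    linarith

lemma Sol.dyadic_sum (h : Sol u ut ux utt uxx utx) (hs : Small u ut ux E) (hY : 1 ≤ Y)
    (n : ℕ) :
    ∫ t in (0:ℝ)..(2 ^ n - 1), (1 + t)⁻¹ * loc u ut ux Y t
      ≤ 2 ^ 93 * Y ^ 3 * (E ^ 2 + (n:ℝ) ^ 3 * E ^ 6) := by
  refine (h.dyadic_sum_aux hs hY n).trans ?_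
  have hY0 : 0 < Y := by linarith
  have e : 2 ^ 93 * Y ^ 3 * (E ^ 2 + (n:ℝ) ^ 3 * E ^ 6)
      = 2 ^ 84 * Y ^ 3 * (2 ^ 9 * (E ^ 2 + (n:ℝ) ^ 3 * E ^ 6)) := by ring
  rw [e]
  refine mul_le_mul_of_nonneg_left ?_ (by positivity)
  have hE := hs.pos
  have h1 : 0 ≤ (2 * ((n:ℝ) + 1) ^ 4 + 8 * ((n:ℝ) + 1) ^ 3
          + 36 * ((n:ℝ) + 1) ^ 2 + 104 * ((n:ℝ) + 1) + 150) / 2 ^ n := by positivity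
  have h2 : 0 ≤ 2 / ((n:ℝ) + 1) := by positivity
  have h3 : 0 ≤ (n:ℝ) ^ 3 * E ^ 6 := by positivity
  have h4 := mul_le_mul_of_nonneg_right (by linarith : (300 - (2 * ((n:ℝ) + 1) ^ 4
          + 8 * ((n:ℝ) + 1) ^ 3 + 36 * ((n:ℝ) + 1) ^ 2 + 104 * ((n:ℝ) + 1) + 150) / 2 ^ n
          + (2 - 2 / ((n:ℝ) + 1))) ≤ 2 ^ 9) (sq_nonneg E)
  linarith

/-- With `n` of the order of `δ ^ (-β)` dyadic intervals, the cubic growth `n ^ 3 E ^ 6` is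
still of size `δ ^ 2` because `3 β < 4`. -/
lemma exists_dyadic_exponent {β δ : ℝ} (hβ : 0 < β) (hβ' : β < 4 / 3) (hδ : 0 < δ)
    (hδ1 : δ < 1) :
    ∃ n : ℕ, exp (1 * δ ^ (-β)) ≤ 2 ^ n - 1 ∧ (n:ℝ) ^ 3 * δ ^ 4 ≤ 125 := by
  set R := δ ^ (-β) with hR
  have hR1 : 1 ≤ R := one_le_rpow_of_pos_of_le_one_of_nonpos hδ hδ1.le (by linarith)
  refine ⟨⌈4 * R⌉₊, ?_, ?_⟩
  · have h1 : (4:ℝ) * R ≤ ⌈4 * R⌉₊ := Nat.le_ceil _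
    have h2 : exp (2 * R) ≤ 2 ^ ⌈4 * R⌉₊ := by
      rw [← rpow_natCast, rpow_def_of_pos (by norm_num : (0:ℝ) < 2)]
      refine exp_le_exp.2 ?_
      have := log_two_gt_d9
      nlinarith
    have h3 : exp (2 * R) = exp R * exp R := by rw [← exp_add]; ring_nf
    have h4 : 2 ≤ exp R := by linarith [add_one_le_exp R]
    rw [one_mul]
    nlinarith
  · have h1 : (⌈4 * R⌉₊ : ℝ) ≤ 5 * R := by
      have := Nat.ceil_lt_add_one (by positivity : 0 ≤ 4 * R)
      linarith
    have h2 : R ^ 3 * δ ^ 4 ≤ 1 := by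
      have : R ^ 3 * δ ^ 4 = δ ^ (4 - 3 * β) := by
        rw [hR, ← rpow_natCast, ← rpow_natCast, ← rpow_mul hδ.le, ← rpow_add hδ]
        congr 1
        push_cast; ring
      rw [this]
      exact rpow_le_one hδ.le hδ1.le (by linarith)
    have h3 : (⌈4 * R⌉₊ : ℝ) ^ 3 ≤ (5 * R) ^ 3 := pow_le_pow_left₀ (by positivity) h1 3
    have h4 := mul_le_mul_of_nonneg_right h3 (by positivity : 0 ≤ δ ^ 4)
    nlinarith

lemma Sol.integral_exp_le (h : Sol u ut ux utt uxx utx) {β δ : ℝ} (hβ : 0 < β)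
    (hβ' : β < 4 / 3) (hδ : 0 < δ) (hδ1 : δ < 1) (hs : Small u ut ux (100 * δ))
    (hY : 1 ≤ Y) :
    ∫ t in (0:ℝ)..exp (1 * δ ^ (-β)), (1 + t)⁻¹ * loc u ut ux Y t
      ≤ 2 ^ 143 * Y ^ 3 * δ ^ 2 := by
  obtain ⟨n, hn1, hn2⟩ := exists_dyadic_exponent hβ hβ' hδ hδ1
  have hle : ∫ t in (0:ℝ)..exp (1 * δ ^ (-β)), (1 + t)⁻¹ * loc u ut ux Y t
      ≤ ∫ t in (0:ℝ)..(2 ^ n - 1), (1 + t)⁻¹ * loc u ut ux Y t := by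
    have h0 := (exp_pos (1 * δ ^ (-β))).le
    refine intervalIntegral.integral_mono_interval le_rfl h0 hn1 ?_ ?_
    · filter_upwards [ae_restrict_mem measurableSet_Ioc] with t ht
      have := ht.1
      exact mul_nonneg (by positivity) (loc_nonneg _ _ _ (by linarith) t)
    · refine ContinuousOn.intervalIntegrable ?_
      rw [Set.uIcc_of_le (h0.trans hn1)]
      refine ContinuousOn.mul (ContinuousOn.inv₀ (by fun_prop) ?_)
        (h.continuous_loc Y).continuousOn
      intro t ht
      have := ht.1
      have : 0 < 1 + t := by linarith
      exact this.ne'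
  refine (hle.trans (h.dyadic_sum hs hY n)).trans ?_
  have hY0 : 0 < Y := by linarith
  have e : 2 ^ 143 * Y ^ 3 * δ ^ 2 = 2 ^ 93 * Y ^ 3 * (2 ^ 50 * δ ^ 2) := by ring
  rw [e]
  refine mul_le_mul_of_nonneg_left ?_ (by positivity)
  have h1 := mul_le_mul_of_nonneg_right hn2 (sq_nonneg δ)
  have e2 : (100 * δ) ^ 2 + (n:ℝ) ^ 3 * (100 * δ) ^ 6
      = 10000 * δ ^ 2 + 10 ^ 12 * ((n:ℝ) ^ 3 * δ ^ 4 * δ ^ 2) := by ring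
  rw [e2]
  nlinarith [sq_nonneg δ]

/-! ### From smooth odd solutions to the half-line problem -/

/-- Partial derivative of `g` in the direction `v`. -/
def pd (v : ℝ × ℝ) (g : ℝ × ℝ → ℝ) (p : ℝ × ℝ) : ℝ := fderiv ℝ g p v

lemma contDiff_pd {g : ℝ × ℝ → ℝ} (hg : ContDiff ℝ (⊤ : ℕ∞) g) (v : ℝ × ℝ) :
    ContDiff ℝ (⊤ : ℕ∞) (pd v g) :=
  (hg.fderiv_right (m := (⊤ : ℕ∞)) le_rfl).clm_apply contDiff_const

lemma hasDerivAt_pd_fst {g : ℝ × ℝ → ℝ} (hg : ContDiff ℝ (⊤ : ℕ∞) g) (t x : ℝ) :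
    HasDerivAt (fun s => g (s, x)) (pd (1, 0) g (t, x)) t :=
  ((hg.differentiable (by simp)).differentiableAt.hasFDerivAt (x := (t, x))).comp_hasDerivAt t
    ((hasDerivAt_id t).prodMk (hasDerivAt_const t x))

lemma hasDerivAt_pd_snd {g : ℝ × ℝ → ℝ} (hg : ContDiff ℝ (⊤ : ℕ∞) g) (t x : ℝ) :
    HasDerivAt (fun y => g (t, y)) (pd (0, 1) g (t, x)) x :=
  ((hg.differentiable (by simp)).differentiableAt.hasFDerivAt (x := (t, x))).comp_hasDerivAt x
    ((hasDerivAt_const x t).prodMk (hasDerivAt_id x))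

lemma pd_pd {g : ℝ × ℝ → ℝ} (hg : ContDiff ℝ (⊤ : ℕ∞) g) (v w p : ℝ × ℝ) :
    pd v (pd w g) p = fderiv ℝ (fderiv ℝ g) p v w := by
  have h1 : DifferentiableAt ℝ (fderiv ℝ g) p :=
    ((hg.fderiv_right (m := (⊤ : ℕ∞)) le_rfl).differentiable (by simp)).differentiableAt
  have h2 := h1.hasFDerivAt.clm_apply (hasFDerivAt_const w p)
  have h3 : fderiv ℝ (pd w g) p = _ := h2.fderiv
  rw [pd, h3]
  simp

lemma pd_comm {g : ℝ × ℝ → ℝ} (hg : ContDiff ℝ (⊤ : ℕ∞) g) (v w p : ℝ × ℝ) :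
    pd v (pd w g) p = pd w (pd v g) p := by
  rw [pd_pd hg, pd_pd hg]
  refine hg.contDiffAt.isSymmSndFDerivAt ?_ v w
  rw [minSmoothness_of_isRCLikeNormedField]
  exact WithTop.coe_le_coe.2 (le_top : (2 : ℕ∞) ≤ ⊤)

/-- Uniqueness of the derivative for functions that agree only for nonnegative times. -/
lemma deriv_eq_of_eq_nonneg {f g : ℝ → ℝ} {a b t : ℝ} (ht : 0 ≤ t) (hf : HasDerivAt f a t)
    (hg : HasDerivAt g b t) (he : ∀ s, 0 ≤ s → f s = g s) : a = b := by
  have h1 := hf.hasDerivWithinAt (s := Set.Ici t)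
  have h2 := (hg.hasDerivWithinAt (s := Set.Ici t)).congr
    (fun s hs => he s (ht.trans hs)) (he t ht)
  exact (uniqueDiffOn_Ici t t Set.self_mem_Ici).eq_deriv _ h1 h2

variable {φ : ℝ → ℝ → ℝ}

/-- A smooth solution whose perturbation of the kink is odd is a half-line solution in the
sense of `Sol`. -/
lemma exists_sol (hφ : ContDiff ℝ (⊤ : ℕ∞) (fun p : ℝ × ℝ => φ p.1 p.2))
    (hpde : ∀ t, 0 ≤ t → ∀ x,
          deriv (fun s => deriv (fun s' => φ s' x) s) t
            - deriv (fun y => deriv (fun y' => φ t y') y) x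
            + Real.sin (φ t x) = 0)
    (hu : ∀ t x, u t x = φ t x - K x) (hodd : ∀ t, 0 ≤ t → ∀ x, u t (-x) = -u t x) :
    ∃ ut ux utt uxx utx, Sol u ut ux utt uxx utx := by
  set g : ℝ × ℝ → ℝ := fun p => φ p.1 p.2 - K p.2 with hg_def
  have hg : ContDiff ℝ (⊤ : ℕ∞) g := hφ.sub (contDiff_K.comp contDiff_snd)
  have hug : u = fun t x => g (t, x) := by ext t x; exact hu t x
  have hzero : ∀ t, 0 ≤ t → u t 0 = 0 := by
    intro t ht
    have := hodd t ht 0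
    rw [neg_zero] at this
    linarith
  have h1 := contDiff_pd hg (1, 0)
  have h2 := contDiff_pd hg (0, 1)
  have dt : ∀ t x, HasDerivAt (fun s => u s x) (pd (1, 0) g (t, x)) t := by
    intro t x; rw [hug]; exact hasDerivAt_pd_fst hg t x
  have dx : ∀ t x, HasDerivAt (u t) (pd (0, 1) g (t, x)) x := by
    intro t x; rw [hug]; exact hasDerivAt_pd_snd hg t x
  refine ⟨fun t x => pd (1, 0) g (t, x), fun t x => pd (0, 1) g (t, x),
    fun t x => pd (1, 0) (pd (1, 0) g) (t, x), fun t x => pd (0, 1) (pd (0, 1) g) (t, x),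
    fun t x => pd (0, 1) (pd (1, 0) g) (t, x), ?_⟩
  refine
    { c_u := by rw [hug]; exact hg.continuous
      c_ut := h1.continuous
      c_ux := h2.continuous
      c_utt := (contDiff_pd h1 _).continuous
      c_uxx := (contDiff_pd h2 _).continuous
      c_utx := (contDiff_pd h1 _).continuous
      hut := dt
      hux := dx
      hutt := fun t x => hasDerivAt_pd_fst h1 t x
      huxx := fun t x => hasDerivAt_pd_snd h2 t x
      huxt := fun t x => by
        have := hasDerivAt_pd_fst h2 t x
        rwa [pd_comm hg] at this
      hutx := fun t x => hasDerivAt_pd_snd h1 t x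
      eqn := ?_
      zero := hzero
      zero_t := fun t ht => deriv_eq_of_eq_nonneg ht (dt t 0) (hasDerivAt_const t 0) hzero }
  intro t ht x
  have e := hpde t ht x
  have d1 : ∀ s, deriv (fun s' => φ s' x) s = pd (1, 0) g (s, x) := by
    intro s
    have : (fun s' => φ s' x) = fun s' => u s' x + K x := by ext s'; rw [hu]; ring
    rw [this]
    exact ((dt s x).add_const _).deriv
  have d2 : ∀ y, deriv (fun y' => φ t y') y = pd (0, 1) g (t, y) + 2 * sech y := by
    intro y
    have : (fun y' => φ t y') = fun y' => u t y' + K y' := by ext y'; rw [hu]; ring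
    rw [this]
    exact ((dx t y).add (hasDerivAt_K y)).deriv
  simp only [d1, d2] at e
  rw [(hasDerivAt_pd_fst h1 t x).deriv,
    ((hasDerivAt_pd_snd h2 t x).fun_add ((hasDerivAt_sech x).const_mul 2)).deriv] at e
  have e3 : K x + u t x = φ t x := by rw [hu]; ring
  rw [e3, sin_K]
  linarith

/-- By oddness, a local energy integral is at most twice the one over `[0, Y]`. -/
lemma Sol.integral_Icc_le (h : Sol u ut ux utt uxx utx)
    (hodd : ∀ t, 0 ≤ t → ∀ x, u t (-x) = -u t x) {x₁ x₂ Y : ℝ} (h₁ : -Y ≤ x₁) (h₂ : x₂ ≤ Y)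
    (hY : 0 ≤ Y) {t : ℝ} (ht : 0 ≤ t) :
    ∫ x in Set.Icc x₁ x₂, (ut t x ^ 2 + ux t x ^ 2 + u t x ^ 2) ≤ 2 * loc u ut ux Y t := by
  have c1 := cont_slice h.c_u t
  have c2 := cont_slice h.c_ut t
  have c3 := cont_slice h.c_ux t
  have ct : Continuous fun x => ut t x ^ 2 + ux t x ^ 2 + u t x ^ 2 := by fun_prop
  have ot : ∀ x, ut t (-x) = -ut t x := fun x =>
    deriv_eq_of_eq_nonneg ht (h.hut t (-x)) (h.hut t x).fun_neg fun s hs => hodd s hs x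
  have ox : ∀ x, ux t (-x) = ux t x := by
    intro x
    have d1 : HasDerivAt (fun y => u t (-y)) _ x :=
      (h.hux t (-x)).comp x (hasDerivAt_neg x)
    have d2 : HasDerivAt (fun y => -u t y) (-ux t x) x := (h.hux t x).fun_neg
    have he : (fun y => u t (-y)) = fun y => -u t y := funext fun y => hodd t ht y
    rw [he] at d1
    have := d1.unique d2
    linarith
  have s1 : ∫ x in Set.Icc x₁ x₂, (ut t x ^ 2 + ux t x ^ 2 + u t x ^ 2)
      ≤ ∫ x in Set.Icc (-Y) Y, (ut t x ^ 2 + ux t x ^ 2 + u t x ^ 2) :=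
    setIntegral_mono_set ct.integrableOn_Icc (ae_of_all _ fun x => by positivity)
      (Set.Icc_subset_Icc h₁ h₂).eventuallyLE
  refine s1.trans (le_of_eq ?_)
  rw [integral_Icc_eq_integral_Ioc, ← intervalIntegral.integral_of_le (by linarith),
    ← intervalIntegral.integral_add_adjacent_intervals (b := 0)
      (ct.intervalIntegrable _ _) (ct.intervalIntegrable _ _)]
  have s2 : ∫ x in (-Y)..0, (ut t x ^ 2 + ux t x ^ 2 + u t x ^ 2) = loc u ut ux Y t := by
    have := intervalIntegral.integral_comp_neg (a := 0) (b := Y)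
      (fun x => ut t x ^ 2 + ux t x ^ 2 + u t x ^ 2)
    rw [neg_zero] at this
    rw [← this, loc]
    simp only [ot, ox, hodd t ht, neg_sq]
  rw [s2, ← loc]
  ring

lemma integral_initial_le {δ : ℝ}
    (hi1 : Integrable fun x => u 0 x ^ 2) (hi2 : Integrable fun x => ux 0 x ^ 2)
    (hi3 : Integrable fun x => ut 0 x ^ 2)
    (hδ : √(∫ x, (u 0 x ^ 2 + ux 0 x ^ 2 + ut 0 x ^ 2)) ≤ δ) (L : ℝ) (hL : 0 ≤ L) :
    ∫ x in (0:ℝ)..L, (u 0 x ^ 2 + ux 0 x ^ 2 + ut 0 x ^ 2) ≤ δ ^ 2 := by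
  rw [intervalIntegral.integral_of_le hL]
  refine (setIntegral_le_integral ((hi1.add hi2).add hi3)
    (ae_of_all _ fun x => by simp only [Pi.add_apply]; positivity)).trans ?_
  have h0 : 0 ≤ ∫ x, (u 0 x ^ 2 + ux 0 x ^ 2 + ut 0 x ^ 2) :=
    integral_nonneg fun x => by positivity
  change ∫ x, (u 0 x ^ 2 + ux 0 x ^ 2 + ut 0 x ^ 2) ≤ δ ^ 2
  rw [← Real.sq_sqrt h0]
  exact pow_le_pow_left₀ (Real.sqrt_nonneg _) hδ 2

end

end SineGordonKink

open SineGordonKink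

theorem local_energy_control_sine_Gordon_kink :
    ∀ β : ℝ, 0 < β → β < 4 / 3 →
    ∃ c > (0 : ℝ), ∃ δ₀ > (0 : ℝ), ∀ x₁ x₂ : ℝ, ∃ C > (0 : ℝ),
      ∀ δ : ℝ, 0 < δ → δ < δ₀ →
      ∀ φ : ℝ → ℝ → ℝ,
        -- smoothness
        ContDiff ℝ (⊤ : ℕ∞) (fun p : ℝ × ℝ => φ p.1 p.2) →
        -- Sine-Gordon equation on [0,∞) × ℝ
        (∀ t, 0 ≤ t → ∀ x,
          deriv (fun s => deriv (fun s' => φ s' x) s) t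
            - deriv (fun y => deriv (fun y' => φ t y') y) x
            + Real.sin (φ t x) = 0) →
        ∀ u : ℝ → ℝ → ℝ,
          (∀ t x, u t x = φ t x - K x) →
          -- the perturbation is odd in x
          (∀ t, 0 ≤ t → ∀ x, u t (-x) = -u t x) →
          -- square integrability of the perturbation and its derivatives
          (∀ t, 0 ≤ t →
            Integrable (fun x => (u t x) ^ 2) ∧
            Integrable (fun x => (deriv (fun y => u t y) x) ^ 2) ∧
            Integrable (fun x => (deriv (fun s => u s x) t) ^ 2)) →
          -- smallness of the initial perturbation in the energy norm
          Real.sqrt (∫ x : ℝ,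
              ((u 0 x) ^ 2
                + (deriv (fun y => u 0 y) x) ^ 2
                + (deriv (fun s => u s x) 0) ^ 2)) ≤ δ →
          -- control of the local energy up to time T_max = exp (c δ^{-β})
          (∫ t in Set.Ioc (0 : ℝ) (Real.exp (c * δ ^ (-β))),
              (1 + t)⁻¹ *
                ∫ x in Set.Icc x₁ x₂,
                  ((deriv (fun s => u s x) t) ^ 2
                    + (deriv (fun y => u t y) x) ^ 2
                    + (u t x) ^ 2)) ≤ C * δ ^ 2 := by
  intro β hβ hβ'
  refine ⟨1, one_pos, 1 / 100, by norm_num, fun x₁ x₂ => ?_⟩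
  obtain ⟨Y, hY⟩ : ∃ Y, Y = 1 + |x₁| + |x₂| := ⟨_, rfl⟩
  have a1 := abs_nonneg x₁
  have a2 := abs_nonneg x₂
  have a3 := neg_abs_le x₁
  have a4 := le_abs_self x₂
  have hY1 : 1 ≤ Y := by linarith
  refine ⟨2 ^ 144 * Y ^ 3, by positivity, ?_⟩
  intro δ hδ hδ0 φ hφ hpde u hu hodd hint hinit
  obtain ⟨ut, ux, utt, uxx, utx, h⟩ := exists_sol hφ hpde hu hodd
  have e1 : ∀ t x, deriv (fun s => u s x) t = ut t x := fun t x => (h.hut t x).deriv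
  have e2 : ∀ t x, deriv (fun y => u t y) x = ux t x := fun t x => (h.hux t x).deriv
  simp only [e1, e2] at hint hinit ⊢
  obtain ⟨i1, i2, i3⟩ := hint 0 le_rfl
  have hs := h.small hδ hδ0.le (integral_initial_le i1 i2 i3 hinit)
  have key := h.integral_exp_le hβ hβ' hδ (by linarith) hs hY1
  have hT := (exp_pos (1 * δ ^ (-β))).le
  rw [intervalIntegral.integral_of_le hT] at key
  have hc : IntegrableOn (fun t => 2 * ((1 + t)⁻¹ * loc u ut ux Y t))
      (Set.Ioc 0 (exp (1 * δ ^ (-β)))) := by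
    refine (ContinuousOn.integrableOn_Icc ?_).mono_set Set.Ioc_subset_Icc_self
    refine continuousOn_const.mul (ContinuousOn.mul (ContinuousOn.inv₀ (by fun_prop) ?_)
      (h.continuous_loc Y).continuousOn)
    intro t ht
    have : 0 < 1 + t := by linarith [ht.1]
    exact this.ne'
  have hle : ∫ t in Set.Ioc (0 : ℝ) (exp (1 * δ ^ (-β))), (1 + t)⁻¹ *
        ∫ x in Set.Icc x₁ x₂, (ut t x ^ 2 + ux t x ^ 2 + u t x ^ 2)
      ≤ ∫ t in Set.Ioc (0 : ℝ) (exp (1 * δ ^ (-β))), 2 * ((1 + t)⁻¹ * loc u ut ux Y t) := by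
    refine integral_mono_of_nonneg ?_ hc ?_
    · filter_upwards [ae_restrict_mem measurableSet_Ioc] with t ht
      have := ht.1
      exact mul_nonneg (by positivity) (integral_nonneg fun x => by positivity)
    · filter_upwards [ae_restrict_mem measurableSet_Ioc] with t ht
      have := ht.1
      have b := h.integral_Icc_le hodd (x₁ := x₁) (x₂ := x₂) (Y := Y) (by linarith)
        (by linarith) (by linarith) this.le
      have := mul_le_mul_of_nonneg_left b (by positivity : 0 ≤ (1 + t)⁻¹)
      linarith
  refine hle.trans ?_
  rw [integral_const_mul]
  linarith
end

section
/- Let V, Φ : ℝ → ℝ be smooth with V, V′ bounded and Φ, Φ′, Φ″, Φ‴ bounded. Let f : ℝ × ℝ → ℝ be smooth and such that, locally uniformly in t, the functions x ↦ f(t,x) and all partial derivatives of f up to order two decay rapidly in x (e.g., all Schwartz seminorms in x are bounded on compact time intervals). Then the function t ↦ I(t) := ∫_ℝ ( Φ(x) ∂ₓf(t,x) + (1/2) Φ′(x) f(t,x) ) ∂ₜf(t,x) dx is differentiable and for every t one has I′(t) = − ∫_ℝ (∂ₓf)² Φ′ dx + (1/2) ∫_ℝ f² V′ Φ dx + (1/4)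 ∫_ℝ f² Φ‴ dx + ∫_ℝ ( Φ ∂ₓf + (1/2) Φ′ f ) ( ∂ₜ²f − ∂ₓ²f + f + V f ) dx. -/
open MeasureTheory Real Filter

/-!
Differentiating under the integral sign turns `I'(t)` into
`∫ (Φ ∂ₜ∂ₓf + ½ Φ' ∂ₜf) ∂ₜf + (Φ ∂ₓf + ½ Φ' f) ∂ₜ²f`. Pointwise, this integrand minus the sum of the
integrands on the right-hand side of the identity is the exact `x`-derivative of the flux
`½ Φ (∂ₜf)² + ½ Φ (∂ₓf)² + ½ Φ' f ∂ₓf - ¼ Φ'' f² - ½ Φ (1 + V) f²`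
(`hasDerivAt_virialFlux`; this uses `∂ₓ∂ₜf = ∂ₜ∂ₓf`). The flux and its derivative are
integrable, so the derivative integrates to zero.

All integrability comes from one class of functions, `Decaying`: continuous and
`O((1 + x²)⁻¹)`. It is closed under sums and under products with bounded continuous functions.
The domination of the `t`-derivative is uniform on `|s| ≤ |t| + 1` by the same estimate.
-/

/-! ### Bounded and decaying functions -/

/-- Continuous bounded real functions on the line. -/
def BddCont (c : ℝ → ℝ) : Prop := Continuous c ∧ ∃ M, ∀ x, |c x| ≤ M

/-- Continuous functions bounded by a multiple of the integrable weight `(1 + x²)⁻¹`. -/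
def Decaying (a : ℝ → ℝ) : Prop := Continuous a ∧ ∃ C, ∀ x, |a x| ≤ C * (1 + x ^ 2)⁻¹

lemma Decaying.integrable {a : ℝ → ℝ} (h : Decaying a) : Integrable a := by
  obtain ⟨hc, C, hC⟩ := h
  exact (integrable_inv_one_add_sq.const_mul C).mono' hc.aestronglyMeasurable
    (Eventually.of_forall hC)

lemma weight_le_one (x : ℝ) : (1 + x ^ 2)⁻¹ ≤ 1 :=
  inv_le_one_of_one_le₀ (by nlinarith [sq_nonneg x])

lemma weight_pos (x : ℝ) : 0 < (1 + x ^ 2)⁻¹ := by positivity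

lemma Decaying.bddCont {a : ℝ → ℝ} (h : Decaying a) : BddCont a := by
  obtain ⟨hc, C, hC⟩ := h
  refine ⟨hc, C, fun x => (hC x).trans ?_⟩
  have hC0 : 0 ≤ C := by
    have := (abs_nonneg _).trans (hC 0)
    simpa using this
  exact mul_le_of_le_one_right hC0 (weight_le_one x)

lemma Decaying.add {a b : ℝ → ℝ} (ha : Decaying a) (hb : Decaying b) :
    Decaying (fun x => a x + b x) := by
  obtain ⟨hac, C, hC⟩ := ha
  obtain ⟨hbc, D, hD⟩ := hb
  refine ⟨hac.add hbc, C + D, fun x => (abs_add_le _ _).trans ?_⟩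
  linarith [hC x, hD x]

lemma BddCont.mul_decaying {c a : ℝ → ℝ} (hc : BddCont c) (ha : Decaying a) :
    Decaying (fun x => c x * a x) := by
  obtain ⟨hac, C, hC⟩ := ha
  obtain ⟨hcc, M, hM⟩ := hc
  refine ⟨hcc.mul hac, M * C, fun x => ?_⟩
  rw [abs_mul, mul_assoc]
  exact mul_le_mul (hM x) (hC x) (abs_nonneg _) ((abs_nonneg _).trans (hM x))

lemma BddCont.const (r : ℝ) : BddCont (fun _ => r) := ⟨continuous_const, |r|, fun _ => le_rfl⟩

lemma BddCont.mul {c d : ℝ → ℝ} (hc : BddCont c) (hd : BddCont d) :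
    BddCont (fun x => c x * d x) := by
  obtain ⟨hcc, M, hM⟩ := hc
  obtain ⟨hdc, N, hN⟩ := hd
  refine ⟨hcc.mul hdc, M * N, fun x => ?_⟩
  rw [abs_mul]
  exact mul_le_mul (hM x) (hN x) (abs_nonneg _) ((abs_nonneg _).trans (hM x))

lemma BddCont.add {c d : ℝ → ℝ} (hc : BddCont c) (hd : BddCont d) :
    BddCont (fun x => c x + d x) := by
  obtain ⟨hcc, M, hM⟩ := hc
  obtain ⟨hdc, N, hN⟩ := hd
  exact ⟨hcc.add hdc, M + N, fun x => (abs_add_le _ _).trans (add_le_add (hM x) (hN x))⟩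

/-! ### Partial derivatives of a smooth function of two variables -/

/-- The partial derivative in the first (time) variable. -/
noncomputable def partialT (F : ℝ × ℝ → ℝ) (p : ℝ × ℝ) : ℝ := fderiv ℝ F p (1, 0)

/-- The partial derivative in the second (space) variable. -/
noncomputable def partialX (F : ℝ × ℝ → ℝ) (p : ℝ × ℝ) : ℝ := fderiv ℝ F p (0, 1)

section Partials

variable {F : ℝ × ℝ → ℝ}

lemma contDiff_fderiv_top (hF : ContDiff ℝ (⊤ : ℕ∞) F) : ContDiff ℝ (⊤ : ℕ∞) (fderiv ℝ F) :=
  hF.fderiv_right (by norm_cast)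

lemma contDiff_partialT (hF : ContDiff ℝ (⊤ : ℕ∞) F) : ContDiff ℝ (⊤ : ℕ∞) (partialT F) :=
  (contDiff_fderiv_top hF).clm_apply contDiff_const

lemma contDiff_partialX (hF : ContDiff ℝ (⊤ : ℕ∞) F) : ContDiff ℝ (⊤ : ℕ∞) (partialX F) :=
  (contDiff_fderiv_top hF).clm_apply contDiff_const

lemma hasDerivAt_partialT (hF : ContDiff ℝ (⊤ : ℕ∞) F) (t x : ℝ) :
    HasDerivAt (fun s => F (s, x)) (partialT F (t, x)) t :=
  ((hF.differentiable (by simp)) (t, x)).hasFDerivAt.comp_hasDerivAt t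
    ((hasDerivAt_id t).prodMk (hasDerivAt_const t x))

lemma hasDerivAt_partialX (hF : ContDiff ℝ (⊤ : ℕ∞) F) (t x : ℝ) :
    HasDerivAt (fun y => F (t, y)) (partialX F (t, x)) x :=
  ((hF.differentiable (by simp)) (t, x)).hasFDerivAt.comp_hasDerivAt x
    ((hasDerivAt_const x t).prodMk (hasDerivAt_id x))

lemma partialX_partialT (hF : ContDiff ℝ (⊤ : ℕ∞) F) (p : ℝ × ℝ) :
    partialX (partialT F) p = partialT (partialX F) p := by
  have hd : DifferentiableAt ℝ (fderiv ℝ F) p :=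
    (contDiff_fderiv_top hF).differentiable (by simp) p
  have key (v w : ℝ × ℝ) :
      fderiv ℝ (fun q => fderiv ℝ F q v) p w = fderiv ℝ (fderiv ℝ F) p w v := by
    rw [fderiv_clm_apply hd (differentiableAt_const v)]
    simp
  have hs : IsSymmSndFDerivAt ℝ F p := hF.contDiffAt.isSymmSndFDerivAt (by
    rw [minSmoothness_of_isRCLikeNormedField]
    exact WithTop.coe_le_coe.2 le_top)
  change fderiv ℝ (fun q => fderiv ℝ F q (1, 0)) p (0, 1)
    = fderiv ℝ (fun q => fderiv ℝ F q (0, 1)) p (1, 0)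
  rw [key, key]
  exact hs _ _

end Partials

/-! ### The flux identity -/

/-- The flux whose `x`-derivative is the difference of the two integrands; here `u`, `v`, `p`
stand for `f`, `∂ₓf`, `∂ₜf` at a fixed time and `q` for the value of `∂ₜ²f` at `x`. The derivative is written as the integrand of `I'`
minus the integrands of the right-hand side. -/
lemma hasDerivAt_virialFlux {V V1 P P1 P2 P3 u v p v' p' : ℝ → ℝ} {x : ℝ} (q : ℝ)
    (hV : HasDerivAt V (V1 x) x) (hP : HasDerivAt P (P1 x) x) (hP1 : HasDerivAt P1 (P2 x) x)
    (hP2 : HasDerivAt P2 (P3 x) x) (hu : HasDerivAt u (v x) x) (hv : HasDerivAt v (v' x) x)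
    (hp : HasDerivAt p (p' x) x) :
    HasDerivAt (fun y => 1 / 2 * (P y * (p y * p y)) + 1 / 2 * (P y * (v y * v y))
        + 1 / 2 * (P1 y * (u y * v y)) + (-1 / 4) * (P2 y * (u y * u y))
        + (-1 / 2) * (P y * (1 + V y) * (u y * u y)))
      ((P x * p' x + 1 / 2 * P1 x * p x) * p x + (P x * v x + 1 / 2 * P1 x * u x) * q
        - (-(v x ^ 2 * P1 x) + 1 / 2 * (u x ^ 2 * V1 x * P x) + 1 / 4 * (u x ^ 2 * P3 x)
          + (P x * v x + 1 / 2 * P1 x * u x) * (q - v' x + u x + V x * u x))) x := by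
  have h := (((((hP.mul (hp.mul hp)).const_mul (1 / 2)).add
    ((hP.mul (hv.mul hv)).const_mul (1 / 2))).add
    ((hP1.mul (hu.mul hv)).const_mul (1 / 2))).add
    ((hP2.mul (hu.mul hu)).const_mul (-1 / 4))).add
    (((hP.mul (hV.const_add 1)).mul (hu.mul hu)).const_mul (-1 / 2))
  refine h.congr_deriv ?_
  simp only [Pi.mul_apply]
  ring

/-! ### The virial identity -/

theorem virial_identity_modified_momentum
    (V Φ : ℝ → ℝ) (f : ℝ → ℝ → ℝ)
    (hV : ContDiff ℝ (⊤ : ℕ∞) V)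
    (hVbdd : ∃ M : ℝ, ∀ x, |V x| ≤ M ∧ |deriv V x| ≤ M)
    (hΦ : ContDiff ℝ (⊤ : ℕ∞) Φ)
    (hΦbdd : ∃ M : ℝ, ∀ x, |Φ x| ≤ M ∧ |deriv Φ x| ≤ M ∧
      |deriv (deriv Φ) x| ≤ M ∧ |deriv (deriv (deriv Φ)) x| ≤ M)
    (hf : ContDiff ℝ (⊤ : ℕ∞) (fun p : ℝ × ℝ => f p.1 p.2))
    -- f and its partial derivatives up to order two decay rapidly in x,
    -- locally uniformly in t
    (hdecay : ∀ R : ℝ, 0 < R → ∀ n j k : ℕ, j + k ≤ 2 → ∃ C : ℝ,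
      ∀ t : ℝ, |t| ≤ R → ∀ x : ℝ,
        (1 + |x|) ^ n * |deriv^[j] (fun s => deriv^[k] (fun y => f s y) x) t| ≤ C) :
    ∀ t : ℝ,
      HasDerivAt
        (fun τ => ∫ x : ℝ,
          (Φ x * deriv (fun y => f τ y) x + (1 / 2) * deriv Φ x * f τ x)
            * deriv (fun s => f s x) τ)
        (-(∫ x : ℝ, (deriv (fun y => f t y) x) ^ 2 * deriv Φ x)
          + (1 / 2) * (∫ x : ℝ, (f t x) ^ 2 * deriv V x * Φ x)
          + (1 / 4) * (∫ x : ℝ, (f t x) ^ 2 * deriv (deriv (deriv Φ)) x)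
          + ∫ x : ℝ,
              (Φ x * deriv (fun y => f t y) x + (1 / 2) * deriv Φ x * f t x)
                * (deriv (fun s => deriv (fun s' => f s' x) s) t
                    - deriv (fun y => deriv (fun y' => f t y') y) x
                    + f t x + V x * f t x))
        t := by
  intro t
  obtain ⟨MV, hMV⟩ := hVbdd
  obtain ⟨M, hM⟩ := hΦbdd
  set F : ℝ × ℝ → ℝ := fun p => f p.1 p.2 with hFdef
  have hFt := contDiff_partialT hf
  have hFx := contDiff_partialX hf
  have hFtt := contDiff_partialT hFt
  have hFtx := contDiff_partialT hFx
  have hFxx := contDiff_partialX hFx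
  have ex (s x : ℝ) : deriv (fun y => f s y) x = partialX F (s, x) :=
    (hasDerivAt_partialX hf s x).deriv
  have et (s x : ℝ) : deriv (fun r => f r x) s = partialT F (s, x) :=
    (hasDerivAt_partialT hf s x).deriv
  have ett (s x : ℝ) : deriv (fun r => partialT F (r, x)) s = partialT (partialT F) (s, x) :=
    (hasDerivAt_partialT hFt s x).deriv
  have etx (s x : ℝ) : deriv (fun r => partialX F (r, x)) s = partialT (partialX F) (s, x) :=
    (hasDerivAt_partialT hFx s x).deriv
  have exx (s x : ℝ) : deriv (fun y => partialX F (s, y)) x = partialX (partialX F) (s, x) :=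
    (hasDerivAt_partialX hFx s x).deriv
  have ex' (s : ℝ) : deriv (fun y => f s y) = fun x => partialX F (s, x) := funext (ex s)
  have et' (x : ℝ) : deriv (fun r => f r x) = fun s => partialT F (s, x) :=
    funext fun s => et s x
  -- the weight `(1 + |x|)²` dominates `1 + x²`
  have dec (j k : ℕ) (hjk : j + k ≤ 2) : ∃ C : ℝ, ∀ s, |s| ≤ |t| + 1 → ∀ x : ℝ,
      |deriv^[j] (fun r => deriv^[k] (fun y => f r y) x) s| ≤ C * (1 + x ^ 2)⁻¹ := by
    obtain ⟨C, hC⟩ := hdecay (|t| + 1) (by positivity) 2 j k hjk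
    refine ⟨C, fun s hs x => ?_⟩
    rw [← div_eq_mul_inv, le_div_iff₀ (by positivity), mul_comm]
    refine le_trans ?_ (hC s hs x)
    refine mul_le_mul_of_nonneg_right ?_ (abs_nonneg _)
    nlinarith [abs_nonneg x, sq_abs x]
  obtain ⟨C0, hC0⟩ := dec 0 0 (by norm_num)
  obtain ⟨Cx, hCx⟩ := dec 0 1 (by norm_num)
  obtain ⟨Ct, hCt⟩ := dec 1 0 (by norm_num)
  obtain ⟨Cxx, hCxx⟩ := dec 0 2 (by norm_num)
  obtain ⟨Ctx, hCtx⟩ := dec 1 1 (by norm_num)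
  obtain ⟨Ctt, hCtt⟩ := dec 2 0 (by norm_num)
  simp only [Function.iterate_succ, Function.iterate_zero, Function.comp_apply, id_eq, ex', et',
    exx, etx, ett] at hC0 hCx hCt hCxx hCtx hCtt
  simp only [ex, et, exx, ett]
  have ht : |t| ≤ |t| + 1 := by linarith
  -- continuity of the space slices
  have slice {G : ℝ × ℝ → ℝ} (hG : ContDiff ℝ (⊤ : ℕ∞) G) (s : ℝ) :
      Continuous (fun x => G (s, x)) := hG.continuous.comp (by fun_prop)
  have Du (s : ℝ) (hs : |s| ≤ |t| + 1) : Decaying (fun x => f s x) := ⟨slice hf s, C0, hC0 s hs⟩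
  have Dx (s : ℝ) (hs : |s| ≤ |t| + 1) : Decaying (fun x => partialX F (s, x)) :=
    ⟨slice hFx s, Cx, hCx s hs⟩
  have Dt (s : ℝ) (hs : |s| ≤ |t| + 1) : Decaying (fun x => partialT F (s, x)) :=
    ⟨slice hFt s, Ct, hCt s hs⟩
  have Dxx : Decaying (fun x => partialX (partialX F) (t, x)) :=
    ⟨slice hFxx t, Cxx, hCxx t ht⟩
  have Dtx : Decaying (fun x => partialT (partialX F) (t, x)) :=
    ⟨slice hFtx t, Ctx, hCtx t ht⟩
  have Dtt : Decaying (fun x => partialT (partialT F) (t, x)) :=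
    ⟨slice hFtt t, Ctt, hCtt t ht⟩
  have smooth_deriv {g : ℝ → ℝ} (hg : ContDiff ℝ (⊤ : ℕ∞) g) : ContDiff ℝ (⊤ : ℕ∞) (deriv g) :=
    (contDiff_infty_iff_deriv.1 hg).2
  have hΦ1 := smooth_deriv hΦ
  have hΦ2 := smooth_deriv hΦ1
  have hΦ3 := smooth_deriv hΦ2
  have hV1 := smooth_deriv hV
  have BV : BddCont V := ⟨hV.continuous, MV, fun x => (hMV x).1⟩
  have BV1 : BddCont (deriv V) := ⟨hV1.continuous, MV, fun x => (hMV x).2⟩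
  have B0 : BddCont Φ := ⟨hΦ.continuous, M, fun x => (hM x).1⟩
  have B1 : BddCont (deriv Φ) := ⟨hΦ1.continuous, M, fun x => (hM x).2.1⟩
  have B2 : BddCont (deriv (deriv Φ)) := ⟨hΦ2.continuous, M, fun x => (hM x).2.2.1⟩
  have B3 : BddCont (deriv (deriv (deriv Φ))) := ⟨hΦ3.continuous, M, fun x => (hM x).2.2.2⟩
  have Dm (s : ℝ) (hs : |s| ≤ |t| + 1) :
      Decaying (fun x => Φ x * partialX F (s, x) + 1 / 2 * deriv Φ x * f s x) :=
    (B0.mul_decaying (Dx s hs)).add (((BddCont.const (1 / 2)).mul B1).mul_decaying (Du s hs))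
  -- the `t`-derivative of the integrand, at time `s`
  set D : ℝ → ℝ → ℝ := fun s x =>
    (Φ x * partialT (partialX F) (s, x) + 1 / 2 * deriv Φ x * partialT F (s, x))
        * partialT F (s, x)
      + (Φ x * partialX F (s, x) + 1 / 2 * deriv Φ x * f s x) * partialT (partialT F) (s, x)
    with hD
  have DD : Decaying (D t) := by
    refine Decaying.add (BddCont.mul_decaying ?_ (Dt t ht)) ((Dm t ht).bddCont.mul_decaying Dtt)
    exact ((B0.mul_decaying Dtx).add
      (((BddCont.const (1 / 2)).mul B1).mul_decaying (Dt t ht))).bddCont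
  have hball (s : ℝ) (hs : s ∈ Metric.ball t 1) : |s| ≤ |t| + 1 := by
    rw [Metric.mem_ball, Real.dist_eq] at hs
    have := abs_sub_abs_le_abs_sub s t
    linarith
  have hderiv : HasDerivAt
      (fun τ => ∫ x : ℝ, (Φ x * partialX F (τ, x) + 1 / 2 * deriv Φ x * f τ x)
        * partialT F (τ, x)) (∫ x, D t x) t := by
    refine (hasDerivAt_integral_of_dominated_loc_of_deriv_le
      (bound := fun x => ((M * Ctx + 1 / 2 * M * Ct) * Ct + (M * Cx + 1 / 2 * M * C0) * Ctt)
        * (1 + x ^ 2)⁻¹)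
      (Metric.ball_mem_nhds t one_pos) ?_ ?_ ?_ ?_ ?_ ?_).2
    · filter_upwards [Metric.ball_mem_nhds t one_pos] with s hs
      exact ((Dm s (hball s hs)).bddCont.mul_decaying
        (Dt s (hball s hs))).integrable.aestronglyMeasurable
    · exact ((Dm t ht).bddCont.mul_decaying (Dt t ht)).integrable
    · exact DD.integrable.aestronglyMeasurable
    · refine Eventually.of_forall fun x s hs => ?_
      have hs' := hball s hs
      have drop {a C : ℝ} (h : |a| ≤ C * (1 + x ^ 2)⁻¹) : |a| ≤ C := by
        have hCw := (abs_nonneg _).trans h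
        exact h.trans (mul_le_of_le_one_right
          (nonneg_of_mul_nonneg_left hCw (weight_pos x)) (weight_le_one x))
      have comb {a b A B : ℝ} (ha : |a| ≤ A) (hb : |b| ≤ B) :
          |Φ x * a + 1 / 2 * deriv Φ x * b| ≤ M * A + 1 / 2 * M * B := by
        have hM0 : 0 ≤ M := (abs_nonneg _).trans (hM x).1
        refine (abs_add_le _ _).trans (add_le_add ?_ ?_)
        · rw [abs_mul]
          exact mul_le_mul (hM x).1 ha (abs_nonneg _) hM0
        · rw [abs_mul, abs_mul, abs_of_pos (by norm_num : (0 : ℝ) < 1 / 2)]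
          refine mul_le_mul ?_ hb (abs_nonneg _) (by positivity)
          linarith [(hM x).2.1]
      have prod {a b A B : ℝ} (ha : |a| ≤ A) (hb : |b| ≤ B * (1 + x ^ 2)⁻¹) :
          |a * b| ≤ A * B * (1 + x ^ 2)⁻¹ := by
        rw [abs_mul, mul_assoc]
        exact mul_le_mul ha hb (abs_nonneg _) ((abs_nonneg _).trans ha)
      rw [Real.norm_eq_abs, add_mul]
      exact (abs_add_le _ _).trans (add_le_add
        (prod (comb (drop (hCtx s hs' x)) (drop (hCt s hs' x))) (hCt s hs' x))
        (prod (comb (drop (hCx s hs' x)) (drop (hC0 s hs' x))) (hCtt s hs' x)))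
    · exact integrable_inv_one_add_sq.const_mul _
    · refine Eventually.of_forall fun x s _ => ?_
      exact (((hasDerivAt_partialT hFx s x).const_mul (Φ x)).add
        ((hasDerivAt_partialT hf s x).const_mul (1 / 2 * deriv Φ x))).mul
        (hasDerivAt_partialT hFt s x)
  refine hderiv.congr_deriv ?_
  have Duu := (Du t ht).bddCont.mul_decaying (Du t ht)
  have Dvv := (Dx t ht).bddCont.mul_decaying (Dx t ht)
  have Duv := (Du t ht).bddCont.mul_decaying (Dx t ht)
  have Dpp := (Dt t ht).bddCont.mul_decaying (Dt t ht)
  have i1 : Integrable (fun x => partialX F (t, x) ^ 2 * deriv Φ x) := by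
    refine (B1.mul_decaying Dvv).integrable.congr (Eventually.of_forall fun x => ?_)
    simp only
    ring
  have i2 : Integrable (fun x => f t x ^ 2 * deriv V x * Φ x) := by
    refine ((BV1.mul B0).mul_decaying Duu).integrable.congr (Eventually.of_forall fun x => ?_)
    simp only
    ring
  have i3 : Integrable (fun x => f t x ^ 2 * deriv (deriv (deriv Φ)) x) := by
    refine (B3.mul_decaying Duu).integrable.congr (Eventually.of_forall fun x => ?_)
    simp only
    ring
  have i4 : Integrable (fun x => (Φ x * partialX F (t, x) + 1 / 2 * deriv Φ x * f t x)
      * (partialT (partialT F) (t, x) - partialX (partialX F) (t, x) + f t x + V x * f t x)) := by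
    refine ((Dm t ht).bddCont.mul_decaying (((Dtt.add
      ((BddCont.const (-1)).mul_decaying Dxx)).add (Du t ht)).add
      (BV.mul_decaying (Du t ht)))).integrable.congr (Eventually.of_forall fun x => ?_)
    simp only
    ring
  have hR := ((i1.neg.add (i2.const_mul (1 / 2))).add (i3.const_mul (1 / 4))).add i4
  have dat {g : ℝ → ℝ} (hg : ContDiff ℝ (⊤ : ℕ∞) g) (x : ℝ) : HasDerivAt g (deriv g x) x :=
    (hg.differentiable (by simp) x).hasDerivAt
  have hflux (x : ℝ) := hasDerivAt_virialFlux (V := V) (V1 := deriv V) (P := Φ) (P1 := deriv Φ)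
    (P2 := deriv (deriv Φ)) (P3 := deriv (deriv (deriv Φ))) (u := fun y => f t y)
    (v := fun y => partialX F (t, y)) (p := fun y => partialT F (t, y))
    (v' := fun y => partialX (partialX F) (t, y)) (p' := fun y => partialT (partialX F) (t, y))
    (partialT (partialT F) (t, x)) (dat hV x) (dat hΦ x) (dat hΦ1 x) (dat hΦ2 x)
    (hasDerivAt_partialX hf t x) (hasDerivAt_partialX hFx t x)
    ((hasDerivAt_partialX hFt t x).congr_deriv (partialX_partialT hf (t, x)))
  have iflux := (((((BddCont.const (1 / 2)).mul_decaying (B0.mul_decaying Dpp)).add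
    ((BddCont.const (1 / 2)).mul_decaying (B0.mul_decaying Dvv))).add
    ((BddCont.const (1 / 2)).mul_decaying (B1.mul_decaying Duv))).add
    ((BddCont.const (-1 / 4)).mul_decaying (B2.mul_decaying Duu))).add
    ((BddCont.const (-1 / 2)).mul_decaying
      ((B0.mul ((BddCont.const 1).add BV)).mul_decaying Duu)) |>.integrable
  have hzero := integral_eq_zero_of_hasDerivAt_of_integrable hflux (DD.integrable.sub hR) iflux
  have hsub := integral_sub DD.integrable hR
  have hsplit := integral_add ((i1.neg.add (i2.const_mul (1 / 2))).add (i3.const_mul (1 / 4))) i4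
  have hsplit2 := integral_add (i1.neg.add (i2.const_mul (1 / 2))) (i3.const_mul (1 / 4))
  have hsplit3 := integral_add i1.neg (i2.const_mul (1 / 2))
  have hneg := integral_neg (μ := volume) (fun x => partialX F (t, x) ^ 2 * deriv Φ x)
  have hm2 := integral_const_mul (μ := volume) (1 / 2) (fun x => f t x ^ 2 * deriv V x * Φ x)
  have hm3 := integral_const_mul (μ := volume) (1 / 4)
    (fun x => f t x ^ 2 * deriv (deriv (deriv Φ)) x)
  rw [← hm2, ← hm3, ← hneg]
  refine (sub_eq_zero.1 (hsub.symm.trans hzero)).trans (hsplit.trans ?_)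
  refine congrArg₂ (· + ·) (hsplit2.trans ?_) rfl
  exact congrArg₂ (· + ·) hsplit3 rfl
end
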